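/- arXiv:2408.00745 — 2 statements merged into one kernel-verified Lean document; each statement's English description precedes it below -/
import Mathlib

section
/- For every integer n ≥ 1, the q-Eulerian polynomial has the γ-expansion A_n(q,t) = Σ_{k=0}^{⌊(n−1)/2⌋} ξ_{n,k}(q) · t^{k} (1+t)^{n−1−2k}, where ξ_{n,k}(q) = Σ q^{inv(σ)}, the sum running over all permutations σ ∈ S_n whose descent set DES(σ) is a subset of {1,…,n−2} containing no two consecutive integers and has exactly k elements (i.e., σ has k descents, no double descents, and no last descent). -/
open Polynomial Finset

/-- `S` contains no two consecutive integers. -/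
def NoTwoConsec (S : Finset ℕ) : Prop := ∀ i ∈ S, i + 1 ∉ S

instance (S : Finset ℕ) : Decidable (NoTwoConsec S) :=
  inferInstanceAs (Decidable (∀ i ∈ S, i + 1 ∉ S))

/-- `σ(i)` in one-line notation, as a value in `{1, …, n}` for `i ∈ {1, …, n}`
(and `0` for out-of-range `i`). -/
def pval {n : ℕ} (σ : Equiv.Perm (Fin n)) (i : ℕ) : ℕ :=
  if h : 1 ≤ i ∧ i ≤ n then (σ ⟨i - 1, by omega⟩ : ℕ) + 1 else 0

/-- The descent set `DES(σ) = {i ∈ {1,…,n-1} : σ(i) > σ(i+1)}`. -/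
def pDES {n : ℕ} (σ : Equiv.Perm (Fin n)) : Finset ℕ :=
  (Finset.Icc 1 (n - 1)).filter fun i => pval σ (i + 1) < pval σ i

/-- The major index `maj(σ) = Σ_{i ∈ DES(σ)} i`. -/
def pmaj {n : ℕ} (σ : Equiv.Perm (Fin n)) : ℕ := ∑ i ∈ pDES σ, i

/-- The excedance number `exc(σ) = #{i : σ(i) > i}`. -/
def pexc {n : ℕ} (σ : Equiv.Perm (Fin n)) : ℕ :=
  ((Finset.Icc 1 n).filter fun i => i < pval σ i).card

/-- The inversion number `inv(σ) = #{(i,j) : 1 ≤ i < j ≤ n, σ(i) > σ(j)}`. -/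
def pinv {n : ℕ} (σ : Equiv.Perm (Fin n)) : ℕ :=
  (((Finset.Icc 1 n) ×ˢ (Finset.Icc 1 n)).filter
    fun p => p.1 < p.2 ∧ pval σ p.2 < pval σ p.1).card

/-- The Shareshian–Wachs `q`-Eulerian polynomial
`A_n(q,t) = Σ_{σ ∈ S_n} q^{maj(σ)-exc(σ)} t^{exc(σ)}`, as an element of
`ℤ[q][t]` (`q` is the inner variable, `t` the outer one). -/
noncomputable def Apoly (n : ℕ) : Polynomial (Polynomial ℤ) :=
  ∑ σ : Equiv.Perm (Fin n),
    Polynomial.C (Polynomial.X ^ (pmaj σ - pexc σ)) * Polynomial.X ^ pexc σ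

namespace GE

/-- zero-invariance -/
def ZI (f : List ℕ → ℚ) : Prop := ∀ l₁ l₂, f (l₁ ++ 0 :: l₂) = f (l₁ ++ l₂)

lemma ZI.cons {f : List ℕ → ℚ} (h : ZI f) (i : ℕ) : ZI (fun l => f (i :: l)) := by
  intro l₁ l₂
  exact h (i :: l₁) l₂

lemma ZI.zero {f : List ℕ → ℚ} (h : ZI f) : (fun l => f (0 :: l)) = f := by
  funext l
  exact h [] l

noncomputable def Phi (q : ℚ) : ℕ → (List ℕ → ℚ) → ℚ
  | 0, f => f []
  | n+1, f => (1 - q^(n+1))⁻¹ *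
      ∑ r : Fin (n+1), q^(r:ℕ) * Phi q r (fun l => f ((n+1-(r:ℕ)) :: l))
termination_by n => n
decreasing_by exact r.2

lemma Phi_zero (q : ℚ) (f : List ℕ → ℚ) : Phi q 0 f = f [] := by
  rw [Phi]

lemma Phi_succ (q : ℚ) (n : ℕ) (f : List ℕ → ℚ) : Phi q (n+1) f = (1 - q^(n+1))⁻¹ *
      ∑ r ∈ range (n+1), q^r * Phi q r (fun l => f ((n+1-r) :: l)) := by
  rw [Phi, Finset.sum_range]

lemma Phi_succ' (q : ℚ) (hq : ∀ n : ℕ, 1 - q^(n+1) ≠ 0) (n : ℕ) (f : List ℕ → ℚ) :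
    (1 - q^(n+1)) * Phi q (n+1) f =
      ∑ r ∈ range (n+1), q^r * Phi q r (fun l => f ((n+1-r) :: l)) := by
  rw [Phi_succ, mul_inv_cancel_left₀ (hq n)]

lemma Phi_expand (q : ℚ) (hq : ∀ n : ℕ, 1 - q^(n+1) ≠ 0) (n : ℕ) (f : List ℕ → ℚ) (hf : ZI f) :
    Phi q n f = ∑ x ∈ antidiagonal n, q^x.1 * Phi q x.1 (fun l => f (x.2 :: l)) := by
  rw [Finset.Nat.sum_antidiagonal_eq_sum_range_succ_mk, Finset.sum_range_succ]
  simp only [Nat.sub_self, hf.zero]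
  cases n with
  | zero => simp
  | succ n => rw [← Phi_succ' q hq]; ring

lemma Phi_congr (q : ℚ) (n : ℕ) : ∀ (f g : List ℕ → ℚ),
    (∀ l : List ℕ, (∀ x ∈ l, 0 < x) → l.sum = n → f l = g l) → Phi q n f = Phi q n g := by
  induction n using Nat.strong_induction_on with
  | _ n ih =>
    intro f g h
    cases n with
    | zero => rw [Phi_zero, Phi_zero]; exact h [] (by simp) (by simp)
    | succ n =>
      rw [Phi_succ, Phi_succ]
      congr 1
      apply Finset.sum_congr rfl
      intro r hr
      rw [Finset.mem_range] at hr
      congr 1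
      apply ih r hr
      intro l hl hs
      apply h
      · intro x hx
        rcases List.mem_cons.1 hx with rfl | hx
        · omega
        · exact hl x hx
      · simp [hs]; omega

lemma Phi_add (q : ℚ) (n : ℕ) : ∀ (f g : List ℕ → ℚ),
    Phi q n (fun l => f l + g l) = Phi q n f + Phi q n g := by
  induction n using Nat.strong_induction_on with
  | _ n ih =>
    intro f g
    cases n with
    | zero => simp [Phi_zero]
    | succ n =>
      rw [Phi_succ, Phi_succ, Phi_succ, ← mul_add, ← Finset.sum_add_distrib]
      congr 1
      apply Finset.sum_congr rfl
      intro r hr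
      rw [Finset.mem_range] at hr
      rw [ih r hr, mul_add]

lemma Phi_smul (q : ℚ) (c : ℚ) (n : ℕ) : ∀ (f : List ℕ → ℚ),
    Phi q n (fun l => c * f l) = c * Phi q n f := by
  induction n using Nat.strong_induction_on with
  | _ n ih =>
    intro f
    cases n with
    | zero => simp [Phi_zero]
    | succ n =>
      rw [Phi_succ, Phi_succ, Finset.mul_sum, Finset.mul_sum, Finset.mul_sum]
      apply Finset.sum_congr rfl
      intro r hr
      rw [Finset.mem_range] at hr
      rw [ih r hr]; ring

lemma Phi_nil (q : ℚ) (n : ℕ) : Phi q n (fun _ => 0) = 0 := by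
  have := Phi_smul q 0 n (fun _ => 0)
  simpa using this

lemma Phi_sum {ι : Type*} (q : ℚ) (n : ℕ) (s : Finset ι) (f : ι → List ℕ → ℚ) :
    Phi q n (fun l => ∑ i ∈ s, f i l) = ∑ i ∈ s, Phi q n (f i) := by
  classical
  induction s using Finset.induction_on with
  | empty => simp [Phi_nil]
  | insert a s ha ih =>
    simp only [Finset.sum_insert ha]
    rw [Phi_add, ih]

def conv (f g : List ℕ → ℚ) : List ℕ → ℚ
  | [] => f [] * g []
  | p :: l => ∑ x ∈ antidiagonal p, conv (fun l => f (x.1 :: l)) (fun l => g (x.2 :: l)) l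

lemma conv_ZI (l₁ l₂ : List ℕ) : ∀ {f g : List ℕ → ℚ}, ZI f → ZI g →
    conv f g (l₁ ++ 0 :: l₂) = conv f g (l₁ ++ l₂) := by
  induction l₁ with
  | nil =>
    intro f g hf hg
    simp [conv, hf.zero, hg.zero]
  | cons a l ih =>
    intro f g hf hg
    simp only [List.cons_append, conv]
    exact Finset.sum_congr rfl fun x _ => ih (hf.cons _) (hg.cons _)

lemma sum_quad (n : ℕ) (F : ℕ → ℕ → ℕ → ℕ → ℚ) :
    ∑ x ∈ antidiagonal n, ∑ y ∈ antidiagonal x.1, ∑ z ∈ antidiagonal x.2, F y.1 y.2 z.1 z.2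
    = ∑ x ∈ antidiagonal n, ∑ y ∈ antidiagonal x.1, ∑ z ∈ antidiagonal x.2,
        F y.1 z.1 y.2 z.2 := by
  simp only [← Finset.sum_product', Finset.sum_sigma']
  refine Finset.sum_bij'
    (fun x _ => ⟨(x.2.1.1 + x.2.2.1, x.2.1.2 + x.2.2.2), ((x.2.1.1, x.2.2.1), (x.2.1.2, x.2.2.2))⟩)
    (fun x _ => ⟨(x.2.1.1 + x.2.2.1, x.2.1.2 + x.2.2.2), ((x.2.1.1, x.2.2.1), (x.2.1.2, x.2.2.2))⟩)
    ?_ ?_ ?_ ?_ ?_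
  · rintro ⟨⟨a, b⟩, ⟨⟨c, d⟩, ⟨e, f⟩⟩⟩ h
    simp at h ⊢; omega
  · rintro ⟨⟨a, b⟩, ⟨⟨c, d⟩, ⟨e, f⟩⟩⟩ h
    simp at h ⊢; omega
  · rintro ⟨⟨a, b⟩, ⟨⟨c, d⟩, ⟨e, f⟩⟩⟩ h
    simp at h ⊢; omega
  · rintro ⟨⟨a, b⟩, ⟨⟨c, d⟩, ⟨e, f⟩⟩⟩ h
    simp at h ⊢; omega
  · rintro ⟨⟨a, b⟩, ⟨⟨c, d⟩, ⟨e, f⟩⟩⟩ h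
    rfl

lemma Phi_conv (q : ℚ) (hq : ∀ n : ℕ, 1 - q^(n+1) ≠ 0) (n : ℕ) : ∀ (f g : List ℕ → ℚ),
    ZI f → ZI g →
    Phi q n (conv f g) = ∑ x ∈ antidiagonal n, Phi q x.1 f * Phi q x.2 g := by
  induction n using Nat.strong_induction_on with
  | _ n ih =>
    intro f g hf hg
    cases n with
    | zero => simp [Phi_zero, conv]
    | succ n =>
      apply mul_left_cancel₀ (hq n)
      rw [Phi_succ' q hq]
      set X := ∑ x ∈ antidiagonal (n+1), Phi q x.1 f * Phi q x.2 g with hX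
      have h1 : X = ∑ x ∈ antidiagonal (n+1), ∑ y ∈ antidiagonal x.1, ∑ z ∈ antidiagonal x.2,
          (q^y.1 * Phi q y.1 (fun l => f (y.2 :: l))) *
            (q^z.1 * Phi q z.1 (fun l => g (z.2 :: l))) := by
        rw [hX]
        refine Finset.sum_congr rfl fun x _ => ?_
        rw [Phi_expand q hq _ f hf, Phi_expand q hq _ g hg, Finset.sum_mul_sum]
      rw [sum_quad (n+1) (fun a b c d => (q^a * Phi q a (fun l => f (b :: l))) *
            (q^c * Phi q c (fun l => g (d :: l)))),
        Finset.Nat.sum_antidiagonal_eq_sum_range_succ_mk, Finset.sum_range_succ] at h1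
      have h2 : ∀ r ∈ range (n+1), q^r * Phi q r (fun l => conv f g ((n+1-r) :: l)) =
          ∑ y ∈ antidiagonal r, ∑ z ∈ antidiagonal (n+1-r),
          (q^y.1 * Phi q y.1 (fun l => f (z.1 :: l))) *
            (q^y.2 * Phi q y.2 (fun l => g (z.2 :: l))) := by
        intro r hr
        rw [Finset.mem_range] at hr
        simp only [conv]
        rw [Phi_sum, Finset.sum_comm, Finset.mul_sum]
        refine Finset.sum_congr rfl fun z _ => ?_
        rw [ih r hr _ _ (hf.cons _) (hg.cons _), Finset.mul_sum]
        refine Finset.sum_congr rfl fun y hy => ?_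
        rw [← Finset.HasAntidiagonal.mem_antidiagonal.1 hy, pow_add]; ring
      rw [Finset.sum_congr rfl h2]
      have h3 : ∑ y ∈ antidiagonal (n+1), ∑ z ∈ antidiagonal (n+1-(n+1)),
          (q^y.1 * Phi q y.1 (fun l => f (z.1 :: l))) *
            (q^y.2 * Phi q y.2 (fun l => g (z.2 :: l))) = q^(n+1) * X := by
        rw [hX, Finset.mul_sum]
        refine Finset.sum_congr rfl fun y hy => ?_
        simp only [Nat.sub_self, Finset.HasAntidiagonal.antidiagonal_zero, Finset.sum_singleton, hf.zero, hg.zero]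
        rw [← Finset.HasAntidiagonal.mem_antidiagonal.1 hy, pow_add]; ring
      simp only at h1
      rw [h3] at h1
      linear_combination -h1

/-- the elementary-type function -/
def ee (c : ℚ) : List ℕ → ℚ
  | [] => 1
  | p :: l => (if p = 0 then 1 else if p = 1 then -c else 0) * ee c l

def hh (c : ℚ) (l : List ℕ) : ℚ := c ^ l.sum

lemma ee_ZI (c : ℚ) : ZI (ee c) := by
  intro l₁ l₂
  induction l₁ with
  | nil => simp [ee]
  | cons a l ih => simp [ee, ih]

lemma hh_ZI (c : ℚ) : ZI (hh c) := by
  intro l₁ l₂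
  simp [hh]

lemma conv_smul_right (c : ℚ) (l : List ℕ) : ∀ (f g : List ℕ → ℚ),
    conv f (fun l => c * g l) l = c * conv f g l := by
  induction l with
  | nil => intro f g; simp [conv]; ring
  | cons a l ih =>
    intro f g
    simp only [conv, Finset.mul_sum]
    exact Finset.sum_congr rfl fun x _ => ih _ _

lemma conv_smul_left (c : ℚ) (l : List ℕ) : ∀ (f g : List ℕ → ℚ),
    conv (fun l => c * f l) g l = c * conv f g l := by
  induction l with
  | nil => intro f g; simp [conv]; ring
  | cons a l ih =>
    intro f g
    simp only [conv, Finset.mul_sum]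
    exact Finset.sum_congr rfl fun x _ => ih _ _

lemma conv_ee_cons (c : ℚ) (f : List ℕ → ℚ) (p : ℕ) (l : List ℕ) :
    conv f (ee c) ((p+1) :: l) = conv (fun l => f ((p+1) :: l)) (ee c) l
      - c * conv (fun l => f (p :: l)) (ee c) l := by
  simp only [conv, ee, conv_smul_right]
  rw [Finset.Nat.sum_antidiagonal_eq_sum_range_succ_mk, Finset.sum_range_succ,
    Finset.sum_range_succ]
  rw [Finset.sum_eq_zero]
  · have : p + 1 - p = 1 := by omega
    simp [this]; ring
  · intro x hx
    rw [Finset.mem_range] at hx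
    have h1 : p + 1 - x ≠ 0 := by omega
    have h2 : p + 1 - x ≠ 1 := by omega
    simp [h1, h2]

lemma conv_hh_ee (c : ℚ) (p : ℕ) (l : List ℕ) : conv (hh c) (ee c) ((p+1) :: l) = 0 := by
  rw [conv_ee_cons]
  have : ∀ p, (fun l => hh c (p :: l)) = fun l => c^p * hh c l := by
    intro p; funext l; simp [hh, pow_add]
  rw [this, this, conv_smul_left, conv_smul_left]; ring

def poch (q : ℚ) (n : ℕ) : ℚ := ∏ i ∈ range n, (1 - q^(i+1))

lemma poch_ne (q : ℚ) (hq : ∀ n : ℕ, 1 - q^(n+1) ≠ 0) (n : ℕ) : poch q n ≠ 0 :=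
  Finset.prod_ne_zero_iff.2 fun i _ => hq i

lemma poch_succ (q : ℚ) (n : ℕ) : poch q (n+1) = poch q n * (1 - q^(n+1)) :=
  Finset.prod_range_succ _ _

lemma Phi_hh (q : ℚ) (hq : ∀ n : ℕ, 1 - q^(n+1) ≠ 0) (c : ℚ) (n : ℕ) :
    Phi q n (hh c) = c^n / poch q n := by
  induction n using Nat.strong_induction_on with
  | _ n ih =>
    cases n with
    | zero => simp [Phi_zero, poch, hh]
    | succ n =>
      have key : ∀ m : ℕ, ∑ r ∈ range (m+1), q^r / poch q r = 1 / poch q m := by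
        intro m
        induction m with
        | zero => simp [poch]
        | succ m ihm =>
          rw [Finset.sum_range_succ, ihm, poch_succ]
          have := hq m
          have := poch_ne q hq m
          field_simp
          ring
      rw [Phi_succ]
      have h : ∀ r ∈ range (n+1), q^r * Phi q r (fun l => hh c ((n+1-r) :: l)) =
          c^(n+1) * (q^r / poch q r) := by
        intro r hr
        rw [Finset.mem_range] at hr
        have e : (fun l => hh c ((n+1-r) :: l)) = fun l => c^(n+1-r) * hh c l := by
          funext l; simp [hh, pow_add]
        rw [e, Phi_smul, ih r hr]
        have : c^(n+1) = c^(n+1-r) * c^r := by rw [← pow_add]; congr 1; omega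
        rw [this]; ring
      rw [Finset.sum_congr rfl h, ← Finset.mul_sum, key, poch_succ]
      have := hq n
      have := poch_ne q hq n
      field_simp

end GE
namespace GE

noncomputable def LL (t : ℚ) (N b : ℕ) : MvPolynomial ℕ ℚ :=
  ∑ a ∈ range N, MvPolynomial.C ((if a ≤ b then 1 else 0) + (if b ≤ a then t else 0)) *
    MvPolynomial.X a

noncomputable def EE (t : ℚ) (N b : ℕ) : MvPolynomial ℕ ℚ :=
  ∑ a ∈ range N, MvPolynomial.C (if a < b then 1 else t) * MvPolynomial.X a

noncomputable def mu : ℕ → List ℕ → (ℕ →₀ ℕ)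
  | _, [] => 0
  | k, p :: l => Finsupp.single k p + mu (k+1) l

noncomputable def prd (L : ℕ → MvPolynomial ℕ ℚ) : ℕ → List ℕ → MvPolynomial ℕ ℚ
  | _, [] => 1
  | k, p :: l => L k ^ p * prd L (k+1) l

noncomputable def PP (t : ℚ) (l : List ℕ) : ℚ :=
  MvPolynomial.coeff (mu 0 l) (prd (LL t l.length) 0 l)

noncomputable def base (L : ℕ → MvPolynomial ℕ ℚ) : ℕ → List ℕ → MvPolynomial ℕ ℚ
  | _, [] => 1
  | k, p :: l => L k ^ (p - 1) * base L (k+1) l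

lemma conv_congr (l : List ℕ) : ∀ (f f' g : List ℕ → ℚ),
    (∀ l' : List ℕ, l'.length = l.length → f l' = f' l') → conv f g l = conv f' g l := by
  induction l with
  | nil => intro f f' g h; simp only [conv]; rw [h [] rfl]
  | cons a l ih =>
    intro f f' g h
    simp only [conv]
    refine Finset.sum_congr rfl fun x _ => ih _ _ _ ?_
    intro l' hl'
    exact h _ (by simp [hl'])

lemma conv_coeff (L : ℕ → MvPolynomial ℕ ℚ) (c : ℚ) (l : List ℕ) (hl : ∀ x ∈ l, 0 < x) :
    ∀ (k : ℕ) (m₀ : ℕ →₀ ℕ) (Q : MvPolynomial ℕ ℚ),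
    conv (fun l => MvPolynomial.coeff (m₀ + mu k l) (Q * prd L k l)) (ee c) l =
    MvPolynomial.coeff (m₀ + mu k l) (Q * (base L k l *
      ∏ i ∈ range l.length, (L (k+i) - MvPolynomial.C c * MvPolynomial.X (k+i)))) := by
  induction l with
  | nil => intro k m₀ Q; simp [conv, mu, prd, base, ee]
  | cons p l ih =>
    intro k m₀ Q
    have hp : 0 < p := hl p (by simp)
    obtain ⟨p, rfl⟩ : ∃ r, p = r + 1 := ⟨p - 1, by omega⟩
    have ih := ih (fun x hx => hl x (by simp [hx])) (k+1)
    rw [conv_ee_cons]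
    have e1 := ih (m₀ + Finsupp.single k (p+1)) (Q * L k ^ (p+1))
    have e2 := ih (m₀ + Finsupp.single k p) (Q * L k ^ p)
    simp only [mu, prd, ← add_assoc, ← mul_assoc] at e1 e2 ⊢
    rw [e1, e2]
    have hs : Finsupp.single k (p+1) = Finsupp.single k p + Finsupp.single k 1 := by
      rw [← Finsupp.single_add]
    have h3 : ∀ R : MvPolynomial ℕ ℚ, c * MvPolynomial.coeff (m₀ + Finsupp.single k p + mu (k+1) l) R
        = MvPolynomial.coeff (m₀ + Finsupp.single k (p+1) + mu (k+1) l)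
          (MvPolynomial.C c * (R * MvPolynomial.X k)) := by
      intro R
      rw [MvPolynomial.coeff_C_mul, hs]
      have : m₀ + (Finsupp.single k p + Finsupp.single k 1) + mu (k+1) l =
        (m₀ + Finsupp.single k p + mu (k+1) l) + Finsupp.single k 1 := by abel
      rw [this, MvPolynomial.coeff_mul_X]
    rw [h3, ← MvPolynomial.coeff_sub]
    congr 1
    simp only [base, List.length_cons, Finset.prod_range_succ']
    have : ∏ i ∈ range l.length, (L (k+(i+1)) - MvPolynomial.C c * MvPolynomial.X (k+(i+1))) =
        ∏ i ∈ range l.length, (L (k+1+i) - MvPolynomial.C c * MvPolynomial.X (k+1+i)) :=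
      Finset.prod_congr rfl fun i _ => by rw [show k + (i+1) = k + 1 + i by ring]
    rw [this]
    simp only [Nat.add_sub_cancel, add_zero]
    ring

lemma conv_PP (t c : ℚ) (l : List ℕ) (hl : ∀ x ∈ l, 0 < x) :
    conv (PP t) (ee c) l = MvPolynomial.coeff (mu 0 l) (base (LL t l.length) 0 l *
      ∏ i ∈ range l.length, (LL t l.length i - MvPolynomial.C c * MvPolynomial.X i)) := by
  have h := conv_coeff (LL t l.length) c l hl 0 0 1
  simp only [zero_add, one_mul] at h
  rw [← h]
  apply conv_congr
  intro l' hl'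
  rw [PP, hl']

lemma LL_sub_t (t : ℚ) (N b : ℕ) (hb : b < N) :
    LL t N b - MvPolynomial.C t * MvPolynomial.X b = EE t N (b+1) := by
  rw [sub_eq_iff_eq_add, LL, EE, ← Finset.sum_erase_add _ _ (Finset.mem_range.2 hb),
    ← Finset.sum_erase_add _ _ (Finset.mem_range.2 hb)]
  have : ∑ x ∈ (range N).erase b, MvPolynomial.C ((if x ≤ b then (1:ℚ) else 0) + (if b ≤ x then t else 0)) * (MvPolynomial.X x : MvPolynomial ℕ ℚ) = ∑ x ∈ (range N).erase b, MvPolynomial.C (if x < b + 1 then 1 else t) * MvPolynomial.X x := by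
    refine Finset.sum_congr rfl fun x hx => ?_
    have := Finset.ne_of_mem_erase hx
    congr 2
    split_ifs <;> first | omega | simp
  rw [this]
  simp only [le_refl, if_true, Nat.lt_succ_self, map_add]
  ring

lemma LL_sub_one (t : ℚ) (N b : ℕ) (hb : b < N) :
    LL t N b - MvPolynomial.C 1 * MvPolynomial.X b = EE t N b := by
  rw [sub_eq_iff_eq_add, LL, EE, ← Finset.sum_erase_add _ _ (Finset.mem_range.2 hb),
    ← Finset.sum_erase_add _ _ (Finset.mem_range.2 hb)]
  have : ∑ x ∈ (range N).erase b, MvPolynomial.C ((if x ≤ b then (1:ℚ) else 0) + (if b ≤ x then t else 0)) * (MvPolynomial.X x : MvPolynomial ℕ ℚ) = ∑ x ∈ (range N).erase b, MvPolynomial.C (if x < b then 1 else t) * MvPolynomial.X x := by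
    refine Finset.sum_congr rfl fun x hx => ?_
    have := Finset.ne_of_mem_erase hx
    congr 2
    split_ifs <;> first | omega | simp
  rw [this]
  simp only [le_refl, if_true, lt_irrefl, if_false, map_add]
  ring

lemma EE_tel (t : ℚ) (N : ℕ) (hN : 0 < N) :
    ∏ i ∈ range N, EE t N i = MvPolynomial.C t * ∏ i ∈ range N, EE t N (i+1) := by
  obtain ⟨M, rfl⟩ : ∃ r, N = r + 1 := ⟨N - 1, by omega⟩
  rw [Finset.prod_range_succ', Finset.prod_range_succ]
  have h0 : EE t (M+1) 0 = MvPolynomial.C t * EE t (M+1) (M+1) := by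
    simp only [EE, Finset.mul_sum]
    refine Finset.sum_congr rfl fun x hx => ?_
    rw [Finset.mem_range] at hx
    simp [hx]
  rw [h0]; ring

lemma conv_PP_zero (t : ℚ) (l : List ℕ) (hl : ∀ x ∈ l, 0 < x) (hn : l ≠ []) :
    conv (PP t) (ee 1) l + (-t) * conv (PP t) (ee t) l = 0 := by
  rw [conv_PP t 1 l hl, conv_PP t t l hl, Finset.prod_congr rfl fun i hi => LL_sub_one t _ i (Finset.mem_range.1 hi),
    Finset.prod_congr rfl fun i hi => LL_sub_t t _ i (Finset.mem_range.1 hi),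
    EE_tel t _ (List.length_pos_iff.2 hn), mul_left_comm, MvPolynomial.coeff_C_mul]
  ring

/-- skip index i -/
def skp (i a : ℕ) : ℕ := if a < i then a else a + 1

lemma skp_inj (i : ℕ) : Function.Injective (skp i) := by
  intro a b h
  simp only [skp] at h
  split_ifs at h <;> omega

lemma mu_append (l₁ l₂ : List ℕ) : ∀ k, mu k (l₁ ++ l₂) = mu k l₁ + mu (k + l₁.length) l₂ := by
  induction l₁ with
  | nil => simp [mu]
  | cons a l ih =>
    intro k
    simp only [List.cons_append, mu, ih, List.length_cons, add_assoc]
    congr 4; ring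

lemma prd_append (L : ℕ → MvPolynomial ℕ ℚ) (l₁ l₂ : List ℕ) :
    ∀ k, prd L k (l₁ ++ l₂) = prd L k l₁ * prd L (k + l₁.length) l₂ := by
  induction l₁ with
  | nil => simp [prd]
  | cons a l ih =>
    intro k
    simp only [List.cons_append, prd, ih, List.length_cons, mul_assoc]
    rw [show k + 1 + l.length = k + (l.length + 1) by ring]

lemma mu_map_lt (i : ℕ) (l : List ℕ) : ∀ k, k + l.length ≤ i →
    (mu k l).mapDomain (skp i) = mu k l := by
  induction l with
  | nil => intro k _; simp [mu]
  | cons a l ih =>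
    intro k h
    simp only [List.length_cons] at h
    rw [mu, Finsupp.mapDomain_add, Finsupp.mapDomain_single, ih (k+1) (by omega)]
    have : skp i k = k := by simp [skp]; omega
    rw [this]

lemma mu_map_ge (i : ℕ) (l : List ℕ) : ∀ k, i ≤ k →
    (mu k l).mapDomain (skp i) = mu (k+1) l := by
  induction l with
  | nil => intro k _; simp [mu]
  | cons a l ih =>
    intro k h
    rw [mu, Finsupp.mapDomain_add, Finsupp.mapDomain_single, ih (k+1) (by omega), mu]
    have : skp i k = k + 1 := by simp [skp]; omega
    rw [this]

lemma LL_skp (t : ℚ) (N i b : ℕ) (hi : i ≤ N) :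
    Ideal.Quotient.mk (Ideal.span {(MvPolynomial.X i : MvPolynomial ℕ ℚ)}) (LL t (N+1) (skp i b)) =
    Ideal.Quotient.mk (Ideal.span {(MvPolynomial.X i : MvPolynomial ℕ ℚ)})
      (MvPolynomial.rename (skp i) (LL t N b)) := by
  have hr : range (N+1) = insert i ((range N).image (skp i)) := by
    ext a
    simp only [Finset.mem_range, Finset.mem_insert, Finset.mem_image, skp]
    constructor
    · intro h
      rcases lt_trichotomy a i with h1 | h1 | h1
      · exact Or.inr ⟨a, by omega, by simp [h1]⟩
      · exact Or.inl h1
      · refine Or.inr ⟨a - 1, by omega, ?_⟩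
        rw [if_neg (by omega)]; omega
    · rintro (h | ⟨c, h, h2⟩)
      · omega
      · split_ifs at h2 <;> omega
  have hni : i ∉ (range N).image (skp i) := by
    simp only [Finset.mem_image, skp, not_exists, not_and]
    intro c _ h
    split_ifs at h <;> omega
  rw [LL, hr, Finset.sum_insert hni, Finset.sum_image (fun a _ b _ h => skp_inj i h), Ideal.Quotient.eq]
  have : MvPolynomial.rename (skp i) (LL t N b) = ∑ x ∈ range N,
      MvPolynomial.C ((if skp i x ≤ skp i b then (1:ℚ) else 0) + if skp i b ≤ skp i x then t else 0)
        * MvPolynomial.X (skp i x) := by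
    rw [LL, map_sum]
    refine Finset.sum_congr rfl fun x _ => ?_
    rw [map_mul, MvPolynomial.rename_C, MvPolynomial.rename_X]
    have h1 : ∀ x b, (skp i x ≤ skp i b) = (x ≤ b) := by
      intro x b
      simp only [skp, eq_iff_iff]
      split_ifs <;> omega
    simp only [h1]
  rw [this, add_sub_cancel_right]
  exact Ideal.mul_mem_left _ _ (Ideal.mem_span_singleton_self _)

lemma prd_skp_lt (t : ℚ) (N i : ℕ) (hi : i ≤ N) (l : List ℕ) : ∀ k, k + l.length ≤ i →
    Ideal.Quotient.mk (Ideal.span {(MvPolynomial.X i : MvPolynomial ℕ ℚ)}) (prd (LL t (N+1)) k l) =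
    Ideal.Quotient.mk (Ideal.span {(MvPolynomial.X i : MvPolynomial ℕ ℚ)})
      (MvPolynomial.rename (skp i) (prd (LL t N) k l)) := by
  induction l with
  | nil => intro k _; simp [prd]
  | cons a l ih =>
    intro k h
    simp only [List.length_cons] at h
    have h2 := LL_skp t N i k hi
    have : skp i k = k := by simp [skp]; omega
    rw [this] at h2
    simp only [prd, map_mul, map_pow]
    rw [ih (k+1) (by omega), h2]

lemma prd_skp_ge (t : ℚ) (N i : ℕ) (hi : i ≤ N) (l : List ℕ) : ∀ k, i ≤ k →
    Ideal.Quotient.mk (Ideal.span {(MvPolynomial.X i : MvPolynomial ℕ ℚ)}) (prd (LL t (N+1)) (k+1) l) =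
    Ideal.Quotient.mk (Ideal.span {(MvPolynomial.X i : MvPolynomial ℕ ℚ)})
      (MvPolynomial.rename (skp i) (prd (LL t N) k l)) := by
  induction l with
  | nil => intro k _; simp [prd]
  | cons a l ih =>
    intro k h
    have h2 := LL_skp t N i k hi
    have : skp i k = k + 1 := by simp [skp]; omega
    rw [this] at h2
    simp only [prd, map_mul, map_pow]
    rw [ih (k+1) (by omega), h2]

lemma PP_ZI (t : ℚ) : ZI (PP t) := by
  intro l₁ l₂
  have hlen : (l₁ ++ 0 :: l₂).length = (l₁ ++ l₂).length + 1 := by simp; omega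
  have hmu : mu 0 (l₁ ++ 0 :: l₂) = (mu 0 (l₁ ++ l₂)).mapDomain (skp l₁.length) := by
    rw [mu_append, mu_append, Finsupp.mapDomain_add, mu_map_lt _ _ _ (by simp), mu_map_ge _ _ _ (by simp)]
    simp [mu]
  have hp : Ideal.Quotient.mk (Ideal.span {(MvPolynomial.X l₁.length : MvPolynomial ℕ ℚ)})
      (prd (LL t ((l₁ ++ l₂).length+1)) 0 (l₁ ++ 0 :: l₂)) =
    Ideal.Quotient.mk (Ideal.span {(MvPolynomial.X l₁.length : MvPolynomial ℕ ℚ)})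
      (MvPolynomial.rename (skp l₁.length) (prd (LL t (l₁ ++ l₂).length) 0 (l₁ ++ l₂))) := by
    have hi : l₁.length ≤ (l₁ ++ l₂).length := by simp
    rw [prd_append, prd_append]
    simp only [prd, pow_zero, one_mul, map_mul]
    rw [prd_skp_lt t _ _ hi l₁ 0 (by simp), prd_skp_ge t _ _ hi l₂ _ (by simp)]
  rw [Ideal.Quotient.eq, Ideal.mem_span_singleton] at hp
  obtain ⟨T, hT⟩ := hp
  rw [sub_eq_iff_eq_add] at hT
  rw [PP, PP, hlen, hT, hmu, MvPolynomial.coeff_add,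
    MvPolynomial.coeff_rename_mapDomain _ (skp_inj _), MvPolynomial.coeff_X_mul', if_neg, zero_add]
  rw [Finsupp.mem_support_iff, not_not, Finsupp.mapDomain_of_notMem_range]
  rintro ⟨c, h⟩
  simp only [skp] at h
  split_ifs at h <;> omega

/-- the linear recurrence -/
lemma Phi_rec (q t : ℚ) (hq : ∀ n : ℕ, 1 - q^(n+1) ≠ 0) (n : ℕ) :
    ∑ x ∈ antidiagonal n, Phi q x.1 (conv (PP t) (ee t)) * ((t^x.2 - t) / poch q x.2) =
      (1 - t) / poch q n := by
  let F' : PowerSeries ℚ := PowerSeries.mk fun n => Phi q n (PP t)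
  let F : PowerSeries ℚ := PowerSeries.mk fun n => Phi q n (conv (PP t) (ee t))
  let e : ℚ → PowerSeries ℚ := fun c => PowerSeries.mk fun n => Phi q n (ee c)
  let h : ℚ → PowerSeries ℚ := fun c => PowerSeries.mk fun n => Phi q n (hh c)
  have h1 : ∀ c, h c * e c = 1 := by
    intro c
    ext n
    rw [PowerSeries.coeff_mul]
    simp only [h, e, PowerSeries.coeff_mk]
    rw [← Phi_conv q hq n _ _ (hh_ZI c) (ee_ZI c), PowerSeries.coeff_one]
    split_ifs with hn
    · subst hn; simp [Phi_zero, conv, hh, ee]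
    · rw [← Phi_nil q n]
      apply Phi_congr
      intro l hl hs
      cases l with
      | nil => simp at hs; omega
      | cons p l =>
        obtain ⟨r, rfl⟩ : ∃ r, p = r + 1 := ⟨p - 1, by have := hl p (by simp); omega⟩
        exact conv_hh_ee c r l
  have h2 : F = F' * e t := by
    ext n
    rw [PowerSeries.coeff_mul]
    simp only [F, F', e, PowerSeries.coeff_mk]
    exact Phi_conv q hq n _ _ (PP_ZI t) (ee_ZI t)
  have h3 : F' * (e 1 + PowerSeries.C (-t) * e t) = PowerSeries.C (1 - t) := by
    rw [mul_add, mul_left_comm]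
    ext n
    rw [map_add, PowerSeries.coeff_C_mul, PowerSeries.coeff_mul, PowerSeries.coeff_mul]
    simp only [F', e, PowerSeries.coeff_mk]
    rw [← Phi_conv q hq n _ _ (PP_ZI t) (ee_ZI t), ← Phi_conv q hq n _ _ (PP_ZI t) (ee_ZI 1),
      ← Phi_smul, ← Phi_add, PowerSeries.coeff_C]
    split_ifs with hn
    · subst hn; simp [Phi_zero, conv, ee, PP, mu, prd]; ring
    · rw [← Phi_nil q n]
      apply Phi_congr
      intro l hl hs
      apply conv_PP_zero t l hl
      rintro rfl
      simp at hs; omega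
  have h4 : F * (h t + PowerSeries.C (-t) * h 1) = PowerSeries.C (1 - t) * h 1 := by
    rw [h2, ← h3]
    linear_combination (F' + PowerSeries.C (-t) * F' * e t * h 1 - PowerSeries.C (-t) * F' * e t * h 1) * h1 t - F' * h1 1
  have h5 := congrArg (PowerSeries.coeff n) h4
  rw [PowerSeries.coeff_mul, PowerSeries.coeff_C_mul] at h5
  simp only [F, h, map_add, PowerSeries.coeff_mk, PowerSeries.coeff_C_mul, Phi_hh q hq, one_pow] at h5
  rw [mul_one_div] at h5
  rw [← h5]
  refine Finset.sum_congr rfl fun x _ => ?_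
  ring

end GE
namespace GE

def go : ℕ → List ℕ → List ℕ
  | n, [] => [n]
  | n, r :: rs => (n - r) :: go r rs

def comp (n : ℕ) (S : Finset ℕ) : List ℕ := go n (S.sort (· ≥ ·))

lemma comp_empty (n : ℕ) : comp n ∅ = [n] := by simp [comp, go]

lemma comp_insert (n r : ℕ) (S : Finset ℕ) (h : ∀ x ∈ S, x < r) :
    comp n (insert r S) = (n - r) :: comp r S := by
  rw [comp, Finset.sort_insert (· ≥ ·) (fun b hb => (h b hb).le) (fun hr => lt_irrefl _ (h r hr)), go, comp]

def kap (q : ℚ) (U S : Finset ℕ) : ℚ := (∏ i ∈ S, q^i) * ∏ i ∈ U \ S, (1 - q^i)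

lemma Icc_succ (j : ℕ) : Icc 1 (j+1) = insert (j+1) (Icc 1 j) := by
  ext x; simp; omega

lemma sum_kap (q : ℚ) (hq : ∀ n : ℕ, 1 - q^(n+1) ≠ 0) (j : ℕ) : ∀ (n : ℕ) (f : List ℕ → ℚ), j < n →
    ∑ S ∈ (Icc 1 j).powerset, kap q (Icc 1 j) S * f (comp n S) =
      poch q j * ∑ r ∈ range (j+1), q^r * Phi q r (fun l => f ((n-r) :: l)) := by
  induction j with
  | zero => intro n f h; simp [kap, comp_empty, poch, Phi_zero]
  | succ j ih =>
    intro n f h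
    have hn : j + 1 ∉ Icc 1 j := by simp
    rw [Icc_succ, Finset.sum_powerset_insert hn]
    have e1 : ∀ S ∈ (Icc 1 j).powerset, kap q (insert (j+1) (Icc 1 j)) S * f (comp n S) =
        (1 - q^(j+1)) * (kap q (Icc 1 j) S * f (comp n S)) := by
      intro S hS
      rw [Finset.mem_powerset] at hS
      have : j + 1 ∉ S := fun h => hn (hS h)
      rw [kap, kap, Finset.insert_sdiff_of_notMem _ this, Finset.prod_insert (by simp)]
      ring
    have e2 : ∀ S ∈ (Icc 1 j).powerset, kap q (insert (j+1) (Icc 1 j)) (insert (j+1) S) *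
          f (comp n (insert (j+1) S)) =
        q^(j+1) * (kap q (Icc 1 j) S * (fun l => f ((n - (j+1)) :: l)) (comp (j+1) S)) := by
      intro S hS
      rw [Finset.mem_powerset] at hS
      have : j + 1 ∉ S := fun h => hn (hS h)
      rw [comp_insert, kap, kap, Finset.prod_insert this, Finset.insert_sdiff_insert,
        Finset.sdiff_insert_of_notMem hn]
      · ring
      · intro x hx
        have := Finset.mem_Icc.1 (hS hx)
        omega
    rw [Finset.sum_congr rfl e1, Finset.sum_congr rfl e2, ← Finset.mul_sum, ← Finset.mul_sum,
      ih n f (by omega), ih (j+1) (fun l => f ((n - (j+1)) :: l)) (by omega), ← Phi_succ' q hq j (fun l => f ((n - (j+1)) :: l)), Finset.sum_range_succ _ (j+1), poch_succ]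
    ring

lemma Phi_kap (q : ℚ) (hq : ∀ n : ℕ, 1 - q^(n+1) ≠ 0) (m : ℕ) (f : List ℕ → ℚ) :
    poch q (m+1) * Phi q (m+1) f = ∑ S ∈ (Icc 1 m).powerset, kap q (Icc 1 m) S * f (comp (m+1) S) := by
  rw [sum_kap q hq m (m+1) f (by omega), ← Phi_succ' q hq, poch_succ]; ring

lemma kap_super (q : ℚ) (U D : Finset ℕ) (hD : D ⊆ U) :
    ∑ S ∈ U.powerset with D ⊆ S, kap q U S = q ^ (∑ i ∈ D, i) := by
  have h1 : q ^ (∑ i ∈ D, i) = ∏ i ∈ U, (q^i + if i ∈ D then 0 else 1 - q^i) := by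
    rw [← Finset.prod_pow_eq_pow_sum, ← Finset.prod_subset hD]
    · refine Finset.prod_congr rfl fun i hi => by simp [hi]
    · intro i _ hi
      simp [hi]
  rw [h1, Finset.prod_add, Finset.sum_filter]
  refine Finset.sum_congr rfl fun S hS => ?_
  have h2 : ∏ i ∈ U \ S, (if i ∈ D then 0 else 1 - q^i) = if D ⊆ S then ∏ i ∈ U \ S, (1 - q^i) else 0 := by
    split_ifs with h
    · refine Finset.prod_congr rfl fun i hi => ?_
      rw [if_neg]
      intro hi'
      exact (Finset.mem_sdiff.1 hi).2 (h hi')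
    · obtain ⟨x, hx, hx'⟩ := Finset.not_subset.1 h
      exact Finset.prod_eq_zero (Finset.mem_sdiff.2 ⟨hD hx, hx'⟩) (by simp [hx])
  rw [h2, kap]
  split_ifs <;> simp

def bot (S : Finset ℕ) (v : ℕ) : ℕ := (S.filter fun j => v < j).card

lemma comp_facts (S : Finset ℕ) : ∀ n, 0 < n → (∀ x ∈ S, 0 < x ∧ x < n) →
    (comp n S).length = S.card + 1 ∧ (∀ x ∈ comp n S, 0 < x) ∧
    (∀ k, mu k (comp n S) = ∑ v ∈ range n, Finsupp.single (k + bot S v) 1) ∧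
    (∀ (L u : ℕ → MvPolynomial ℕ ℚ) (k : ℕ),
      base L k (comp n S) * ∏ i ∈ range (comp n S).length, u (k+i) =
      ∏ v ∈ range n, if v ∈ insert 0 S then u (k + bot S v) else L (k + bot S v)) := by
  induction S using Finset.induction_on_max with
  | empty =>
    intro n hn _
    obtain ⟨n, rfl⟩ : ∃ r, n = r + 1 := ⟨n - 1, by omega⟩
    refine ⟨by simp [comp_empty], by simp [comp_empty], ?_, ?_⟩
    · intro k
      simp [comp_empty, mu, bot]
    · intro L u k
      simp [comp_empty, base, bot, Finset.prod_range_succ']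
  | insert r S hr ih =>
    intro n hn hS
    have hrn := hS r (by simp)
    have ih := ih r hrn.1 (fun x hx => ⟨(hS x (by simp [hx])).1, hr x hx⟩)
    obtain ⟨h1, h2, h3, h4⟩ := ih
    have hrS : r ∉ S := fun h => lt_irrefl _ (hr r h)
    rw [comp_insert n r S hr]
    have b1 : ∀ v, v < r → bot (insert r S) v = bot S v + 1 := by
      intro v hv
      rw [bot, Finset.filter_insert, if_pos hv, Finset.card_insert_of_notMem (by simp [hrS]), bot]
    have b2 : ∀ v, r ≤ v → bot (insert r S) v = 0 := by
      intro v hv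
      rw [bot, Finset.card_eq_zero, Finset.filter_eq_empty_iff]
      intro x hx
      rcases Finset.mem_insert.1 hx with rfl | hx
      · omega
      · have := hr x hx; omega
    obtain ⟨d, rfl⟩ : ∃ d, n = r + (d + 1) := ⟨n - r - 1, by omega⟩
    have hd : r + (d+1) - r = d + 1 := by omega
    refine ⟨by simp [h1, hrS], ?_, ?_, ?_⟩
    · intro x hx
      rcases List.mem_cons.1 hx with rfl | hx
      · omega
      · exact h2 x hx
    · intro k
      rw [mu, h3, Finset.sum_range_add, hd, add_comm]
      congr 1
      · refine Finset.sum_congr rfl fun v hv => ?_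
        rw [b1 v (Finset.mem_range.1 hv)]
        congr 1; ring
      · rw [Finset.sum_congr rfl fun v _ => by rw [b2 (r+v) (by omega)]]
        simp
    · intro L u k
      rw [base, hd, Finset.prod_range_add, List.length_cons, Finset.prod_range_succ']
      have e1 : ∏ v ∈ range r, (if v ∈ insert 0 (insert r S) then u (k + bot (insert r S) v)
          else L (k + bot (insert r S) v)) = ∏ v ∈ range r, (if v ∈ insert 0 S then u (k + 1 + bot S v)
          else L (k + 1 + bot S v)) := by
        refine Finset.prod_congr rfl fun v hv => ?_
        have hv := Finset.mem_range.1 hv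
        rw [b1 v hv, show k + (bot S v + 1) = k + 1 + bot S v by ring]
        have : v ≠ r := by omega
        simp [this]
      have e2 : ∏ v ∈ range (d+1), (if r + v ∈ insert 0 (insert r S) then
          u (k + bot (insert r S) (r+v)) else L (k + bot (insert r S) (r+v))) = L k ^ d * u k := by
        rw [Finset.prod_range_succ', b2 _ (by omega)]
        simp only [add_zero, Finset.mem_insert, true_or, or_true, if_true]
        congr 1
        rw [show L k ^ d = ∏ _v ∈ range d, L k by simp]
        refine Finset.prod_congr rfl fun v hv => ?_
        rw [b2 _ (by omega), if_neg, add_zero]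
        rintro (h | h | h)
        · omega
        · omega
        · have := hr _ h; omega
      rw [e1, e2, ← h4 L u (k+1)]
      have e3 : ∏ i ∈ range (comp r S).length, u (k + (i+1)) = ∏ i ∈ range (comp r S).length, u (k+1+i) :=
        Finset.prod_congr rfl fun i _ => by rw [show k + (i+1) = k+1+i by ring]
      rw [e3, Nat.add_sub_cancel, add_zero]
      ring

/-- DEX -/
def DEX {n : ℕ} (σ : Equiv.Perm (Fin n)) : Finset ℕ :=
  (Finset.Icc 1 (n - 1)).filter fun j =>
    (¬ (j < pval σ j) ∧ j + 1 < pval σ (j+1)) ∨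
    ((j < pval σ j ↔ j + 1 < pval σ (j+1)) ∧ pval σ (j+1) < pval σ j)

lemma pval_inj {n : ℕ} (σ : Equiv.Perm (Fin n)) (i j : ℕ) (hi : 1 ≤ i ∧ i ≤ n) (hj : 1 ≤ j ∧ j ≤ n)
    (h : pval σ i = pval σ j) : i = j := by
  rw [pval, pval, dif_pos hi, dif_pos hj] at h
  have h2 := σ.injective (Fin.ext (Nat.succ_injective h))
  have := congrArg Fin.val h2
  simp at this
  omega

lemma pval_le {n : ℕ} (σ : Equiv.Perm (Fin n)) (i : ℕ) : pval σ i ≤ n := by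
  rw [pval]
  split_ifs with h
  · exact (σ _).2
  · omega

lemma abel_sum (E : ℕ → ℤ) (m : ℕ) : ∑ j ∈ Icc 1 m, (j:ℤ) * (E j - E (j+1)) =
    ∑ j ∈ Icc 1 (m+1), E j - (m+1) * E (m+1) := by
  induction m with
  | zero => simp
  | succ m ih =>
    rw [Icc_succ, Finset.sum_insert (by simp), ih, Icc_succ (m+1), Finset.sum_insert (by simp)]
    push_cast; ring

lemma maj_eq {m : ℕ} (σ : Equiv.Perm (Fin (m+1))) : pmaj σ = ∑ j ∈ DEX σ, j + pexc σ := by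
  let E : ℕ → ℤ := fun j => if j < pval σ j then 1 else 0
  have h0 : E (m+1) = 0 := by
    have := pval_le σ (m+1)
    simp only [E]; rw [if_neg (by omega)]
  have h := abel_sum E m
  rw [h0, mul_zero, sub_zero] at h
  have h1 : ((pexc σ : ℕ) : ℤ) = ∑ j ∈ Icc 1 (m+1), E j := by
    rw [pexc, Finset.card_filter]; push_cast; rfl
  have h2 : ((pmaj σ : ℕ) : ℤ) = ∑ j ∈ Icc 1 m, (j:ℤ) * (if pval σ (j+1) < pval σ j then 1 else 0) := by
    rw [pmaj, pDES, Finset.sum_filter]; push_cast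
    refine Finset.sum_congr rfl fun j _ => by split_ifs <;> simp
  have h3 : ((∑ j ∈ DEX σ, j : ℕ) : ℤ) = ∑ j ∈ Icc 1 m, (j:ℤ) * (if
      (¬ (j < pval σ j) ∧ j + 1 < pval σ (j+1)) ∨
    ((j < pval σ j ↔ j + 1 < pval σ (j+1)) ∧ pval σ (j+1) < pval σ j) then 1 else 0) := by
    rw [DEX, Finset.sum_filter]; push_cast
    refine Finset.sum_congr rfl fun j _ => by split_ifs <;> simp
  zify
  push_cast at h3
  rw [h1, h2, h3, ← h, ← Finset.sum_add_distrib]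
  refine Finset.sum_congr rfl fun j hj => ?_
  rw [← mul_add]
  congr 1
  have hj := Finset.mem_Icc.1 hj
  have hne : pval σ j ≠ pval σ (j+1) := fun h => by
    have := pval_inj σ j (j+1) (by omega) (by omega) h
    omega
  simp only [E]
  by_cases a : j < pval σ j <;> by_cases b : j + 1 < pval σ (j+1) <;>
    by_cases c : pval σ (j+1) < pval σ j <;> simp [a, b, c] <;> omega

end GE
namespace GE

lemma pval_succ {n : ℕ} (σ : Equiv.Perm (Fin n)) (i : Fin n) : pval σ (i + 1) = σ i + 1 := by
  have := i.2
  rw [pval, dif_pos (by omega)]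
  rfl

lemma pval_cs {m : ℕ} (σ : Equiv.Perm (Fin (m+1))) (i : Fin m) :
    pval σ (i + 1) = σ i.castSucc + 1 := pval_succ σ i.castSucc

lemma pval_sc {m : ℕ} (σ : Equiv.Perm (Fin (m+1))) (i : Fin m) :
    pval σ (i + 1 + 1) = σ i.succ + 1 := by
  have := pval_succ σ i.succ
  simpa using this

lemma DEX_sub {m : ℕ} (σ : Equiv.Perm (Fin (m+1))) (S : Finset ℕ) :
    DEX σ ⊆ S ↔ ∀ i : Fin m, (i:ℕ) + 1 ∉ S →
      ((i.castSucc < σ i.castSucc ∧ ¬ i.succ < σ i.succ) ∨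
       ((i.castSucc < σ i.castSucc ↔ i.succ < σ i.succ) ∧ σ i.castSucc < σ i.succ)) := by
  have key : ∀ i : Fin m, (i:ℕ) + 1 ∈ DEX σ ↔
      ¬ ((i.castSucc < σ i.castSucc ∧ ¬ i.succ < σ i.succ) ∨
       ((i.castSucc < σ i.castSucc ↔ i.succ < σ i.succ) ∧ σ i.castSucc < σ i.succ)) := by
    intro i
    have hi := i.2
    have hne : (σ i.castSucc : ℕ) ≠ σ i.succ := by
      intro h
      have := congrArg Fin.val (σ.injective (Fin.ext h))
      simp at this
    rw [DEX, Finset.mem_filter, pval_cs, pval_sc]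
    simp only [Fin.lt_def, Fin.val_castSucc, Fin.val_succ, Finset.mem_Icc]
    by_cases a : (i:ℕ) < σ i.castSucc <;> by_cases b : (i:ℕ) + 1 < σ i.succ <;>
      by_cases c : (σ i.castSucc:ℕ) < σ i.succ <;> simp [a, b, c] <;> omega
  constructor
  · intro h i hi
    by_contra hc
    exact hi (h ((key i).2 hc))
  · intro h j hj
    have hj' := hj
    rw [DEX, Finset.mem_filter, Finset.mem_Icc] at hj'
    obtain ⟨i, rfl⟩ : ∃ i : Fin m, j = i + 1 := ⟨⟨j - 1, by omega⟩, by simp; omega⟩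
    by_contra hc
    exact (key i).1 hj (h i hc)

lemma bot_anti (S : Finset ℕ) : Antitone (bot S) := by
  intro a b h
  exact Finset.card_le_card (Finset.monotone_filter_right _ (fun x _ hx => lt_of_le_of_lt h hx))

lemma bot_step (S : Finset ℕ) (v : ℕ) : bot S v = bot S (v+1) + if v + 1 ∈ S then 1 else 0 := by
  rw [bot, bot]
  split_ifs with h
  · rw [← Finset.card_insert_of_notMem (a := v+1) (s := S.filter fun j => v + 1 < j) (by simp)]
    congr 1
    ext x
    simp only [Finset.mem_filter, Finset.mem_insert]
    constructor
    · rintro ⟨h1, h2⟩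
      by_cases hx : x = v + 1
      · exact Or.inl hx
      · exact Or.inr ⟨h1, by omega⟩
    · rintro (rfl | h)
      · exact ⟨h, by omega⟩
      · exact ⟨h.1, by omega⟩
  · congr 1
    ext x
    simp only [Finset.mem_filter]
    constructor
    · rintro ⟨h1, h2⟩
      exact ⟨h1, by rcases Nat.lt_or_ge (v+1) x with h' | h'; exact h'; exact absurd (by rwa [show v + 1 = x by omega]) h⟩
    · rintro ⟨h1, h2⟩
      exact ⟨h1, by omega⟩

def top (S : Finset ℕ) (v : ℕ) : ℕ := bot S v + if v ∈ insert 0 S then 1 else 0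

lemma top_le (S : Finset ℕ) (i v : ℕ) (h : i < v) : top S v ≤ bot S i := by
  obtain ⟨u, rfl⟩ : ∃ u, v = u + 1 := ⟨v - 1, by omega⟩
  have h1 := bot_step S u
  have h2 : bot S u ≤ bot S i := bot_anti S (by omega)
  rw [top]
  simp only [Finset.mem_insert]
  simp only [Nat.add_eq_zero_iff, one_ne_zero, and_false, false_or]
  omega

def key {m : ℕ} (N : ℕ) (p : (Fin (m+1) → ℕ) × Finset (Fin (m+1))) (v : Fin (m+1)) : ℕ :=
  2 * (N - p.1 v) + if v ∈ p.2 then 0 else 1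

def Good {m : ℕ} (S : Finset ℕ) (p : (Fin (m+1) → ℕ) × Finset (Fin (m+1))) : Prop :=
  Finset.univ.val.map p.1 = Finset.univ.val.map (fun v : Fin (m+1) => bot S v) ∧
  (∀ v ∈ p.2, top S v ≤ p.1 v) ∧ (∀ v, v ∉ p.2 → p.1 v ≤ bot S v)

def fwd {m : ℕ} (S : Finset ℕ) (σ : Equiv.Perm (Fin (m+1))) : (Fin (m+1) → ℕ) × Finset (Fin (m+1)) :=
  (fun v => bot S (σ.symm v), Finset.univ.filter fun v => σ.symm v < v)

lemma fwd_good {m : ℕ} (S : Finset ℕ) (σ : Equiv.Perm (Fin (m+1))) : Good S (fwd S σ) := by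
  refine ⟨?_, ?_, ?_⟩
  · have : (fwd S σ).1 = (fun v : Fin (m+1) => bot S v) ∘ σ.symm := rfl
    rw [this, ← Multiset.map_map]
    congr 1
    have := Finset.map_univ_equiv σ.symm
    have h2 := congrArg Finset.val this
    rw [Finset.map_val] at h2
    exact h2
  · intro v hv
    simp only [fwd, Finset.mem_filter, Finset.mem_univ, true_and] at hv ⊢
    exact top_le S _ _ hv
  · intro v hv
    simp only [fwd, Finset.mem_filter, Finset.mem_univ, true_and, not_lt] at hv ⊢
    exact bot_anti S hv

lemma bot_lt (S : Finset ℕ) (v : ℕ) : bot S v < S.card + 1 :=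
  Nat.lt_succ_of_le (Finset.card_filter_le _ _)

lemma good_lt {m : ℕ} (S : Finset ℕ) (p : (Fin (m+1) → ℕ) × Finset (Fin (m+1))) (h : Good S p) (v) :
    p.1 v < S.card + 1 := by
  have : p.1 v ∈ Finset.univ.val.map (fun v : Fin (m+1) => bot S v) := by
    rw [← h.1]; exact Multiset.mem_map_of_mem _ (Finset.mem_univ v)
  obtain ⟨u, _, hu⟩ := Multiset.mem_map.1 this
  rw [← hu]; exact bot_lt S u

lemma sort_fwd {m : ℕ} (S : Finset ℕ) (σ : Equiv.Perm (Fin (m+1))) (h : DEX σ ⊆ S) :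
    Tuple.sort (key (S.card + 1) (fwd S σ)) = σ := by
  symm
  have hs : StrictMono (fun i => toLex (key (S.card + 1) (fwd S σ) (σ i), σ i)) := by
    rw [Fin.strictMono_iff_lt_succ]
    intro i
    rw [DEX_sub] at h
    have h := h i
    have hb := bot_step S i
    have h1 := bot_lt S i
    rw [Prod.Lex.toLex_lt_toLex]
    simp only [key, fwd, Finset.mem_filter, Finset.mem_univ, true_and, Equiv.symm_apply_apply, Fin.val_castSucc, Fin.val_succ]
    by_cases hS : (i:ℕ) + 1 ∈ S
    · left
      rw [if_pos hS] at hb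
      split_ifs <;> omega
    · rw [if_neg hS] at hb
      rw [hb]
      rcases h hS with ⟨a, b⟩ | ⟨a, b⟩
      · left; rw [if_pos a, if_neg b]; omega
      · right; simp only [a, b, and_true, add_zero]
  rw [Tuple.eq_sort_iff]
  constructor
  · intro i j hij
    have := hs.monotone hij
    rw [Prod.Lex.toLex_le_toLex] at this
    rcases this with h | h
    · exact h.le
    · exact h.1.le
  · intro i j hij he
    have := hs hij
    rw [Prod.Lex.toLex_lt_toLex] at this
    rcases this with h | h
    · exact absurd he h.ne
    · exact h.2

lemma w_eq {m : ℕ} (S : Finset ℕ) (p : (Fin (m+1) → ℕ) × Finset (Fin (m+1))) (h : Good S p)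
    (σ : Equiv.Perm (Fin (m+1))) (hσ : σ = Tuple.sort (key (S.card + 1) p)) (i : Fin (m+1)) : p.1 (σ i) = bot S i := by
  have hm := (Tuple.eq_sort_iff.1 hσ).1
  have hperm : (List.ofFn (fun i => p.1 (σ i))).Perm (List.ofFn (fun v : Fin (m+1) => bot S v)) := by
    rw [← Multiset.coe_eq_coe, ← Fin.univ_val_map, ← Fin.univ_val_map, ← h.1]
    have : (fun i => p.1 (σ i)) = p.1 ∘ σ := rfl
    rw [this, ← Multiset.map_map]
    congr 1
    have := Finset.map_univ_equiv σ
    have h2 := congrArg Finset.val this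
    rw [Finset.map_val] at h2
    exact h2
  have := hperm.eq_of_pairwise (le := (· ≥ ·)) (fun a b _ _ h1 h2 => le_antisymm h2 h1) ?_ ?_
  · exact congrFun (List.ofFn_injective this) i
  · rw [List.pairwise_ofFn]
    intro i j hij
    have h1 := hm hij.le
    have h2 := good_lt S p h (σ i)
    have h3 := good_lt S p h (σ j)
    simp only [Function.comp, key] at h1
    split_ifs at h1 <;> show p.1 (σ j) ≤ p.1 (σ i) <;> omega
  · rw [List.pairwise_ofFn]
    intro i j hij
    exact bot_anti S hij.le

lemma step {m : ℕ} (S : Finset ℕ) (p : (Fin (m+1) → ℕ) × Finset (Fin (m+1))) (h : Good S p)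
    (σ : Equiv.Perm (Fin (m+1))) (hσ : σ = Tuple.sort (key (S.card + 1) p)) (i : Fin m) (hi : (i:ℕ) + 1 ∉ S) : (σ i.castSucc ∈ p.2 ∧ σ i.succ ∉ p.2) ∨
    ((σ i.castSucc ∈ p.2 ↔ σ i.succ ∈ p.2) ∧ σ i.castSucc < σ i.succ) := by
  obtain ⟨hm, hl⟩ := Tuple.eq_sort_iff.1 hσ
  have hb := bot_step S i
  rw [if_neg hi] at hb
  have e1 := w_eq S p h σ hσ i.castSucc
  have e2 := w_eq S p h σ hσ i.succ
  have h1 := hm (Fin.castSucc_lt_succ (i := i)).le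
  have h2 := hl _ _ (Fin.castSucc_lt_succ (i := i))
  simp only [Function.comp, key, e1, e2, Fin.val_castSucc, Fin.val_succ] at h1 h2
  rw [hb] at h1 h2
  by_cases a : σ i.castSucc ∈ p.2 <;> by_cases b : σ i.succ ∈ p.2 <;> simp [a, b] at h1 h2 ⊢ <;> assumption

lemma up {m : ℕ} (S : Finset ℕ) (p : (Fin (m+1) → ℕ) × Finset (Fin (m+1))) (h : Good S p)
    (σ : Equiv.Perm (Fin (m+1))) (hσ : σ = Tuple.sort (key (S.card + 1) p)) (i : Fin (m+1)) : σ i ∈ p.2 → i < σ i := by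
  have base : ∀ i : Fin (m+1), (i:ℕ) ∈ insert 0 S → σ i ∈ p.2 → i < σ i := by
    intro i hi hx
    have h1 := h.2.1 _ hx
    rw [w_eq S p h σ hσ i] at h1
    by_contra hc
    rw [not_lt] at hc
    rcases hc.eq_or_lt with e | e
    · rw [e, top, if_pos hi] at h1; omega
    · have h2 := top_le S _ _ (Fin.lt_def.1 e)
      have h3 : bot S (σ i) ≤ top S (σ i) := Nat.le_add_right _ _
      rw [top, if_pos hi] at h2; omega
  induction i using Fin.induction with
  | zero => exact base 0 (by simp)
  | succ i ih =>
    intro hx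
    by_cases hi : (i:ℕ) + 1 ∈ S
    · exact base _ (by simp [hi]) hx
    · rcases step S p h σ hσ i hi with ⟨a, b⟩ | ⟨a, b⟩
      · exact absurd hx b
      · have := ih (a.2 hx)
        rw [Fin.lt_def] at *
        simp at *
        omega

lemma down {m : ℕ} (S : Finset ℕ) (p : (Fin (m+1) → ℕ) × Finset (Fin (m+1))) (h : Good S p)
    (σ : Equiv.Perm (Fin (m+1))) (hσ : σ = Tuple.sort (key (S.card + 1) p)) (i : Fin (m+1)) : σ i ∉ p.2 → σ i ≤ i := by
  have hval : ∀ i : Fin (m+1), σ i ∉ p.2 → bot S i ≤ bot S (σ i) := by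
    intro i hx
    have h1 := h.2.2 _ hx
    rwa [w_eq S p h σ hσ i] at h1
  induction i using Fin.reverseInduction with
  | last => intro _; exact Fin.le_last _
  | cast i ih =>
    intro hx
    by_cases hi : (i:ℕ) + 1 ∈ S
    · by_contra hc
      rw [not_le, Fin.lt_def] at hc
      have h1 := hval _ hx
      have h2 := bot_step S i
      rw [if_pos hi] at h2
      have h3 : bot S (σ i.castSucc) ≤ bot S (i+1) := bot_anti S (by simpa using hc)
      simp at h1
      omega
    · rcases step S p h σ hσ i hi with ⟨a, b⟩ | ⟨a, b⟩
      · exact absurd a hx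
      · have := ih (fun hy => hx (a.2 hy))
        rw [Fin.le_def] at *
        rw [Fin.lt_def] at *
        simp at *
        omega

lemma exc_iff {m : ℕ} (S : Finset ℕ) (p : (Fin (m+1) → ℕ) × Finset (Fin (m+1))) (h : Good S p)
    (σ : Equiv.Perm (Fin (m+1))) (hσ : σ = Tuple.sort (key (S.card + 1) p)) (i : Fin (m+1)) : σ i ∈ p.2 ↔ i < σ i :=
  ⟨up S p h σ hσ i, fun h1 => by
    by_contra hc
    exact absurd (down S p h σ hσ i hc) (not_le.2 h1)⟩

lemma rev_DEX {m : ℕ} (S : Finset ℕ) (p : (Fin (m+1) → ℕ) × Finset (Fin (m+1))) (h : Good S p)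
    (σ : Equiv.Perm (Fin (m+1))) (hσ : σ = Tuple.sort (key (S.card + 1) p)) : DEX σ ⊆ S := by
  rw [DEX_sub]
  intro i hi
  have := step S p h σ hσ i hi
  rwa [exc_iff S p h σ hσ, exc_iff S p h σ hσ] at this

lemma rev_fwd {m : ℕ} (S : Finset ℕ) (p : (Fin (m+1) → ℕ) × Finset (Fin (m+1))) (h : Good S p)
    (σ : Equiv.Perm (Fin (m+1))) (hσ : σ = Tuple.sort (key (S.card + 1) p)) : fwd S σ = p := by
  refine Prod.ext ?_ ?_
  · funext v
    have := w_eq S p h σ hσ (σ.symm v)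
    simp only [Equiv.apply_symm_apply] at this
    exact this.symm
  · ext v
    have := exc_iff S p h σ hσ (σ.symm v)
    simp only [Equiv.apply_symm_apply] at this
    simp [fwd, this]

lemma pexc_fwd {m : ℕ} (S : Finset ℕ) (σ : Equiv.Perm (Fin (m+1))) : pexc σ = (fwd S σ).2.card := by
  rw [pexc]
  symm
  refine Finset.card_bij (fun v _ => (σ.symm v : ℕ) + 1) ?_ ?_ ?_
  · intro v hv
    have := (σ.symm v).2
    simp only [fwd, Finset.mem_filter, Finset.mem_univ, true_and] at hv
    rw [Finset.mem_filter, Finset.mem_Icc, pval_succ]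
    simp
    omega
  · intro a _ b _ hab
    have : σ.symm a = σ.symm b := Fin.ext (by omega)
    exact σ.symm.injective this
  · intro j hj
    rw [Finset.mem_filter, Finset.mem_Icc] at hj
    obtain ⟨i, rfl⟩ : ∃ i : Fin (m+1), j = i + 1 := ⟨⟨j - 1, by omega⟩, by simp; omega⟩
    rw [pval_succ] at hj
    refine ⟨σ i, ?_, by simp⟩
    simp only [fwd, Finset.mem_filter, Finset.mem_univ, true_and, Equiv.symm_apply_apply]
    rw [Fin.lt_def]
    omega

open Classical in
lemma sum_bij_good {m : ℕ} (S : Finset ℕ) (t : ℚ) :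
    ∑ σ : Equiv.Perm (Fin (m+1)) with DEX σ ⊆ S, t ^ pexc σ =
    ∑ p ∈ Fintype.piFinset (fun _ : Fin (m+1) => range (S.card+1)) ×ˢ (Finset.univ : Finset (Fin (m+1))).powerset
      with Good S p, t ^ p.2.card := by
  refine Finset.sum_nbij' (fwd S) (fun p => Tuple.sort (key (S.card+1) p)) ?_ ?_ ?_ ?_ ?_
  · intro σ _
    rw [Finset.mem_filter]
    refine ⟨?_, fwd_good S σ⟩
    rw [Finset.mem_product, Fintype.mem_piFinset]
    exact ⟨fun v => Finset.mem_range.2 (bot_lt S _), by simp⟩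
  · intro p hp
    rw [Finset.mem_filter] at hp ⊢
    exact ⟨Finset.mem_univ _, rev_DEX S p hp.2 _ rfl⟩
  · intro σ hσ
    exact sort_fwd S σ (Finset.mem_filter.1 hσ).2
  · intro p hp
    exact rev_fwd S p (Finset.mem_filter.1 hp).2 _ rfl
  · intro σ _
    rw [pexc_fwd S σ]

end GE
namespace GE

lemma factor_eq (t : ℚ) (S : Finset ℕ) (v : ℕ) :
    (if v ∈ insert 0 S then LL t (S.card+1) (0 + bot S v) - MvPolynomial.C t * MvPolynomial.X (0 + bot S v)
      else LL t (S.card+1) (0 + bot S v)) =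
    ∑ a ∈ range (S.card+1), MvPolynomial.C ((if top S v ≤ a then t else 0) + (if a ≤ bot S v then 1 else 0)) *
      MvPolynomial.X a := by
  rw [zero_add, top]
  split_ifs with h
  · rw [LL_sub_t _ _ _ (bot_lt S v), EE]
    refine Finset.sum_congr rfl fun a _ => ?_
    congr 2
    split_ifs <;> first | omega | simp
  · rw [LL]
    refine Finset.sum_congr rfl fun a _ => ?_
    congr 2
    rw [add_comm, add_zero]

lemma single_map {m : ℕ} (f g : Fin (m+1) → ℕ) :
    (∑ v, Finsupp.single (f v) 1 = ∑ v, (Finsupp.single (g v) 1 : ℕ →₀ ℕ)) ↔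
    Finset.univ.val.map f = Finset.univ.val.map g := by
  have : ∀ f : Fin (m+1) → ℕ, Finsupp.toMultiset (∑ v, Finsupp.single (f v) 1) = Finset.univ.val.map f := by
    intro f
    rw [map_sum]
    simp only [Finsupp.toMultiset_single, one_smul]
    have := Multiset.sum_map_singleton (Finset.univ.val.map f)
    rw [Multiset.map_map] at this
    exact this
  rw [← this f, ← this g]
  exact ((Multiset.toFinsupp (α := ℕ)).symm.injective.eq_iff).symm

open Classical in
lemma conv_exc {m : ℕ} (t : ℚ) (S : Finset ℕ) (hS : S ⊆ Icc 1 m) :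
    conv (PP t) (ee t) (comp (m+1) S) = ∑ σ : Equiv.Perm (Fin (m+1)) with DEX σ ⊆ S, t ^ pexc σ := by
  obtain ⟨h1, h2, h3, h4⟩ := comp_facts S (m+1) (by omega) (fun x hx => by
    have := Finset.mem_Icc.1 (hS hx); omega)
  rw [conv_PP _ _ _ h2]
  have h4 := h4 (LL t (S.card+1)) (fun i => LL t (S.card+1) i - MvPolynomial.C t * MvPolynomial.X i) 0
  simp only [factor_eq] at h4
  have e : ∏ i ∈ range (comp (m+1) S).length, (LL t (comp (m+1) S).length i - MvPolynomial.C t * MvPolynomial.X i)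
    = ∏ i ∈ range (comp (m+1) S).length, (LL t (S.card+1) (0+i) - MvPolynomial.C t * MvPolynomial.X (0+i)) := by
    simp [h1]
  rw [e, h1] at *
  rw [h4, h3, Finset.prod_range, Finset.sum_range, Finset.prod_univ_sum, MvPolynomial.coeff_sum, sum_bij_good,
    Finset.sum_filter, Finset.sum_product]
  refine Finset.sum_congr rfl fun w _ => ?_
  rw [Finset.prod_mul_distrib, ← map_prod, MvPolynomial.coeff_C_mul]
  have e2 : ∏ v : Fin (m+1), (MvPolynomial.X (w v) : MvPolynomial ℕ ℚ) =
      MvPolynomial.monomial (∑ v, Finsupp.single (w v) 1) 1 := by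
    rw [MvPolynomial.monomial_sum_one]; rfl
  rw [e2, MvPolynomial.coeff_monomial, Finset.prod_add, Finset.sum_mul]
  refine Finset.sum_congr rfl fun X _ => ?_
  have e3 := single_map w (fun v : Fin (m+1) => bot S v)
  simp only [zero_add]
  have e4 : ∏ i ∈ X, (if top S i ≤ w i then t else 0) = if ∀ v ∈ X, top S v ≤ w v then t ^ X.card else 0 := by
    rw [Finset.prod_ite_zero]; simp
  have e5 : ∏ i ∈ univ \ X, (if w i ≤ bot S i then (1:ℚ) else 0) = if ∀ v, v ∉ X → w v ≤ bot S v then 1 else 0 := by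
    rw [Finset.prod_ite_zero]; simp
  rw [e4, e5]
  have e6 : Good S (w, X) ↔ (∑ v, Finsupp.single (w v) 1 = ∑ v : Fin (m+1), (Finsupp.single (bot S v) 1 : ℕ →₀ ℕ)) ∧
    (∀ v ∈ X, top S v ≤ w v) ∧ (∀ v, v ∉ X → w v ≤ bot S v) := by
    rw [e3]; rfl
  simp only [e6]
  split_ifs with a b c <;> first | simp; done | (exfalso; tauto)

noncomputable def Aev (q t : ℚ) (n : ℕ) : ℚ := ∑ σ : Equiv.Perm (Fin n), q ^ (pmaj σ - pexc σ) * t ^ pexc σ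

lemma Aev_Phi (q t : ℚ) (hq : ∀ n : ℕ, 1 - q^(n+1) ≠ 0) (n : ℕ) :
    poch q n * Phi q n (conv (PP t) (ee t)) = Aev q t n := by
  cases n with
  | zero => simp [Phi_zero, Aev, poch, conv, PP, ee, mu, prd, pmaj, pexc, pDES]
  | succ m =>
    rw [Phi_kap q hq, Aev]
    have : ∀ σ : Equiv.Perm (Fin (m+1)), q ^ (pmaj σ - pexc σ) * t ^ pexc σ =
        ∑ S ∈ (Icc 1 m).powerset, if DEX σ ⊆ S then kap q (Icc 1 m) S * t ^ pexc σ else 0 := by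
      intro σ
      rw [maj_eq, Nat.add_sub_cancel, ← kap_super q (Icc 1 m) (DEX σ) (Finset.filter_subset _ _),
        Finset.sum_mul, Finset.sum_filter]
    simp only [this]
    rw [Finset.sum_comm]
    refine Finset.sum_congr rfl fun S hS => ?_
    rw [conv_exc t S (Finset.mem_powerset.1 hS), Finset.mul_sum, Finset.sum_filter]

lemma Aev_rec (q t : ℚ) (hq : ∀ n : ℕ, 1 - q^(n+1) ≠ 0) (n : ℕ) :
    ∑ x ∈ antidiagonal n, Aev q t x.1 / poch q x.1 * ((t^x.2 - t)/poch q x.2) = (1-t)/poch q n := by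
  rw [← Phi_rec q t hq n]
  refine Finset.sum_congr rfl fun x _ => ?_
  rw [← Aev_Phi q t hq, mul_div_cancel_left₀ _ (poch_ne q hq _)]

end GE
namespace GE

lemma sum_Icc_fin {M : Type*} [AddCommMonoid M] (n : ℕ) (f : ℕ → M) :
    ∑ i ∈ Icc 1 n, f i = ∑ i : Fin n, f (i + 1) := by
  induction n with
  | zero => simp
  | succ n ih =>
    rw [Icc_succ, Finset.sum_insert (by simp), ih, Fin.sum_univ_castSucc, add_comm]
    simp

lemma pinv_eq {n : ℕ} (σ : Equiv.Perm (Fin n)) :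
    pinv σ = ∑ i : Fin n, ∑ j : Fin n, if i < j ∧ σ j < σ i then 1 else 0 := by
  rw [pinv, Finset.card_filter, Finset.sum_product, sum_Icc_fin]
  refine Finset.sum_congr rfl fun i _ => ?_
  rw [sum_Icc_fin]
  refine Finset.sum_congr rfl fun j _ => ?_
  simp only [pval_succ, Fin.lt_def, add_lt_add_iff_right]

def extf {n : ℕ} (v : Fin (n+1)) (π : Equiv.Perm (Fin n)) : Fin (n+1) → Fin (n+1) :=
  fun i => Fin.lastCases (motive := fun _ => Fin (n+1)) v (fun i => v.succAbove (π i)) i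

lemma extf_inj {n : ℕ} (v : Fin (n+1)) (π : Equiv.Perm (Fin n)) : Function.Injective (extf v π) := by
  intro i j
  induction i using Fin.lastCases with
  | last =>
    induction j using Fin.lastCases with
    | last => simp
    | cast j =>
      intro h
      simp only [extf, Fin.lastCases_last, Fin.lastCases_castSucc] at h
      exact absurd h.symm (Fin.succAbove_ne _ _)
  | cast i =>
    induction j using Fin.lastCases with
    | last =>
      intro h
      simp only [extf, Fin.lastCases_last, Fin.lastCases_castSucc] at h
      exact absurd h (Fin.succAbove_ne _ _)
    | cast j =>
      intro h
      simp only [extf, Fin.lastCases_castSucc] at h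
      rw [π.injective (Fin.succAbove_right_injective h)]

noncomputable def ext {n : ℕ} (v : Fin (n+1)) (π : Equiv.Perm (Fin n)) : Equiv.Perm (Fin (n+1)) :=
  Equiv.ofBijective (extf v π) (Finite.injective_iff_bijective.1 (extf_inj v π))

lemma ext_last {n : ℕ} (v : Fin (n+1)) (π : Equiv.Perm (Fin n)) : ext v π (Fin.last n) = v := by
  simp [ext, extf]

lemma ext_cast {n : ℕ} (v : Fin (n+1)) (π : Equiv.Perm (Fin n)) (i : Fin n) :
    ext v π i.castSucc = v.succAbove (π i) := by
  simp [ext, extf]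

lemma ext_bij (n : ℕ) : Function.Bijective (fun p : Fin (n+1) × Equiv.Perm (Fin n) => ext p.1 p.2) := by
  rw [Fintype.bijective_iff_injective_and_card]
  constructor
  · rintro ⟨v, π⟩ ⟨v', π'⟩ h
    simp only at h
    have h1 : v = v' := by rw [← ext_last v π, h, ext_last]
    subst h1
    have : π = π' := by
      ext i
      have := ext_cast v π i
      rw [h, ext_cast] at this
      rw [Fin.succAbove_right_injective this]
    rw [this]
  · simp [Fintype.card_perm, Nat.factorial_succ]

lemma sum_ext (n : ℕ) (f : Equiv.Perm (Fin (n+1)) → ℚ) :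
    ∑ σ, f σ = ∑ v : Fin (n+1), ∑ π : Equiv.Perm (Fin n), f (ext v π) := by
  rw [← (ext_bij n).sum_comp f, Fintype.sum_prod_type]

lemma lt_succAbove {n : ℕ} (v : Fin (n+1)) (u : Fin n) : v < v.succAbove u ↔ (v:ℕ) ≤ u := by
  rw [Fin.succAbove]
  split_ifs with h
  · rw [Fin.lt_def] at *; simp at *; omega
  · rw [Fin.lt_def] at *; simp at *; try omega

lemma pinv_ext {n : ℕ} (v : Fin (n+1)) (π : Equiv.Perm (Fin n)) :
    pinv (ext v π) = pinv π + (n - v) := by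
  rw [pinv_eq, pinv_eq, Fin.sum_univ_castSucc]
  simp only [Fin.sum_univ_castSucc, ext_last, ext_cast, Fin.castSucc_lt_castSucc_iff, Fin.castSucc_lt_last, true_and,
    Fin.succAbove_lt_succAbove_iff, lt_irrefl, false_and, if_false, add_zero, lt_succAbove]
  have e0 : ∀ i : Fin n, ¬ (Fin.last n < i.castSucc) := fun i => not_lt.2 (Fin.le_last _)
  simp only [e0, false_and, if_false, Finset.sum_const_zero, add_zero, Finset.sum_add_distrib]
  congr 1
  rw [Equiv.sum_comp π (fun u : Fin n => if (v:ℕ) ≤ u then 1 else 0), ← Finset.sum_range (fun u => if (v:ℕ) ≤ u then 1 else 0),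
    ← Finset.card_filter]
  have : (range n).filter (fun u => (v:ℕ) ≤ u) = Ico (v:ℕ) n := by
    ext x; simp; omega
  rw [this, Nat.card_Ico]

lemma mem_pDES_lt {n : ℕ} (v : Fin (n+1)) (π : Equiv.Perm (Fin n)) (i : ℕ) (h : i ∈ Icc 1 (n-1)) :
    i ∈ pDES (ext v π) ↔ i ∈ pDES π := by
  rw [Finset.mem_Icc] at h
  obtain ⟨j, rfl⟩ : ∃ j, i = j + 1 := ⟨i - 1, by omega⟩
  have a : j < n := by omega
  have b : j + 1 < n := by omega
  have e1 := pval_succ π ⟨j, a⟩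
  have e2 := pval_succ π ⟨j+1, b⟩
  have e3 := pval_succ (ext v π) (Fin.castSucc ⟨j, a⟩)
  have e4 := pval_succ (ext v π) (Fin.castSucc ⟨j+1, b⟩)
  rw [ext_cast] at e3 e4
  simp only [Fin.val_castSucc] at e1 e2 e3 e4
  rw [pDES, pDES, Finset.mem_filter, Finset.mem_filter, e1, e2, e3, e4]
  simp only [Finset.mem_Icc, add_lt_add_iff_right, ← Fin.lt_def, Fin.succAbove_lt_succAbove_iff]
  have : (1 ≤ j + 1 ∧ j + 1 ≤ n + 1 - 1) ∧ (1 ≤ j+1 ∧ j + 1 ≤ n - 1) := by omega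
  tauto

lemma mem_pDES_last {n : ℕ} (v : Fin (n+2)) (π : Equiv.Perm (Fin (n+1))) :
    n + 1 ∈ pDES (ext v π) ↔ (v:ℕ) ≤ π (Fin.last n) := by
  have e3 := pval_succ (ext v π) (Fin.castSucc (Fin.last n))
  have e4 := pval_succ (ext v π) (Fin.last (n+1))
  rw [ext_cast] at e3
  rw [ext_last] at e4
  simp only [Fin.val_castSucc, Fin.val_last] at e3 e4
  rw [pDES, Finset.mem_filter, e3, e4, add_lt_add_iff_right, ← Fin.lt_def, lt_succAbove]
  simp

lemma pDES_sub {n : ℕ} (π : Equiv.Perm (Fin n)) : pDES π ⊆ Icc 1 (n-1) := Finset.filter_subset _ _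

lemma pDES_ext_base {n : ℕ} (v : Fin (n+1)) (π : Equiv.Perm (Fin n)) :
    pDES (ext v π) ∩ Icc 1 (n-1) = pDES π := by
  ext i
  rw [Finset.mem_inter]
  constructor
  · rintro ⟨h1, h2⟩
    exact (mem_pDES_lt v π i h2).1 h1
  · intro h
    have := pDES_sub π h
    exact ⟨(mem_pDES_lt v π i this).2 h, this⟩

lemma pDES_ext_succ {n : ℕ} (v : Fin (n+2)) (π : Equiv.Perm (Fin (n+1))) :
    pDES (ext v π) = if (v:ℕ) ≤ π (Fin.last n) then insert (n+1) (pDES π) else pDES π := by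
  have h := pDES_ext_base v π
  have h2 := mem_pDES_last v π
  have h3 := pDES_sub (ext v π)
  have h4 : pDES (ext v π) = (if n + 1 ∈ pDES (ext v π) then insert (n+1) (pDES π) else pDES π) := by
    conv_rhs => rw [← h]
    ext i
    have := @h3 i
    simp only [Finset.mem_Icc] at this
    split_ifs with hc
    · simp only [Finset.mem_insert, Finset.mem_inter, Finset.mem_Icc]
      constructor
      · intro hi
        have := this hi
        by_cases e : i = n + 1
        · exact Or.inl e
        · exact Or.inr ⟨hi, by omega⟩
      · rintro (rfl | hi)
        · exact hc
        · exact hi.1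
    · simp only [Finset.mem_inter, Finset.mem_Icc]
      constructor
      · intro hi
        have h5 := this hi
        refine ⟨hi, ?_⟩
        have : i ≠ n + 1 := by rintro rfl; exact hc hi
        omega
      · exact fun hi => hi.1
  rw [h4]
  simp only [h2]

def qb (q : ℚ) : ℕ → ℕ → ℚ
  | _, 0 => 1
  | 0, _+1 => 0
  | v+1, j+1 => q^(j+1) * qb q v (j+1) + qb q v j

lemma qb_zero (q : ℚ) (v : ℕ) : qb q v 0 = 1 := by cases v <;> rfl

lemma qb_lt (q : ℚ) (v : ℕ) : ∀ j, v < j → qb q v j = 0 := by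
  induction v with
  | zero => intro j hj; obtain ⟨i, rfl⟩ : ∃ i, j = i + 1 := ⟨j - 1, by omega⟩; rfl
  | succ v ih =>
    intro j hj
    obtain ⟨i, rfl⟩ : ∃ i, j = i + 1 := ⟨j - 1, by omega⟩
    rw [qb, ih _ (by omega), ih _ (by omega)]; ring

lemma qb_hockey (q : ℚ) (j v : ℕ) : qb q v (j+1) = ∑ u ∈ range v, q^((j+1)*(v-1-u)) * qb q u j := by
  induction v with
  | zero => rfl
  | succ v ih =>
    rw [qb, ih, Finset.sum_range_succ, Finset.mul_sum]
    congr 1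
    · refine Finset.sum_congr rfl fun u hu => ?_
      have hu := Finset.mem_range.1 hu
      rw [← mul_assoc, ← pow_add]
      congr 2
      obtain ⟨d, rfl⟩ : ∃ d, v = u + 1 + d := ⟨v - u - 1, by omega⟩
      rw [show u + 1 + d - 1 - u = d by omega, show u + 1 + d + 1 - 1 - u = d + 1 by omega]
      ring
    · simp

lemma qb_poch (q : ℚ) (s : ℕ) : ∀ k j, k + j = s → qb q (k+j) j * (poch q j * poch q k) = poch q (k+j) := by
  induction s with
  | zero =>
    intro k j h
    obtain ⟨rfl, rfl⟩ : k = 0 ∧ j = 0 := by omega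
    simp [qb, poch]
  | succ s ih =>
    intro k j h
    cases j with
    | zero => simp [qb_zero, poch]
    | succ j =>
      cases k with
      | zero =>
        have := ih 0 j (by omega)
        simp only [zero_add] at this ⊢
        rw [qb, qb_lt _ _ _ (by omega), poch_succ]
        linear_combination (1 - q^(j+1)) * this
      | succ k =>
        have h1 := ih k (j+1) (by omega)
        have h2 := ih (k+1) j (by omega)
        have e : k + 1 + (j + 1) = (k + (j + 1)) + 1 := by ring
        have e2 : k + 1 + j = k + (j+1) := by ring
        rw [e2] at h2
        rw [e, qb, poch_succ q (k + (j+1))]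
        have e3 : qb q (k + (j+1)) (j+1) * (poch q (j+1) * poch q (k+1)) = poch q (k+(j+1)) * (1 - q^(k+1)) := by
          rw [← h1, poch_succ q k]; ring
        have e4 : qb q (k + (j+1)) j * (poch q (j+1) * poch q (k+1)) = poch q (k+(j+1)) * (1 - q^(j+1)) := by
          rw [← h2, poch_succ q j]; ring
        rw [add_mul, mul_assoc, e3, e4]
        ring

def trm (q : ℚ) (f : Finset ℕ → ℚ) (k : ℕ) {n : ℕ} (π : Equiv.Perm (Fin n)) : ℚ :=
  if pDES π ⊆ Icc 1 k then f (pDES π ∩ Icc 1 (k-1)) * q ^ pinv π else 0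

lemma trm_ext (q : ℚ) (f : Finset ℕ → ℚ) (k j : ℕ) (v : Fin (k+j+2)) (π : Equiv.Perm (Fin (k+j+1))) :
    trm q f k (ext v π) = q^(k+j+1-v) * if (v:ℕ) ≤ π (Fin.last (k+j)) then 0 else trm q f k π := by
  rw [trm, trm, pinv_ext, pDES_ext_succ]
  by_cases h : (v:ℕ) ≤ π (Fin.last (k+j))
  · rw [if_pos h, if_pos h, if_neg]
    · ring
    · intro hc
      have := hc (Finset.mem_insert_self _ _)
      rw [Finset.mem_Icc] at this
      omega
  · rw [if_neg h, if_neg h]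
    split_ifs
    · rw [pow_add]; ring
    · ring

lemma trm_sum (q : ℚ) (f : Finset ℕ → ℚ) (k : ℕ) (j : ℕ) : ∀ v : Fin (k+j+1),
    ∑ π : Equiv.Perm (Fin (k+j)), trm q f k (ext v π) =
      q^((j+1)*(k+j-v)) * qb q v j * ∑ π : Equiv.Perm (Fin k), f (pDES π) * q ^ pinv π := by
  induction j with
  | zero =>
    intro v
    rw [qb_zero, mul_one, Finset.mul_sum]
    refine Finset.sum_congr rfl fun π _ => ?_
    rw [trm, if_pos (by simpa using pDES_sub (ext v π))]
    have := pDES_ext_base v π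
    simp only [add_zero, zero_add, one_mul] at this ⊢
    rw [this, pinv_ext, pow_add]; ring_nf
  | succ j ih =>
    intro v
    have key : ∀ v : Fin (k+j+2), ∑ π : Equiv.Perm (Fin (k+j+1)), trm q f k (ext v π) =
      q^((j+1+1)*(k+j+1-v)) * qb q v (j+1) * ∑ π : Equiv.Perm (Fin k), f (pDES π) * q ^ pinv π := by
      intro v
      rw [sum_ext (k+j)]
      simp only [trm_ext, ext_last]
      have h1 : ∀ u : Fin (k+j+1), ∑ π : Equiv.Perm (Fin (k+j)), q^(k+j+1-v) * (if (v:ℕ) ≤ u then 0 else trm q f k (ext u π)) =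
        if (v:ℕ) ≤ u then 0 else q^(k+j+1-v) * (q^((j+1)*(k+j-u)) * qb q u j * ∑ π : Equiv.Perm (Fin k), f (pDES π) * q ^ pinv π) := by
        intro u
        split_ifs with h
        · simp
        · rw [← Finset.mul_sum, ih u]
      rw [Finset.sum_congr rfl fun u _ => h1 u]
      generalize ∑ π : Equiv.Perm (Fin k), f (pDES π) * q ^ pinv π = F
      rw [← Finset.sum_range (fun u => if (v:ℕ) ≤ u then 0 else q^(k+j+1-v) * (q^((j+1)*(k+j-u)) * qb q u j * F)),
        qb_hockey, Finset.mul_sum, Finset.sum_mul]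
      have hv := v.2
      rw [← Finset.sum_subset (s₁ := range v) (s₂ := range (k+j+1))]
      · refine Finset.sum_congr rfl fun u hu => ?_
        have hu := Finset.mem_range.1 hu
        rw [if_neg (by omega)]
        have e : q^((j+1+1)*(k+j+1-v)) * q^((j+1)*(v-1-u)) = q^(k+j+1-v) * q^((j+1)*(k+j-u)) := by
          rw [← pow_add, ← pow_add]
          congr 1
          obtain ⟨d, hd⟩ : ∃ d, (v:ℕ) = u + 1 + d := ⟨v - u - 1, by omega⟩
          obtain ⟨c, hc⟩ : ∃ c, k + j + 1 = v + c := ⟨k + j + 1 - v, by omega⟩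
          rw [show k + j + 1 - (v:ℕ) = c by omega, show (v:ℕ) - 1 - u = d by omega, show k + j - u = c + d by omega]
          ring
        linear_combination (-(qb q u j * F)) * e
      · intro x hx
        simp at *; omega
      · intro x _ hx
        simp at hx
        rw [if_pos hx]
    exact key v

lemma qb_sum (q : ℚ) (f : Finset ℕ → ℚ) (k j : ℕ) :
    ∑ π : Equiv.Perm (Fin (k+j+1)), trm q f k π =
      qb q (k+j+1) (j+1) * ∑ π : Equiv.Perm (Fin k), f (pDES π) * q ^ pinv π := by
  rw [sum_ext, Finset.sum_congr rfl fun v _ => trm_sum q f k j v]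
  generalize ∑ π : Equiv.Perm (Fin k), f (pDES π) * q ^ pinv π = F
  rw [← Finset.sum_mul, ← Finset.sum_range (fun v => q^((j+1)*(k+j-v)) * qb q v j), qb_hockey]
  simp

end GE
namespace GE

def wt (t : ℚ) (n : ℕ) (S : Finset ℕ) : ℚ :=
  if S ⊆ Icc 1 (n-2) ∧ NoTwoConsec S then t ^ S.card * (1+t)^(n-1-2*S.card) else 0

lemma geo (t : ℚ) (L : ℕ) : ∑ i ∈ range L, (t^(L-i) - t) * (1+t)^i = t*(1+t)^L - t^(L+1) - (1+t)^L + 1 := by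
  induction L with
  | zero => simp
  | succ L ih =>
    rw [Finset.sum_range_succ']
    have : ∀ L : ℕ, ∑ i ∈ range L, (t^(L-i)) * (1+t)^i = t*(1+t)^L - t^(L+1) := by
      intro L
      induction L with
      | zero => simp
      | succ L ih =>
        rw [Finset.sum_range_succ]
        have e : ∑ i ∈ range L, t^(L+1-i) * (1+t)^i = t * ∑ i ∈ range L, t^(L-i) * (1+t)^i := by
          rw [Finset.mul_sum]
          refine Finset.sum_congr rfl fun i hi => ?_
          have := Finset.mem_range.1 hi
          rw [show L + 1 - i = (L - i) + 1 by omega, pow_succ]; ring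
        rw [e, ih, show L + 1 - L = 1 by omega]
        ring
    have e2 : ∑ i ∈ range L, (t^(L+1-(i+1)) - t) * (1+t)^(i+1) = (1+t) * ∑ i ∈ range L, (t^(L-i) - t) * (1+t)^i := by
      rw [Finset.mul_sum]
      refine Finset.sum_congr rfl fun i hi => ?_
      rw [show L + 1 - (i+1) = L - i by omega, pow_succ]; ring
    rw [e2, ih]
    simp only [Nat.sub_zero]
    ring

lemma ntc_card (M : ℕ) : ∀ S : Finset ℕ, S ⊆ Icc 1 M → NoTwoConsec S → 2 * S.card ≤ M + 1 := by
  intro S hS hn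
  have hd : Disjoint S (S.map ⟨(· + 1), fun a b h => by simpa using h⟩) := by
    rw [Finset.disjoint_left]
    intro x hx hx'
    obtain ⟨y, hy, rfl⟩ := Finset.mem_map.1 hx'
    exact hn y hy hx
  have h2 : S ∪ (S.map ⟨(· + 1), fun a b h => by simpa using h⟩) ⊆ Icc 1 (M+1) := by
    intro x hx
    rcases Finset.mem_union.1 hx with h | h
    · have := Finset.mem_Icc.1 (hS h); rw [Finset.mem_Icc]; omega
    · obtain ⟨y, hy, rfl⟩ := Finset.mem_map.1 h
      have := Finset.mem_Icc.1 (hS hy); rw [Finset.mem_Icc]; show 1 ≤ y + 1 ∧ y + 1 ≤ M + 1; omega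
  have h3 := Finset.card_le_card h2
  rw [Finset.card_union_of_disjoint hd, Finset.card_map, Nat.card_Icc] at h3
  omega

def gg (t : ℚ) (k : ℕ) (S : Finset ℕ) : ℚ := if S ⊆ Icc 1 k then wt t k (S ∩ Icc 1 (k-1)) else 0

lemma set_id (t : ℚ) (n : ℕ) (hn : 1 ≤ n) (S : Finset ℕ) (hS : S ⊆ Icc 1 (n-1)) :
    ∑ k ∈ range n, (t^(n-k) - t) * gg t k S + (1-t) * wt t n S = if S = ∅ then 1 - t else 0 := by
  rcases S.eq_empty_or_nonempty with rfl | hne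
  · rw [if_pos rfl]
    obtain ⟨L, rfl⟩ : ∃ L, n = L + 1 := ⟨n - 1, by omega⟩
    have e0 : NoTwoConsec ∅ := fun i hi => by simp at hi
    have e1 : ∀ k, gg t k ∅ = (1+t)^(k-1) := by intro k; simp [gg, wt, e0]
    have e2 : wt t (L+1) ∅ = (1+t)^L := by simp [wt, e0]
    simp only [e1, e2]
    rw [Finset.sum_range_succ']
    have := geo t L
    have e3 : ∀ i, L + 1 - (i + 1) = L - i := by intro i; omega
    simp only [Nat.add_sub_cancel, e3, this]
    simp
    ring
  · rw [if_neg hne.ne_empty]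
    obtain ⟨M, hM⟩ : ∃ M, M = S.max' hne := ⟨_, rfl⟩
    have hMS : M ∈ S := hM ▸ S.max'_mem hne
    have hle : ∀ x ∈ S, x ≤ M := fun x hx => hM ▸ S.le_max' x hx
    have hMn := Finset.mem_Icc.1 (hS hMS)
    have hSM : S ⊆ Icc 1 M := fun x hx => by
      have := Finset.mem_Icc.1 (hS hx)
      exact Finset.mem_Icc.2 ⟨this.1, hle x hx⟩
    have g1 : ∀ k < M, gg t k S = 0 := by
      intro k hk
      rw [gg, if_neg]
      intro h
      have := Finset.mem_Icc.1 (h hMS); omega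
    have g2 : ∀ k, M < k → gg t k S = wt t k S := by
      intro k hk
      rw [gg, if_pos, Finset.inter_eq_left.2]
      · exact hSM.trans (Finset.Icc_subset_Icc_right (by omega))
      · exact hSM.trans (Finset.Icc_subset_Icc_right (by omega))
    have g3 : gg t M S = wt t M (S.erase M) := by
      rw [gg, if_pos hSM]
      congr 1
      ext x
      simp only [Finset.mem_inter, Finset.mem_Icc, Finset.mem_erase]
      constructor
      · rintro ⟨h1, h2⟩; exact ⟨by omega, h1⟩
      · rintro ⟨h1, h2⟩
        have := Finset.mem_Icc.1 (hSM h2)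
        exact ⟨h2, by omega⟩
    have w1 : wt t (M+1) S = 0 := by
      rw [wt, if_neg]
      rintro ⟨h, _⟩
      have := Finset.mem_Icc.1 (h hMS); omega
    have hcond : (S.erase M ⊆ Icc 1 (M-2) ∧ NoTwoConsec (S.erase M)) ↔ NoTwoConsec S := by
      constructor
      · rintro ⟨h1, h2⟩ i hi hi'
        have a := hle _ hi'
        have hiE : i ∈ S.erase M := Finset.mem_erase.2 ⟨by omega, hi⟩
        by_cases e : i + 1 = M
        · have := Finset.mem_Icc.1 (h1 hiE); omega
        · exact h2 i hiE (Finset.mem_erase.2 ⟨e, hi'⟩)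
      · intro h
        refine ⟨?_, ?_⟩
        · intro x hx
          obtain ⟨h1, h2⟩ := Finset.mem_erase.1 hx
          have h3 := Finset.mem_Icc.1 (hSM h2)
          have : x + 1 ≠ M := by rintro rfl; exact h x h2 hMS
          rw [Finset.mem_Icc]; omega
        · intro i hi hi'
          exact h i (Finset.mem_of_mem_erase hi) (Finset.mem_of_mem_erase hi')
    by_cases hN : NoTwoConsec S
    · have hc := ntc_card M S hSM hN
      have hc1 : 1 ≤ S.card := hne.card_pos
      obtain ⟨c, hcc⟩ : ∃ c, S.card = c + 1 := ⟨S.card - 1, by omega⟩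
      obtain ⟨e, he⟩ : ∃ e, M = 2 * c + 1 + e := ⟨M - 2*c - 1, by omega⟩
      have v1 : wt t M (S.erase M) = t^c * (1+t)^e := by
        rw [wt, if_pos (hcond.2 hN), Finset.card_erase_of_mem hMS, hcc]
        congr 2; omega
      have v2 : ∀ i, wt t (M+2+i) S = t^(c+1) * (1+t)^(e+i) := by
        intro i
        rw [wt, if_pos ⟨hSM.trans (Finset.Icc_subset_Icc_right (by omega)), hN⟩, hcc]
        congr 2; omega
      obtain ⟨d, rfl⟩ : ∃ d, n = M + (1 + d) := ⟨n - M - 1, by omega⟩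
      rw [Finset.sum_range_add, Finset.sum_eq_zero (fun k hk => by rw [g1 k (Finset.mem_range.1 hk), mul_zero]),
        zero_add, Finset.sum_range_add]
      simp only [Finset.range_one, Finset.sum_singleton, add_zero]
      rw [g3, v1]
      cases d with
      | zero =>
        simp only [add_zero, w1]
        simp
      | succ L =>
        rw [Finset.sum_range_succ', g2 (M + (1 + 0)) (by omega)]
        simp only [add_zero, w1]
        have e1 : ∀ i ∈ range L, (t^(M + (1 + (L+1)) - (M + (1 + (i+1)))) - t) * gg t (M + (1 + (i+1))) S =
            t^(c+1) * (1+t)^e * ((t^(L-i) - t) * (1+t)^i) := by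
          intro i hi
          rw [g2 _ (by omega), show M + (1 + (i+1)) = M + 2 + i by ring, v2, show M + (1 + (L+1)) - (M + 2 + i) = L - i by omega]
          ring
        rw [Finset.sum_congr rfl e1, ← Finset.mul_sum, geo, show M + (1 + (L+1)) = M + 2 + L by ring, v2,
          show M + 2 + L - M = L + 2 by omega]
        ring
    · have z1 : ∀ k, wt t k S = 0 := by
        intro k
        rw [wt, if_neg (fun h => hN h.2)]
      have z2 : gg t M S = 0 := by
        rw [g3, wt, if_neg (fun h => hN (hcond.1 h))]
      have z : ∀ k, gg t k S = 0 := by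
        intro k
        rcases lt_trichotomy k M with h | h | h
        · exact g1 k h
        · rw [h, z2]
        · rw [g2 k h, z1]
      simp [z, z1]

noncomputable def Bev (q t : ℚ) (n : ℕ) : ℚ := ∑ π : Equiv.Perm (Fin n), wt t n (pDES π) * q ^ pinv π

lemma Bev_zero (q t : ℚ) : Bev q t 0 = 1 := by
  have e0 : NoTwoConsec ∅ := fun i hi => by simp at hi
  simp [Bev, wt, pDES, pinv, e0]

lemma qb_self (q : ℚ) (n : ℕ) : qb q n n = 1 := by
  induction n with
  | zero => rfl
  | succ n ih => rw [qb, ih, qb_lt _ _ _ (by omega)]; ring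

lemma sum_empty (q c : ℚ) (n : ℕ) :
    ∑ π : Equiv.Perm (Fin (n+1)), (if pDES π = ∅ then c else 0) * q ^ pinv π = c := by
  have := qb_sum q (fun _ => c) 0 n
  rw [zero_add, qb_self] at this
  have h2 : ∑ π : Equiv.Perm (Fin 0), c * q ^ pinv π = c := by simp [pinv]
  rw [h2, one_mul] at this
  conv_rhs => rw [← this]
  refine Finset.sum_congr rfl fun π _ => ?_
  rw [trm]
  simp only [show Icc 1 0 = (∅ : Finset ℕ) by rfl, Finset.subset_empty]
  split_ifs <;> simp

lemma Bev_rec (q t : ℚ) (hq : ∀ n : ℕ, 1 - q^(n+1) ≠ 0) (n : ℕ) :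
    ∑ x ∈ antidiagonal n, Bev q t x.1 / poch q x.1 * ((t^x.2 - t)/poch q x.2) = (1-t)/poch q n := by
  cases n with
  | zero => simp [Bev_zero, poch]
  | succ n =>
    rw [eq_div_iff (poch_ne q hq _), Finset.Nat.sum_antidiagonal_eq_sum_range_succ
      (fun k j => Bev q t k / poch q k * ((t^j - t)/poch q j)), Finset.sum_mul, Nat.succ_eq_add_one, Finset.sum_range_succ]
    have e1 : ∀ k ∈ range (n+1), Bev q t k / poch q k * ((t^(n+1-k) - t)/poch q (n+1-k)) * poch q (n+1) =
        ∑ π : Equiv.Perm (Fin (n+1)), (t^(n+1-k) - t) * gg t k (pDES π) * q ^ pinv π := by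
      intro k hk
      have hk := Finset.mem_range.1 hk
      obtain ⟨j, rfl⟩ : ∃ j, n = k + j := ⟨n - k, by omega⟩
      have h1 := qb_poch q _ k (j+1) rfl
      have h2 := qb_sum q (wt t k) k j
      rw [show k + j + 1 - k = j + 1 by omega]
      rw [show k + (j+1) = k + j + 1 by ring] at h1
      rw [← h1]
      have h3 : ∑ π : Equiv.Perm (Fin (k+j+1)), (t^(j+1) - t) * gg t k (pDES π) * q ^ pinv π =
         (t^(j+1) - t) * ∑ π : Equiv.Perm (Fin (k+j+1)), trm q (wt t k) k π := by
        rw [Finset.mul_sum]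
        refine Finset.sum_congr rfl fun π _ => ?_
        rw [gg, trm]
        split_ifs <;> ring
      rw [h3, h2, ← Bev]
      have p1 := poch_ne q hq k
      have p2 := poch_ne q hq (j+1)
      field_simp
    rw [Finset.sum_congr rfl e1, Finset.sum_comm]
    have e2 : Bev q t (n+1) / poch q (n+1) * ((t^(n+1-(n+1)) - t)/poch q (n+1-(n+1))) * poch q (n+1) =
        ∑ π : Equiv.Perm (Fin (n+1)), (1 - t) * wt t (n+1) (pDES π) * q ^ pinv π := by
      have p1 := poch_ne q hq (n+1)
      rw [Nat.sub_self, pow_zero, show poch q 0 = 1 by simp [poch], Bev, div_one, mul_right_comm, div_mul_cancel₀ _ p1,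
        Finset.sum_mul]
      refine Finset.sum_congr rfl fun π _ => by ring
    rw [e2, ← Finset.sum_add_distrib]
    refine Eq.trans ?_ (sum_empty q (1-t) n)
    refine Finset.sum_congr rfl fun π _ => ?_
    rw [← set_id t (n+1) (by omega) (pDES π) (pDES_sub π), add_mul, Finset.sum_mul]

lemma AB (q t : ℚ) (hq : ∀ n : ℕ, 1 - q^(n+1) ≠ 0) (ht : t ≠ 1) (n : ℕ) : Aev q t n = Bev q t n := by
  induction n using Nat.strong_induction_on with
  | _ n ih =>
    have h := (Aev_rec q t hq n).trans (Bev_rec q t hq n).symm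
    rw [Finset.Nat.sum_antidiagonal_eq_sum_range_succ (fun k j => Aev q t k / poch q k * ((t^j - t)/poch q j)),
      Finset.Nat.sum_antidiagonal_eq_sum_range_succ (fun k j => Bev q t k / poch q k * ((t^j - t)/poch q j)),
      Finset.sum_range_succ, Finset.sum_range_succ,
      Finset.sum_congr rfl (fun k hk => by rw [ih k (Finset.mem_range.1 hk)])] at h
    have h := add_left_cancel h
    rw [Nat.sub_self, pow_zero, show poch q 0 = 1 by simp [poch], div_one] at h
    have h := mul_right_cancel₀ (sub_ne_zero.2 ht.symm) h
    exact (div_left_inj' (poch_ne q hq n)).1 h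

end GE
namespace GE

noncomputable def ev2 (q t : ℚ) : Polynomial (Polynomial ℤ) →+* ℚ :=
  Polynomial.eval₂RingHom (Polynomial.eval₂RingHom (Int.castRingHom ℚ) q) t

lemma ev2_inj (P Q : Polynomial (Polynomial ℤ))
    (h : ∀ a b : ℕ, ev2 ((a:ℚ)+2) ((b:ℚ)+2) P = ev2 ((a:ℚ)+2) ((b:ℚ)+2) Q) : P = Q := by
  ext i : 1
  have hinj : Function.Injective (Polynomial.map (Int.castRingHom ℚ)) :=
    Polynomial.map_injective _ (RingHom.injective_int _)
  apply hinj
  have inf : ∀ p q : Polynomial ℚ, (∀ a : ℕ, p.eval ((a:ℚ)+2) = q.eval ((a:ℚ)+2)) → p = q := by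
    intro p q hpq
    refine Polynomial.eq_of_infinite_eval_eq p q ?_
    refine Set.Infinite.mono (s := Set.range (fun a : ℕ => (a:ℚ)+2)) ?_ (Set.infinite_range_of_injective ?_)
    · rintro _ ⟨a, rfl⟩; exact hpq a
    · intro a b hab; simpa using hab
  refine inf _ _ fun a => ?_
  have h2 : P.map (Polynomial.eval₂RingHom (Int.castRingHom ℚ) ((a:ℚ)+2)) =
      Q.map (Polynomial.eval₂RingHom (Int.castRingHom ℚ) ((a:ℚ)+2)) := by
    refine inf _ _ fun b => ?_
    have := h a b
    simp only [ev2, Polynomial.coe_eval₂RingHom] at this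
    rw [Polynomial.eval_map, Polynomial.eval_map]
    exact this
  have h3 := congrArg (fun R => Polynomial.coeff R i) h2
  simp only [Polynomial.coeff_map, Polynomial.coe_eval₂RingHom] at h3
  rw [Polynomial.eval_map, Polynomial.eval_map]
  exact h3

lemma hq_of (a : ℕ) (n : ℕ) : 1 - ((a:ℚ)+2)^(n+1) ≠ 0 := by
  have : 1 < ((a:ℚ)+2)^(n+1) := one_lt_pow₀ (by have : (0:ℚ) ≤ a := Nat.cast_nonneg a; linarith) (by omega)
  intro h; linarith

lemma ev2_C (q t : ℚ) (p : Polynomial ℤ) : ev2 q t (Polynomial.C p) = Polynomial.eval₂ (Int.castRingHom ℚ) q p := by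
  simp [ev2]

lemma ev2_X (q t : ℚ) : ev2 q t Polynomial.X = t := by
  simp [ev2]

lemma ev2_A (q t : ℚ) (n : ℕ) : ev2 q t (Apoly n) = Aev q t n := by
  rw [Apoly, Aev, map_sum]
  refine Finset.sum_congr rfl fun σ _ => ?_
  rw [map_mul, ev2_C, map_pow, ev2_X, Polynomial.eval₂_pow, Polynomial.eval₂_X]

lemma ev2_B (q t : ℚ) (n : ℕ) (hn : 1 ≤ n) : ev2 q t (∑ k ∈ Finset.range ((n - 1) / 2 + 1),
      Polynomial.C (∑ σ ∈ Finset.univ.filter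
            (fun σ : Equiv.Perm (Fin n) =>
              pDES σ ⊆ Finset.Icc 1 (n - 2) ∧ NoTwoConsec (pDES σ) ∧ (pDES σ).card = k),
          (Polynomial.X : Polynomial ℤ) ^ pinv σ) *
        Polynomial.X ^ k * (1 + Polynomial.X) ^ (n - 1 - 2 * k)) = Bev q t n := by
  rw [map_sum, Bev]
  have e1 : ∀ k ∈ Finset.range ((n - 1) / 2 + 1), ev2 q t (Polynomial.C (∑ σ ∈ Finset.univ.filter
            (fun σ : Equiv.Perm (Fin n) =>
              pDES σ ⊆ Finset.Icc 1 (n - 2) ∧ NoTwoConsec (pDES σ) ∧ (pDES σ).card = k),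
          (Polynomial.X : Polynomial ℤ) ^ pinv σ) *
        Polynomial.X ^ k * (1 + Polynomial.X) ^ (n - 1 - 2 * k)) =
      ∑ σ : Equiv.Perm (Fin n), if (pDES σ).card = k then wt t n (pDES σ) * q ^ pinv σ else 0 := by
    intro k _
    rw [map_mul, map_mul, map_pow, map_pow, map_add, map_one, ev2_X, ev2_C, Polynomial.eval₂_finsetSum,
      mul_assoc, Finset.sum_mul, Finset.sum_filter]
    refine Finset.sum_congr rfl fun σ _ => ?_
    rw [wt, Polynomial.eval₂_pow, Polynomial.eval₂_X]
    by_cases h1 : pDES σ ⊆ Finset.Icc 1 (n - 2) <;> by_cases h2 : NoTwoConsec (pDES σ) <;>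
      by_cases h3 : (pDES σ).card = k <;> simp [h1, h2, h3]
    ring
  rw [Finset.sum_congr rfl e1, Finset.sum_comm]
  refine Finset.sum_congr rfl fun σ _ => ?_
  rw [Finset.sum_ite_eq]
  split_ifs with h
  · rfl
  · rw [wt, if_neg, zero_mul]
    rintro ⟨h1, h2⟩
    apply h
    have := ntc_card _ _ h1 h2
    rw [Finset.mem_range]
    by_cases h3 : n = 1
    · subst h3
      have : pDES σ = ∅ := Finset.subset_empty.1 h1
      simp [this]
    · omega

end GE

/-- γ-expansion of the `q`-Eulerian polynomial:
`A_n(q,t) = Σ_k ξ_{n,k}(q) t^k (1+t)^{n-1-2k}` with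
`ξ_{n,k}(q) = Σ q^{inv(σ)}` over all `σ ∈ S_n` with `DES(σ) ⊆ [1,n-2]`,
no two consecutive descents, and exactly `k` descents. -/
theorem Apoly_gamma_noLast (n : ℕ) (hn : 1 ≤ n) :
    Apoly n = ∑ k ∈ Finset.range ((n - 1) / 2 + 1),
      Polynomial.C (∑ σ ∈ Finset.univ.filter
            (fun σ : Equiv.Perm (Fin n) =>
              pDES σ ⊆ Finset.Icc 1 (n - 2) ∧ NoTwoConsec (pDES σ) ∧ (pDES σ).card = k),
          (Polynomial.X : Polynomial ℤ) ^ pinv σ) *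
        Polynomial.X ^ k * (1 + Polynomial.X) ^ (n - 1 - 2 * k) := by
  refine GE.ev2_inj _ _ fun a b => ?_
  rw [GE.ev2_A, GE.ev2_B _ _ _ hn]
  refine GE.AB _ _ (GE.hq_of a) ?_ n
  have : (0:ℚ) ≤ b := Nat.cast_nonneg b
  intro h; linarith
end

section
/- For every integer n ≥ 1, one has the (p,q)-γ-expansion Σ_{σ ∈ S_n} p^{des*(σ)} q^{maj(σ)−exc(σ)} t^{exc(σ)} = Σ_{k=0}^{⌊(n−1)/2⌋} ξ_{n,k}(p,q) · t^{k} (1+t)^{n−1−2k}, where ξ_{n,k}(p,q) = Σ p^{des(σ^{-1})} q^{maj(σ^{-1})}, the sum running over all permutations σ ∈ S_n whose descent set DES(σ) is a subset of {1,…,n−2} containing no two consecutive integers and has exactly k elements (i.e., σ has k descents, no double descents, and no last descent). -/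
open Polynomial Finset

/-- The number of descents `des(σ) = |DES(σ)|`. -/
def pdes {n : ℕ} (σ : Equiv.Perm (Fin n)) : ℕ := (pDES σ).card

/-- `des*(σ) = des(σ)` if `σ(1) = 1`, and `des(σ) - 1` if `σ(1) > 1`. -/
def pdesStar {n : ℕ} (σ : Equiv.Perm (Fin n)) : ℕ :=
  if pval σ 1 = 1 then pdes σ else pdes σ - 1

section PartA
variable {R : Type*} [CommRing R]

def prodform {r : ℕ} (e : Fin r → ℕ → R) : MvPowerSeries (Fin r) R := fun a => ∏ c, e c (a c)

def shf (s : R) (e : ℕ → R) : ℕ → R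
  | 0 => e 0
  | k + 1 => e (k + 1) - s * e k

lemma coeff_prodform {r : ℕ} (e : Fin r → ℕ → R) (a) :
    MvPowerSeries.coeff a (prodform e) = ∏ c, e c (a c) := rfl

lemma one_sub_mul_prodform {r : ℕ} (s : R) (e : Fin r → ℕ → R) (c : Fin r) :
    (1 - MvPowerSeries.C s * MvPowerSeries.X c) * prodform e
      = prodform (Function.update e c (shf s (e c))) := by
  classical
  ext a
  have h1 : MvPowerSeries.C s * MvPowerSeries.X c
      = (MvPowerSeries.monomial (Finsupp.single c 1) s : MvPowerSeries (Fin r) R) := by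
    rw [MvPowerSeries.X_def, ← MvPowerSeries.monomial_zero_eq_C_apply,
      MvPowerSeries.monomial_mul_monomial]
    simp
  rw [sub_mul, one_mul, map_sub, h1, MvPowerSeries.coeff_monomial_mul]
  simp only [coeff_prodform]
  rw [← Finset.mul_prod_erase _ _ (Finset.mem_univ c), ← Finset.mul_prod_erase _ _ (Finset.mem_univ c),
    ← Finset.mul_prod_erase _ (fun c' => Function.update e c (shf s (e c)) c' (a c')) (Finset.mem_univ c)]
  have h2 : ∏ x ∈ Finset.univ.erase c, Function.update e c (shf s (e c)) x (a x)
      = ∏ x ∈ Finset.univ.erase c, e x (a x) := by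
    refine Finset.prod_congr rfl fun x hx => ?_
    rw [Function.update_of_ne (Finset.ne_of_mem_erase hx)]
  have h3 : ∏ x ∈ Finset.univ.erase c, e x ((a - Finsupp.single c 1 : Fin r →₀ ℕ) x)
      = ∏ x ∈ Finset.univ.erase c, e x (a x) := by
    refine Finset.prod_congr rfl fun x hx => ?_
    have := Finset.ne_of_mem_erase hx
    simp [Finsupp.single_apply, this.symm]
  rw [h2, h3, Function.update_self]
  rcases hk : a c with _ | k
  · have : ¬ (Finsupp.single c 1 ≤ a) := by
      rw [Finsupp.single_le_iff]; omega
    simp [this, shf]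
  · have : (Finsupp.single c 1 ≤ a) := by
      rw [Finsupp.single_le_iff]; omega
    simp [this, shf, hk]
    ring

lemma prod_one_sub_mul_prodform {r : ℕ} (s : R) (e : Fin r → ℕ → R) :
    (∏ c : Fin r, (1 - MvPowerSeries.C s * MvPowerSeries.X c)) * prodform e
      = prodform (fun c => shf s (e c)) := by
  classical
  have key : ∀ S : Finset (Fin r), (∏ c ∈ S, (1 - MvPowerSeries.C s * MvPowerSeries.X c)) * prodform e
      = prodform (fun c => if c ∈ S then shf s (e c) else e c) := by
    intro S
    induction S using Finset.induction_on with
    | empty => simp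
    | insert c S hc ih =>
      rw [Finset.prod_insert hc, mul_assoc, ih, one_sub_mul_prodform]
      congr 1
      ext x k
      by_cases hx : x = c
      · subst hx; simp [hc]
      · simp [Function.update_of_ne hx, hx]
  simpa using key Finset.univ

noncomputable def etq (t : R) (i : ℕ) : ℕ → R
  | 0 => 1
  | k + 1 => ((1 + Polynomial.C (1 - t) * Polynomial.X) ^ (i + 1) * (1 + Polynomial.X) ^ k : R[X]).coeff (k + 1)

lemma etq_shift (t : R) (i : ℕ) : shf 1 (etq t (i + 1)) = shf t (etq t i) := by
  funext k
  rcases k with _ | _ | k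
  · simp [shf, etq]
  · simp only [shf, etq, pow_zero, mul_one]
    have : ((1 + Polynomial.C (1 - t) * Polynomial.X) ^ (i + 1 + 1) : R[X]).coeff (0+1)
      = ((1 + Polynomial.C (1 - t) * Polynomial.X) ^ (i + 1) : R[X]).coeff (0+1) + (1 - t) := by
      rw [pow_succ _ (i+1), mul_add, mul_one, Polynomial.coeff_add, ← mul_assoc,
        Polynomial.coeff_mul_X, Polynomial.coeff_mul_C, Polynomial.coeff_zero_eq_eval_zero]
      simp
    rw [this]; ring
  · simp only [shf, etq]
    set A : R[X] := (1 + Polynomial.C (1 - t) * Polynomial.X) ^ (i + 1) with hA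
    have e1 : (1 + Polynomial.C (1 - t) * Polynomial.X) ^ (i + 1 + 1) = A * (1 + Polynomial.C (1 - t) * Polynomial.X) := pow_succ _ _
    have hh1 : (A * (1 + Polynomial.C (1 - t) * Polynomial.X) * (1 + Polynomial.X) ^ (k+1)).coeff (k+1+1)
        = (A * (1 + Polynomial.X) ^ (k+1)).coeff (k+1+1)
          + (1 - t) * (A * (1 + Polynomial.X) ^ (k+1)).coeff (k+1) := by
      rw [show A * (1 + Polynomial.C (1 - t) * Polynomial.X) * (1 + Polynomial.X) ^ (k+1)
        = A * (1 + Polynomial.X) ^ (k+1) + Polynomial.C (1-t) * (A * (1 + Polynomial.X) ^ (k+1)) * Polynomial.X by ring]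
      rw [Polynomial.coeff_add, Polynomial.coeff_mul_X, Polynomial.coeff_C_mul]
    have hh2 : (1 - t) * (A * (1 + Polynomial.X) ^ (k+1)).coeff (k+1)
      = (A * (1 + Polynomial.C (1 - t) * Polynomial.X) * (1 + Polynomial.X) ^ k).coeff (k+1)
        - t * (A * (1 + Polynomial.X) ^ k).coeff (k+1) := by
      rw [← Polynomial.coeff_C_mul, ← Polynomial.coeff_C_mul, ← Polynomial.coeff_sub]
      congr 1
      simp only [map_sub, map_one]
      ring
    rw [e1, hh1, hh2]; ring

def delt : ℕ → R
  | 0 => 1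
  | _ + 1 => 0

lemma etq_zero (t : R) (k : ℕ) : etq t 0 (k+1) = 1 - t := by
  simp only [etq, zero_add, pow_one]
  rw [add_mul, one_mul, mul_comm (Polynomial.C (1-t)), mul_assoc, mul_comm Polynomial.X,
    Polynomial.coeff_add, Polynomial.coeff_mul_X, Polynomial.coeff_C_mul,
    Polynomial.coeff_one_add_X_pow, Polynomial.coeff_one_add_X_pow]
  simp

lemma etq_shift_zero (t : R) : shf 1 (etq t 0) = shf t delt := by
  funext k
  rcases k with _ | _ | k
  · simp [shf, etq, delt]
  · simp only [shf, etq_zero]; simp [delt, etq]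
  · simp only [shf, etq_zero]; simp [delt]

lemma prodform_delt {r : ℕ} : prodform (fun _ : Fin r => (delt : ℕ → R)) = 1 := by
  classical
  ext a
  rw [coeff_prodform, MvPowerSeries.coeff_one]
  split_ifs with h
  · subst h; simp [delt]
  · obtain ⟨c, hc⟩ : ∃ c, a c ≠ 0 := by
      by_contra! hh; exact h (Finsupp.ext hh)
    refine Finset.prod_eq_zero (Finset.mem_univ c) ?_
    obtain ⟨k, hk⟩ := Nat.exists_eq_succ_of_ne_zero hc
    rw [hk]; rfl

noncomputable def Efun (r : ℕ) (t : R) (i : ℕ) : MvPowerSeries (Fin r) R := prodform (fun _ => etq t i)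

lemma Efun_succ (r : ℕ) (t : R) (i : ℕ) :
    (∏ c : Fin r, (1 - MvPowerSeries.C 1 * MvPowerSeries.X c)) * Efun r t (i+1)
     = (∏ c : Fin r, (1 - MvPowerSeries.C t * MvPowerSeries.X c)) * Efun r t i := by
  rw [Efun, Efun, prod_one_sub_mul_prodform, prod_one_sub_mul_prodform, etq_shift]

lemma Efun_zero (r : ℕ) (t : R) :
    (∏ c : Fin r, (1 - MvPowerSeries.C 1 * MvPowerSeries.X c)) * Efun r t 0
     = (∏ c : Fin r, (1 - MvPowerSeries.C t * MvPowerSeries.X c)) * 1 := by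
  have h := prod_one_sub_mul_prodform (r := r) t (fun _ => delt)
  rw [prodform_delt] at h
  rw [h, Efun, prod_one_sub_mul_prodform, etq_shift_zero]

/-- the factor attached to letter `c` of multiplicity `k` -/
noncomputable def Fac {r : ℕ} (t : R) (c : Fin r) : ℕ → MvPolynomial (Fin r) R
  | 0 => 1
  | k + 1 => (1 + MvPolynomial.X c + MvPolynomial.C (1 - t) * ∑ b ∈ Finset.Ioi c, MvPolynomial.X b) ^ k
      * (1 + MvPolynomial.C (1 - t) * ∑ b ∈ Finset.Ici c, MvPolynomial.X b)

lemma homog_coeff {S : Type*} [CommRing S] (u s : S) (i k m : ℕ) (hm : m ≤ i + k) :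
    ((Polynomial.C u + Polynomial.C s * Polynomial.X) ^ i * (Polynomial.C u + Polynomial.X) ^ k : S[X]).coeff m
     = u ^ (i + k - m) * ((1 + Polynomial.C s * Polynomial.X) ^ i * (1 + Polynomial.X) ^ k : S[X]).coeff m := by
  have g : ∀ (u s : S) (i m : ℕ), ((Polynomial.C u + Polynomial.C s * Polynomial.X) ^ i : S[X]).coeff m
     = s ^ m * u ^ (i - m) * (i.choose m) := by
    intro u s i m
    have : (Polynomial.C u + Polynomial.C s * Polynomial.X) ^ i
      = ((Polynomial.X + Polynomial.C u) ^ i).comp (Polynomial.C s * Polynomial.X) := by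
      simp [add_comm]
    rw [this, Polynomial.comp_C_mul_X_coeff, Polynomial.coeff_X_add_C_pow]
    ring
  have g1 : ∀ (u : S) (i m : ℕ), ((Polynomial.C u + Polynomial.X) ^ i : S[X]).coeff m
     = u ^ (i - m) * (i.choose m) := by
    intro u i m
    have := g u 1 i m
    simpa using this
  have g2 : ∀ (s : S) (i m : ℕ), ((1 + Polynomial.C s * Polynomial.X) ^ i : S[X]).coeff m
     = s ^ m * (i.choose m) := by
    intro s i m
    have := g 1 s i m
    simpa using this
  have g3 : ∀ (i m : ℕ), ((1 + Polynomial.X) ^ i : S[X]).coeff m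
     = (i.choose m) := by
    intro i m
    exact Polynomial.coeff_one_add_X_pow _ _ _
  rw [Polynomial.coeff_mul, Polynomial.coeff_mul, Finset.mul_sum]
  refine Finset.sum_congr rfl fun x hx => ?_
  rw [Finset.HasAntidiagonal.mem_antidiagonal] at hx
  rw [g, g1, g2, g3]
  by_cases h1 : x.1 ≤ i
  · by_cases h2 : x.2 ≤ k
    · have : i + k - m = (i - x.1) + (k - x.2) := by omega
      rw [this, pow_add]; ring
    · rw [Nat.choose_eq_zero_of_lt (not_le.mp h2)]; simp
  · rw [Nat.choose_eq_zero_of_lt (not_le.mp h1)]; simp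

lemma coeff_Efun (t : R) (i : ℕ) : ∀ (r : ℕ) (a : Fin r →₀ ℕ),
    MvPolynomial.coeff a ((1 + MvPolynomial.C (1 - t) * ∑ b, MvPolynomial.X b) ^ i
      * ∏ c, Fac t c (a c)) = ∏ c, etq t i (a c) := by
  intro r
  induction r with
  | zero =>
    intro a
    have : a = 0 := Subsingleton.elim _ _
    subst this
    simp
  | succ r ih =>
    intro a
    obtain ⟨k, a', rfl⟩ : ∃ k a', a = Finsupp.cons k a' := ⟨a 0, Finsupp.tail a, (Finsupp.cons_tail a).symm⟩
    rw [← MvPolynomial.finSuccEquiv_coeff_coeff, Fin.prod_univ_succ, Fin.prod_univ_succ]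
    simp only [Finsupp.cons_zero, Finsupp.cons_succ]
    rw [← ih a', map_mul, map_mul, map_pow, map_prod]
    set U : MvPolynomial (Fin r) R := 1 + MvPolynomial.C (1 - t) * ∑ b, MvPolynomial.X b with hU
    have hC : ∀ x : R, (MvPolynomial.finSuccEquiv R r) (MvPolynomial.C x) = Polynomial.C (MvPolynomial.C x) := by
      intro x; simp [MvPolynomial.finSuccEquiv_apply]
    have h1 : (MvPolynomial.finSuccEquiv R r) (1 + MvPolynomial.C (1 - t) * ∑ b, MvPolynomial.X b)
       = Polynomial.C U + Polynomial.C (MvPolynomial.C (1-t)) * Polynomial.X := by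
      rw [map_add, map_one, map_mul, hC, Fin.sum_univ_succ, map_add, map_sum,
        MvPolynomial.finSuccEquiv_X_zero]
      simp only [MvPolynomial.finSuccEquiv_X_succ, hU]
      rw [map_add, map_one, map_mul, map_sum]; ring
    have h2 : ∀ c : Fin r, (MvPolynomial.finSuccEquiv R r) (Fac t c.succ (a' c)) = Polynomial.C (Fac t c (a' c)) := by
      intro c
      rcases a' c with _ | k
      · simp [Fac]
      · simp only [Fac, map_mul, map_add, map_pow, map_one, hC, map_sum,
          MvPolynomial.finSuccEquiv_X_succ, ← Fin.map_succEmb_Ioi, ← Fin.map_succEmb_Ici, Finset.sum_map]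
        simp [MvPolynomial.finSuccEquiv_X_succ]
    simp only [h2]
    rw [← map_prod, h1]
    rcases k with _ | k
    · have := homog_coeff U (MvPolynomial.C (1-t)) i 0 0 (by omega)
      simp only [pow_zero, mul_one, add_zero, Nat.sub_zero] at this
      rw [show Fac t (0 : Fin (r+1)) 0 = 1 from rfl, map_one, one_mul, show etq t i 0 = 1 from rfl, one_mul]
      rw [Polynomial.coeff_mul_C, this]
      simp [Polynomial.coeff_zero_eq_eval_zero]
    · have h3 : (MvPolynomial.finSuccEquiv R r) (Fac t 0 (k+1))
        = (Polynomial.C U + Polynomial.X)^k * (Polynomial.C U + Polynomial.C (MvPolynomial.C (1-t)) * Polynomial.X) := by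
        have e1 : (Finset.Ioi (0 : Fin (r+1))) = Finset.univ.map (Fin.succEmb r) := by
          ext x; simp [Fin.pos_iff_ne_zero, Fin.exists_succ_eq]
        have e2 : (Finset.Ici (0 : Fin (r+1))) = Finset.univ := by
          ext x; simp
        simp only [Fac]
        rw [map_mul, map_pow, e2, h1, map_add, map_add, map_one, map_mul, hC, e1, Finset.sum_map, map_sum,
          MvPolynomial.finSuccEquiv_X_zero]
        simp only [Fin.coe_succEmb, MvPolynomial.finSuccEquiv_X_succ, hU]
        rw [map_add, map_one, map_mul, map_sum]; ring
      rw [h3]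
      have := homog_coeff U (MvPolynomial.C (1-t)) (i+1) k (k+1) (by omega)
      rw [show ((Polynomial.C U + Polynomial.C (MvPolynomial.C (1 - t)) * Polynomial.X) ^ i *
          ((Polynomial.C U + Polynomial.X) ^ k *
              (Polynomial.C U + Polynomial.C (MvPolynomial.C (1 - t)) * Polynomial.X) *
            Polynomial.C (∏ x, Fac t x (a' x))))
        = ((Polynomial.C U + Polynomial.C (MvPolynomial.C (1 - t)) * Polynomial.X) ^ (i+1) *
          ((Polynomial.C U + Polynomial.X) ^ k)) * Polynomial.C (∏ x, Fac t x (a' x)) by ring]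
      rw [Polynomial.coeff_mul_C, this, show i + 1 + k - (k+1) = i by omega]
      have h4 : ((1 + Polynomial.C (MvPolynomial.C (1 - t)) * Polynomial.X) ^ (i + 1) *
          (1 + Polynomial.X) ^ k : (MvPolynomial (Fin r) R)[X]).coeff (k+1) = MvPolynomial.C (etq t i (k+1)) := by
        rw [etq, ← Polynomial.coeff_map]
        simp
      rw [h4, mul_comm (U^i), mul_assoc, MvPolynomial.coeff_C_mul]

end PartA

section PartA2
variable {R : Type*} [CommRing R]

noncomputable def ellf (r : ℕ) (t : R) (g : R[X]) : MvPowerSeries (Fin r) R := fun a =>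
  MvPolynomial.coeff a (Polynomial.aeval (1 + MvPolynomial.C (1 - t) * ∑ b, MvPolynomial.X b : MvPolynomial (Fin r) R) g
      * ∏ c, Fac t c (a c))

lemma ellf_add (r : ℕ) (t : R) (g h : R[X]) : ellf r t (g + h) = ellf r t g + ellf r t h := by
  ext a
  simp only [map_add]
  simp only [MvPowerSeries.coeff_apply, ellf, map_add, add_mul, MvPolynomial.coeff_add]

lemma ellf_monomial (r : ℕ) (t : R) (i : ℕ) (x : R) :
    ellf r t (Polynomial.monomial i x) = MvPowerSeries.C x * Efun r t i := by
  ext a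
  rw [MvPowerSeries.coeff_C_mul, MvPowerSeries.coeff_apply, MvPowerSeries.coeff_apply, ellf, Efun, prodform,
    ← coeff_Efun, Polynomial.aeval_monomial, mul_assoc]
  rw [MvPolynomial.algebraMap_eq, MvPolynomial.coeff_C_mul]

lemma ellf_X_mul (r : ℕ) (t : R) (g : R[X]) :
    (∏ c : Fin r, (1 - MvPowerSeries.C 1 * MvPowerSeries.X c)) * ellf r t (Polynomial.X * g)
     = (∏ c : Fin r, (1 - MvPowerSeries.C t * MvPowerSeries.X c)) * ellf r t g := by
  induction g using Polynomial.induction_on' with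
  | add g h hg hh => rw [mul_add, ellf_add, ellf_add, mul_add, mul_add, hg, hh]
  | monomial i x =>
    rw [Polynomial.X_mul_monomial, ellf_monomial, ellf_monomial, mul_left_comm, Efun_succ, mul_left_comm]

noncomputable def pj (r : ℕ) (t : R) (j : ℕ) : MvPowerSeries (Fin r) R := fun a =>
  MvPolynomial.coeff a ((∑ b, MvPolynomial.X b) ^ j * ∏ c, Fac t c (a c))

lemma ellf_sub_one_pow (r : ℕ) (t : R) (j : ℕ) :
    ellf r t ((Polynomial.X - 1) ^ j) = MvPowerSeries.C ((1 - t) ^ j) * pj r t j := by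
  ext a
  rw [MvPowerSeries.coeff_C_mul, MvPowerSeries.coeff_apply, MvPowerSeries.coeff_apply, ellf, pj]
  rw [map_pow, map_sub, Polynomial.aeval_X, map_one, add_sub_cancel_left, mul_pow, mul_assoc,
    ← map_pow, MvPolynomial.coeff_C_mul]

lemma pj_rec [IsDomain R] (r : ℕ) (t : R) (ht : t ≠ 1) (j : ℕ) :
    (∏ c : Fin r, (1 - MvPowerSeries.C 1 * MvPowerSeries.X c)) * (pj r t j + MvPowerSeries.C (1 - t) * pj r t (j+1))
     = (∏ c : Fin r, (1 - MvPowerSeries.C t * MvPowerSeries.X c)) * pj r t j := by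
  have h := ellf_X_mul r t ((Polynomial.X - 1) ^ j)
  have e : (Polynomial.X * (Polynomial.X - 1) ^ j : R[X]) = (Polynomial.X - 1) ^ (j+1) + (Polynomial.X - 1) ^ j := by ring
  rw [e, ellf_add, ellf_sub_one_pow, ellf_sub_one_pow] at h
  have h0 : (MvPowerSeries.C ((1 - t) ^ j) : MvPowerSeries (Fin r) R) ≠ 0 := by
    rw [Ne, ← map_zero MvPowerSeries.C, MvPowerSeries.C_inj]
    exact pow_ne_zero _ (sub_ne_zero.mpr ht.symm)
  apply mul_left_cancel₀ h0
  rw [mul_left_comm _ _ (pj r t j), ← h, pow_succ, map_mul]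
  ring

lemma pj_zero (r : ℕ) (t : R) :
    (∏ c : Fin r, (1 - MvPowerSeries.C 1 * MvPowerSeries.X c)) * pj r t 0
     = (∏ c : Fin r, (1 - MvPowerSeries.C t * MvPowerSeries.X c)) * 1 := by
  rw [← Efun_zero]
  congr 1
  have h := ellf_sub_one_pow r t 0
  have h2 := ellf_monomial r t 0 1
  simp only [pow_zero, map_one, one_mul] at h h2
  rw [← h, ← h2]; simp

lemma sumX_hom (r : ℕ) : (∑ b, MvPolynomial.X b : MvPolynomial (Fin r) R).IsHomogeneous 1 :=
  MvPolynomial.IsHomogeneous.sum _ _ _ fun b _ => MvPolynomial.isHomogeneous_X _ _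

lemma pj_vanish (r : ℕ) (t : R) (j : ℕ) (a : Fin r →₀ ℕ) (h : a.degree < j) :
    MvPowerSeries.coeff a (pj r t j) = 0 := by
  classical
  rw [MvPowerSeries.coeff_apply, pj, MvPolynomial.coeff_mul]
  refine Finset.sum_eq_zero fun x hx => ?_
  rw [Finset.HasAntidiagonal.mem_antidiagonal] at hx
  have hh : ((∑ b, MvPolynomial.X b : MvPolynomial (Fin r) R) ^ j).IsHomogeneous (1 * j) := (sumX_hom r).pow j
  rw [hh.coeff_eq_zero, zero_mul]
  rw [← hx, map_add] at h
  omega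

theorem series_unique [IsDomain R] (r : ℕ) (t : R) (ht : t ≠ 1) (G : MvPowerSeries (Fin r) R)
    (hG : (∏ c : Fin r, (1 - MvPowerSeries.C 1 * MvPowerSeries.X c)) * G
     = (∏ c : Fin r, (1 - MvPowerSeries.C t * MvPowerSeries.X c)) * (MvPowerSeries.C t * G + MvPowerSeries.C (1 - t)))
    (a : Fin r →₀ ℕ) (N : ℕ) (hN : a.degree < N) :
    MvPowerSeries.coeff a G = ∑ j ∈ Finset.range N, t ^ j *
      MvPolynomial.coeff a ((∑ b, MvPolynomial.X b) ^ j * ∏ c, Fac t c (a c)) := by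
  set D1 : MvPowerSeries (Fin r) R := (∏ c : Fin r, (1 - MvPowerSeries.C 1 * MvPowerSeries.X c)) with hD1
  set Dt : MvPowerSeries (Fin r) R := (∏ c : Fin r, (1 - MvPowerSeries.C t * MvPowerSeries.X c)) with hDt
  have key : ∀ N, D1 * (∑ j ∈ Finset.range N, MvPowerSeries.C (t ^ j) * pj r t j
        + MvPowerSeries.C (1 - t) * MvPowerSeries.C (t ^ N) * pj r t N)
      = Dt * (MvPowerSeries.C t * (∑ j ∈ Finset.range N, MvPowerSeries.C (t ^ j) * pj r t j) + MvPowerSeries.C (1 - t)) := by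
    intro N
    induction N with
    | zero =>
      have := pj_zero r t
      simp only [Finset.range_zero, Finset.sum_empty, pow_zero, map_one, mul_one, zero_add, mul_zero]
      rw [mul_left_comm, this]; ring
    | succ N ih =>
      have h := pj_rec r t ht N
      rw [← hD1, ← hDt] at h
      rw [Finset.sum_range_succ, mul_add (MvPowerSeries.C t), add_right_comm _ _ (MvPowerSeries.C (1-t)),
        mul_add Dt, ← ih,
        show Dt * (MvPowerSeries.C t * (MvPowerSeries.C (t ^ N) * pj r t N))
          = MvPowerSeries.C t * MvPowerSeries.C (t ^ N) * (Dt * pj r t N) by ring, ← h, pow_succ]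
      simp only [map_mul, map_sub, map_one]
      ring
  have hk := key N
  set S : MvPowerSeries (Fin r) R := ∑ j ∈ Finset.range N, MvPowerSeries.C (t ^ j) * pj r t j with hS
  have h1 : (D1 - MvPowerSeries.C t * Dt) * (G - S) = D1 * MvPowerSeries.C (1 - t) * MvPowerSeries.C (t ^ N) * pj r t N := by
    linear_combination hG - hk
  have hc : MvPowerSeries.constantCoeff (D1 - MvPowerSeries.C t * Dt) ≠ 0 := by
    simp [hD1, hDt, map_prod, sub_ne_zero, ht.symm]
  have ho : (D1 - MvPowerSeries.C t * Dt).order = 0 := by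
    by_contra h
    exact hc (MvPowerSeries.coeff_zero_eq_constantCoeff_apply (R := R) (σ := Fin r) _ ▸
      MvPowerSeries.coeff_of_lt_order (by simpa [pos_iff_ne_zero] using h))
  have ho2 : (N : ℕ∞) ≤ (pj r t N).order := by
    apply MvPowerSeries.le_order
    intro d hd
    exact pj_vanish r t N d (by exact_mod_cast hd)
  have ho3 : (N : ℕ∞) ≤ (G - S).order := by
    have := congrArg MvPowerSeries.order h1
    rw [MvPowerSeries.order_mul, ho, zero_add, MvPowerSeries.order_mul] at this
    rw [this]
    exact ho2.trans le_add_self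
  have h2 : MvPowerSeries.coeff a (G - S) = 0 :=
    MvPowerSeries.coeff_of_lt_order (lt_of_lt_of_le (by exact_mod_cast hN) ho3)
  rw [map_sub, sub_eq_zero] at h2
  rw [h2, hS, map_sum]
  refine Finset.sum_congr rfl fun j _ => ?_
  rw [MvPowerSeries.coeff_C_mul]; rfl

lemma cells_expand (n r : ℕ) (t : R) (M : Fin n → MvPolynomial (Fin r) R) (hM : ∀ v, (M v).IsHomogeneous 1)
    (a : Fin r →₀ ℕ) (ha : a.degree = n) :
    MvPolynomial.coeff a (∏ v, (MvPolynomial.C t * (∑ b, MvPolynomial.X b) + M v))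
     = ∑ j ∈ Finset.range (n + 1), t ^ j * MvPolynomial.coeff a ((∑ b, MvPolynomial.X b) ^ j * ∏ v, (1 + M v)) := by
  classical
  have e1 : ∏ v, (MvPolynomial.C t * (∑ b, MvPolynomial.X b) + M v)
     = ∑ F ∈ (Finset.univ : Finset (Fin n)).powerset, MvPolynomial.C (t ^ F.card) * ((∑ b, MvPolynomial.X b) ^ F.card *
          ∏ v ∈ Finset.univ \ F, M v) := by
    rw [Finset.prod_add]
    refine Finset.sum_congr rfl fun F _ => ?_
    rw [Finset.prod_const, mul_pow, map_pow, mul_assoc]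
  have e2 : ∏ v, (1 + M v) = ∑ F ∈ (Finset.univ : Finset (Fin n)).powerset, ∏ v ∈ Finset.univ \ F, M v := by
    rw [Finset.prod_add]
    refine Finset.sum_congr rfl fun F _ => ?_
    simp
  rw [e1, e2]
  simp only [Finset.mul_sum, MvPolynomial.coeff_sum, MvPolynomial.coeff_C_mul]
  rw [Finset.sum_comm]
  refine Finset.sum_congr rfl fun F _ => ?_
  have hF : F.card ≤ n := by simpa using Finset.card_le_univ F
  rw [Finset.sum_eq_single F.card]
  · intro j hj hne
    have hh : ((∑ b, MvPolynomial.X b : MvPolynomial (Fin r) R) ^ j * ∏ v ∈ Finset.univ \ F, M v).IsHomogeneous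
        (1 * j + ∑ v ∈ Finset.univ \ F, 1) :=
      ((sumX_hom r).pow j).mul (MvPolynomial.IsHomogeneous.prod _ _ _ fun v _ => hM v)
    rw [hh.coeff_eq_zero, mul_zero]
    rw [ha, Finset.sum_const, Finset.card_sdiff_of_subset (Finset.subset_univ _), Finset.card_univ, Fintype.card_fin]
    simp only [one_mul, smul_eq_mul, mul_one]
    omega
  · intro h
    exact absurd (Finset.mem_range.mpr (by omega)) h

end PartA2

section PartB

abbrev xexc {n : ℕ} (σ : Equiv.Perm (Fin n)) (i : ℕ) : Prop := i < pval σ i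

def pDEX {n : ℕ} (σ : Equiv.Perm (Fin n)) : Finset ℕ :=
  (Finset.Icc 1 (n - 1)).filter fun i =>
    (¬ xexc σ i ∧ xexc σ (i+1)) ∨ ((xexc σ i ↔ xexc σ (i+1)) ∧ pval σ (i + 1) < pval σ i)

lemma pval_inj {n : ℕ} (σ : Equiv.Perm (Fin n)) (i j : ℕ) (hi : 1 ≤ i ∧ i ≤ n) (hj : 1 ≤ j ∧ j ≤ n)
    (h : pval σ i = pval σ j) : i = j := by
  unfold pval at h
  rw [dif_pos hi, dif_pos hj] at h
  have h2 := σ.injective (Fin.ext (Nat.succ_injective h))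
  have := congrArg Fin.val h2
  simp at this
  omega

lemma dex_ind {m : ℕ} (σ : Equiv.Perm (Fin (m+1))) (i : ℕ) (hi : i < m) :
    (if i + 1 ∈ pDEX σ then 1 else 0) + (if xexc σ (i+1) then 1 else 0)
    = (if i + 1 ∈ pDES σ then 1 else 0) + (if xexc σ (i+2) then 1 else 0) := by
  have h1 : i + 1 ∈ Finset.Icc 1 (m + 1 - 1) := by simp; omega
  simp only [pDEX, pDES, Finset.mem_filter, h1, true_and]
  have hne : pval σ (i+1) ≠ pval σ (i+2) := fun h => by
    have := pval_inj σ (i+1) (i+2) (by omega) (by omega) h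
    omega
  unfold xexc
  have e : i + 1 + 1 = i + 2 := rfl
  rw [e]
  split_ifs <;> omega

lemma sum_mem_icc (m : ℕ) (S : Finset ℕ) (hS : S ⊆ Finset.Icc 1 m) (f : ℕ → ℕ) :
    ∑ i ∈ S, f i = ∑ i ∈ Finset.range m, f (i+1) * (if i + 1 ∈ S then 1 else 0) := by
  have : ∑ i ∈ Finset.range m, f (i+1) * (if i + 1 ∈ S then 1 else 0)
      = ∑ i ∈ Finset.Icc 1 m, f i * (if i ∈ S then 1 else 0) := by
    rw [Finset.range_eq_Ico, Finset.sum_Ico_add' (fun i => f i * (if i ∈ S then 1 else 0)) 0 m 1]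
    rfl
  rw [this]
  simp only [mul_ite, mul_one, mul_zero]
  rw [← Finset.sum_filter]
  congr 1
  ext x
  simp only [Finset.mem_filter]
  exact ⟨fun h => ⟨hS h, h⟩, fun h => h.2⟩

lemma xexc_last {m : ℕ} (σ : Equiv.Perm (Fin (m+1))) : ¬ xexc σ (m+1) := by
  unfold xexc pval
  rw [dif_pos (by omega)]
  have := (σ ⟨m + 1 - 1, by omega⟩).isLt
  omega

lemma dex_card {m : ℕ} (σ : Equiv.Perm (Fin (m+1))) :
    (pDEX σ).card = pdesStar σ := by
  have hc : ∀ S : Finset ℕ, S ⊆ Finset.Icc 1 m → S.card = ∑ i ∈ Finset.range m, (if i + 1 ∈ S then 1 else 0) := by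
    intro S hS
    rw [Finset.card_eq_sum_ones, sum_mem_icc m S hS (fun _ => 1)]
    simp
  have h1 := hc (pDEX σ) (Finset.filter_subset _ _)
  have h2 := hc (pDES σ) (Finset.filter_subset _ _)
  have h3 : ∑ i ∈ Finset.range m, ((if i + 1 ∈ pDEX σ then 1 else 0) + (if xexc σ (i+1) then 1 else 0))
     = ∑ i ∈ Finset.range m, ((if i + 1 ∈ pDES σ then 1 else 0) + (if xexc σ (i+2) then 1 else 0)) :=
    Finset.sum_congr rfl fun i hi => dex_ind σ i (Finset.mem_range.1 hi)
  rw [Finset.sum_add_distrib, Finset.sum_add_distrib, ← h1, ← h2] at h3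
  have h4 := Finset.sum_range_succ (fun i => if xexc σ (i+1) then 1 else 0) m
  have h5 := Finset.sum_range_succ' (fun i => if xexc σ (i+1) then 1 else 0) m
  simp only [xexc_last σ, if_false] at h4
  rw [h4] at h5
  have h6 : pval σ 1 = 1 ↔ ¬ xexc σ (0+1) := by
    unfold xexc pval
    rw [dif_pos (by omega)]
    omega
  have e : ∀ i, i + 1 + 1 = i + 2 := fun _ => rfl
  simp only [e] at h5
  unfold pdesStar pdes
  split_ifs at * <;> first | omega | tauto

lemma dex_sum {m : ℕ} (σ : Equiv.Perm (Fin (m+1))) :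
    ∑ i ∈ pDEX σ, i = pmaj σ - pexc σ := by
  have h1 := sum_mem_icc m (pDEX σ) (Finset.filter_subset _ _) (fun i => i)
  have h2 := sum_mem_icc m (pDES σ) (Finset.filter_subset _ _) (fun i => i)
  have h0 : pexc σ = ∑ i ∈ Finset.range (m+1), (if xexc σ (i+1) then 1 else 0) := by
    unfold pexc
    rw [Finset.card_eq_sum_ones, sum_mem_icc (m+1) _ (Finset.filter_subset _ _) (fun _ => 1)]
    refine Finset.sum_congr rfl fun i hi => ?_
    simp only [Finset.mem_filter, Finset.mem_Icc, one_mul, xexc]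
    have := Finset.mem_range.1 hi
    split_ifs <;> omega
  have h3 : ∑ i ∈ Finset.range m, ((i+1)*(if i + 1 ∈ pDEX σ then 1 else 0) + (i+1)*(if xexc σ (i+1) then 1 else 0))
     = ∑ i ∈ Finset.range m, ((i+1)*(if i + 1 ∈ pDES σ then 1 else 0) + (i+1)*(if xexc σ (i+2) then 1 else 0)) :=
    Finset.sum_congr rfl fun i hi => by
      rw [← mul_add, ← mul_add, dex_ind σ i (Finset.mem_range.1 hi)]
  rw [Finset.sum_add_distrib, Finset.sum_add_distrib, ← h1, ← h2] at h3
  have h4 := Finset.sum_range_succ (fun i => (i+1) * if xexc σ (i+1) then 1 else 0) m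
  have h5 := Finset.sum_range_succ' (fun i => (i+1) * if xexc σ (i+1) then 1 else 0) m
  have h7 := Finset.sum_range_succ' (fun i => if xexc σ (i+1) then 1 else 0) m
  simp only [xexc_last σ, if_false] at h4
  rw [h4] at h5
  rw [← h0] at h7
  have h8 : ∑ i ∈ Finset.range m, (i+1+1)*(if xexc σ (i+2) then 1 else 0)
    = ∑ i ∈ Finset.range m, (i+1)*(if xexc σ (i+2) then 1 else 0) + ∑ i ∈ Finset.range m, (if xexc σ (i+2) then 1 else 0) := by
    rw [← Finset.sum_add_distrib]
    exact Finset.sum_congr rfl fun i _ => by ring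
  have e : ∀ i, i + 1 + 1 = i + 2 := fun _ => rfl
  simp only [e] at h5 h7 h8
  unfold pmaj
  simp only [zero_add, one_mul, mul_zero, add_zero] at *
  omega

/-- inclusion-exclusion uniqueness -/
lemma mobius {ι κ A : Type} [Fintype ι] [Fintype κ] [AddCommGroup A] (F : ι → Finset ℕ) (H : κ → Finset ℕ)
    (f : ι → A) (h : κ → A)
    (hyp : ∀ T : Finset ℕ, ∑ i ∈ Finset.univ.filter (fun i => F i ⊆ T), f i
      = ∑ i ∈ Finset.univ.filter (fun i => H i ⊆ T), h i) (S : Finset ℕ) :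
    ∑ i ∈ Finset.univ.filter (fun i => F i = S), f i
      = ∑ i ∈ Finset.univ.filter (fun i => H i = S), h i := by
  induction S using Finset.strongInduction with
  | _ S ih =>
  have key : ∀ {ι : Type} [Fintype ι] (F : ι → Finset ℕ) (f : ι → A),
    ∑ i ∈ Finset.univ.filter (fun i => F i ⊆ S), f i =
    ∑ U ∈ S.ssubsets, ∑ i ∈ Finset.univ.filter (fun i => F i = U), f i
     + ∑ i ∈ Finset.univ.filter (fun i => F i = S), f i := by
    intro ι _ F f
    rw [← Finset.sum_fiberwise_of_maps_to (s := Finset.univ.filter (fun i => F i ⊆ S)) (t := S.powerset) (g := F)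
      (fun i hi => by simpa using hi)]
    rw [← Finset.insert_erase (Finset.mem_powerset_self S), Finset.sum_insert (Finset.notMem_erase _ _), add_comm]
    congr 1
    · refine Finset.sum_congr rfl fun U hU => Finset.sum_congr ?_ fun _ _ => rfl
      have hU' : U ⊆ S := by
        have := Finset.mem_of_mem_erase hU
        simpa using this
      ext i
      simp only [Finset.mem_filter, Finset.mem_univ, true_and]
      exact ⟨fun h => h.2, fun h => ⟨h ▸ hU', h⟩⟩
    · refine Finset.sum_congr ?_ fun _ _ => rfl
      ext i
      simp only [Finset.mem_filter, Finset.mem_univ, true_and]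
      exact ⟨fun h => h.2, fun h => ⟨h ▸ subset_rfl, h⟩⟩
  have k1 := key F f
  have k2 := key H h
  rw [hyp S] at k1
  rw [k1] at k2
  rw [Finset.sum_congr rfl (fun U hU => ih U (Finset.mem_ssubsets.1 hU))] at k2
  exact add_left_cancel k2

lemma mobius_weighted {ι κ A : Type} [Fintype ι] [Fintype κ] [CommRing A] (F : ι → Finset ℕ) (H : κ → Finset ℕ)
    (f : ι → A) (h : κ → A)
    (hyp : ∀ T : Finset ℕ, ∑ i ∈ Finset.univ.filter (fun i => F i ⊆ T), f i
      = ∑ i ∈ Finset.univ.filter (fun i => H i ⊆ T), h i) (m : ℕ) (hF : ∀ i, F i ⊆ Finset.Icc 1 m)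
      (hH : ∀ i, H i ⊆ Finset.Icc 1 m) (wt : Finset ℕ → A) :
    ∑ i, wt (F i) * f i = ∑ i, wt (H i) * h i := by
  have key : ∀ {ι : Type} [Fintype ι] (F : ι → Finset ℕ) (f : ι → A) (hF : ∀ i, F i ⊆ Finset.Icc 1 m),
    ∑ i, wt (F i) * f i = ∑ U ∈ (Finset.Icc 1 m).powerset, wt U * ∑ i ∈ Finset.univ.filter (fun i => F i = U), f i := by
    intro ι _ F f hF
    rw [← Finset.sum_fiberwise_of_maps_to (t := (Finset.Icc 1 m).powerset) (g := F) (fun i hi => by simpa using hF i)]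
    refine Finset.sum_congr rfl fun U _ => ?_
    rw [Finset.mul_sum]
    refine Finset.sum_congr rfl fun i hi => ?_
    rw [(Finset.mem_filter.1 hi).2]
  rw [key F f hF, key H h hH]
  exact Finset.sum_congr rfl fun U _ => by rw [mobius F H f h hyp U]

end PartB

section PartC
variable {R : Type} [CommRing R]

open Classical in
/-- gap weights -/
noncomputable def gw (t : R) : ℕ → (ℕ → Prop) → R
  | 0, _ => 1
  | 1, d => if d 0 then 0 else 1 + t
  | (m+2), d => if d 0 then (if d 1 then 0 else t * gw t m (fun i => d (i+2)))
      else (1 + t) * gw t (m+1) (fun i => d (i+1))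

def wgap {α : Type} [LT α] {n : ℕ} (w : Fin n → α) (i : ℕ) : Prop :=
  ∃ h : i + 1 < n, w ⟨i+1, h⟩ < w ⟨i, by omega⟩

noncomputable def vv (r : ℕ) (t : R) : ℕ → Fin r → MvPolynomial (Fin r) R
  | 0, _ => 0
  | 1, c => MvPolynomial.X c
  | (n+2), c => MvPolynomial.X c * (MvPolynomial.C (1 + t) * (∑ b ∈ Finset.Ici c, vv r t (n+1) b)
      + MvPolynomial.C t * ∑ b ∈ Finset.Iio c, MvPolynomial.X b * ∑ d ∈ Finset.Ici b, vv r t n d)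

noncomputable def hat {r : ℕ} (f : ℕ → MvPolynomial (Fin r) R) : MvPowerSeries (Fin r) R :=
  fun a => MvPolynomial.coeff a (f a.degree)

lemma coeff_hat {r : ℕ} (f : ℕ → MvPolynomial (Fin r) R) (a) :
    MvPowerSeries.coeff a (hat f) = MvPolynomial.coeff a (f a.degree) := rfl

lemma hat_add {r : ℕ} (f g : ℕ → MvPolynomial (Fin r) R) : hat (f + g) = hat f + hat g := by
  ext a; simp [coeff_hat]

lemma hat_sum {r : ℕ} {ι : Type} (s : Finset ι) (f : ι → ℕ → MvPolynomial (Fin r) R) :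
    hat (∑ i ∈ s, f i) = ∑ i ∈ s, hat (f i) := by
  ext a; simp [coeff_hat, MvPolynomial.coeff_sum]

lemma hat_C {r : ℕ} (t : R) (f : ℕ → MvPolynomial (Fin r) R) :
    hat (fun n => MvPolynomial.C t * f n) = MvPowerSeries.C t * hat f := by
  ext a; simp [coeff_hat, MvPowerSeries.coeff_C_mul]

noncomputable def hsh {r : ℕ} (f : ℕ → MvPolynomial (Fin r) R) : ℕ → MvPolynomial (Fin r) R
  | 0 => 0
  | (n+1) => f n

lemma hat_X {r : ℕ} (c : Fin r) (f : ℕ → MvPolynomial (Fin r) R) :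
    hat (hsh (fun n => MvPolynomial.X c * f n)) = MvPowerSeries.X c * hat f := by
  classical
  ext a
  rw [coeff_hat]
  by_cases hc : a c = 0
  · have h1 : MvPowerSeries.coeff a (MvPowerSeries.X c * hat f) = 0 := by
      have : (MvPowerSeries.X c : MvPowerSeries (Fin r) R) ∣ MvPowerSeries.X c * hat f := dvd_mul_right _ _
      exact MvPowerSeries.X_dvd_iff.1 this a hc
    rw [h1]
    cases a.degree with
    | zero => simp [hsh]
    | succ k => simp [hsh, MvPolynomial.coeff_X_mul', hc]
  · obtain ⟨b, rfl⟩ : ∃ b, a = Finsupp.single c 1 + b := by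
      refine ⟨a - Finsupp.single c 1, ?_⟩
      rw [add_tsub_cancel_of_le]
      rw [Finsupp.single_le_iff]; omega
    have hd : (Finsupp.single c 1 + b).degree = b.degree + 1 := by
      rw [map_add, Finsupp.degree_single, add_comm]
    rw [hd]
    have : MvPowerSeries.X c * hat f = MvPowerSeries.monomial (Finsupp.single c 1) 1 * hat f := rfl
    rw [this, MvPowerSeries.coeff_add_monomial_mul, one_mul, coeff_hat]
    simp only [hsh]
    rw [MvPolynomial.coeff_X_mul]

lemma hat_one {r : ℕ} : hat (fun n => if n = 0 then (1 : MvPolynomial (Fin r) R) else 0) = 1 := by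
  classical
  ext a
  rw [coeff_hat, MvPowerSeries.coeff_one]
  by_cases h : a = 0
  · simp [h]
  · have : a.degree ≠ 0 := by simpa [Finsupp.degree_eq_zero_iff] using h
    simp [h, this]

lemma vv_hat (r : ℕ) (t : R) (c : Fin r) :
    hat (fun n => vv r t n c) = MvPowerSeries.X c * (1 + MvPowerSeries.C (1 + t) * (∑ b ∈ Finset.Ici c, hat (fun n => vv r t n b))
      + MvPowerSeries.C t * ∑ b ∈ Finset.Iio c, MvPowerSeries.X b * ∑ d ∈ Finset.Ici b, hat (fun n => vv r t n d)) := by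
  simp only [← hat_sum, ← hat_C, ← hat_X, ← hat_one, ← hat_add]
  congr 1
  funext n
  match n with
  | 0 => simp [vv, hsh]
  | 1 => simp [vv, hsh]
  | (n+2) => simp [vv, hsh]

lemma telescope {S : Type} [CommRing S] (r : ℕ) (t : S) (x v : Fin r → S)
    (hv : ∀ c, v c = x c * (1 + (1 + t) * (∑ b ∈ Finset.Ici c, v b)
      + t * ∑ b ∈ Finset.Iio c, x b * ∑ d ∈ Finset.Ici b, v d)) :
    (∏ c, (1 - x c)) * (1 + ∑ c, v c) = (∏ c, (1 - t * x c)) * (1 + t * ∑ c, v c) := by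
  have key : ∀ k ≤ r, 
      (∏ c ∈ univ.filter (fun c : Fin r => c.val < k), (1 - x c)) * (1 + ∑ c, v c)
        = (∑ b ∈ univ.filter (fun b : Fin r => k ≤ b.val), v b) + 1
          + t * ∑ b ∈ univ.filter (fun c : Fin r => c.val < k), x b * ∑ d ∈ Finset.Ici b, v d
      ∧ (∏ c ∈ univ.filter (fun c : Fin r => c.val < k), (1 - t * x c)) * (1 + t * ∑ c, v c)
        = t * (∑ b ∈ univ.filter (fun b : Fin r => k ≤ b.val), v b) + 1
          + t * ∑ b ∈ univ.filter (fun c : Fin r => c.val < k), x b * ∑ d ∈ Finset.Ici b, v d := by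
    intro k
    induction k with
    | zero => intro _; simp [add_comm]
    | succ k ih =>
      intro hk
      obtain ⟨h1, h2⟩ := ih (by omega)
      have e1 : univ.filter (fun c : Fin r => c.val < k + 1) = insert ⟨k, hk⟩ (univ.filter (fun c : Fin r => c.val < k)) := by
        ext c; simp [Fin.ext_iff]; omega
      have e2 : univ.filter (fun c : Fin r => k ≤ c.val) = insert ⟨k, hk⟩ (univ.filter (fun c : Fin r => k + 1 ≤ c.val)) := by
        ext c; simp [Fin.ext_iff]; omega
      have e3 : univ.filter (fun c : Fin r => c.val < k) = Finset.Iio ⟨k, hk⟩ := by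
        ext c; simp [Fin.lt_def]
      have e4 : univ.filter (fun c : Fin r => k ≤ c.val) = Finset.Ici ⟨k, hk⟩ := by
        ext c; simp [Fin.le_def]
      have n1 : (⟨k, hk⟩ : Fin r) ∉ univ.filter (fun c : Fin r => c.val < k) := by simp
      have n2 : (⟨k, hk⟩ : Fin r) ∉ univ.filter (fun c : Fin r => k + 1 ≤ c.val) := by simp
      have hW : ∑ b ∈ Finset.Ici ⟨k, hk⟩, v b = v ⟨k, hk⟩ + ∑ b ∈ univ.filter (fun b : Fin r => k + 1 ≤ b.val), v b := by
        rw [← e4, e2, Finset.sum_insert n2]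
      have hvk := hv ⟨k, hk⟩
      rw [e1, Finset.prod_insert n1, Finset.prod_insert n1, Finset.sum_insert n1, mul_assoc, mul_assoc, h1, h2, e4, e3]
      generalize ∑ b ∈ Finset.Iio ⟨k, hk⟩, x b * ∑ d ∈ Finset.Ici b, v d = K at *
      generalize ∑ b ∈ univ.filter (fun b : Fin r => k + 1 ≤ b.val), v b = W1 at *
      generalize ∑ b ∈ Finset.Ici ⟨k, hk⟩, v b = W at *
      have hW1 : W1 = W - v ⟨k, hk⟩ := by rw [hW]; ring
      rw [hW1, hvk]
      constructor <;> ring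
  obtain ⟨h1, h2⟩ := key r le_rfl
  have e1 : univ.filter (fun c : Fin r => c.val < r) = univ := by ext c; simp
  have e2 : univ.filter (fun c : Fin r => r ≤ c.val) = ∅ := by ext c; simp
  rw [e1, e2] at h1 h2
  rw [h1, h2]; simp

lemma vv_coeff [IsDomain R] (r : ℕ) (t : R) (ht : t ≠ 1) (m : ℕ) (a : Fin r →₀ ℕ) (ha : a.degree = m + 1) :
    MvPolynomial.coeff a (∑ c, vv r t (m+1) c) = ∑ j ∈ range (m + 2),
      t^j * MvPolynomial.coeff a ((∑ b, MvPolynomial.X b)^j * ∏ c, Fac t c (a c)) := by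
  have h := telescope (S := MvPowerSeries (Fin r) R) r (MvPowerSeries.C t) (fun c => MvPowerSeries.X c)
    (fun c => hat (fun n => vv r t n c)) (fun c => by
      have := vv_hat r t c
      rw [map_add, map_one] at this
      exact this)
  have h2 := series_unique r t ht (1 + ∑ c, hat (fun n => vv r t n c)) (by
    simp only [map_one, one_mul, map_sub]
    rw [h]; ring) a (m+2) (by omega)
  rw [← h2, map_add, MvPowerSeries.coeff_one, if_neg (by rintro rfl; simp at ha), zero_add, ← hat_sum, coeff_hat, ha]
  simp
 
lemma wgap_cons {α : Type} [LT α] {n : ℕ} (c : α) (u : Fin n → α) (i : ℕ) :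
    wgap (Fin.cons c u : Fin (n+1) → α) (i+1) = wgap u i := by
  unfold wgap
  apply propext
  constructor
  · rintro ⟨h, h2⟩; exact ⟨by omega, h2⟩
  · rintro ⟨h, h2⟩; exact ⟨by omega, h2⟩

lemma wgap_cons_zero {α : Type} [LT α] {n : ℕ} (c : α) (u : Fin (n+1) → α) :
    wgap (Fin.cons c u : Fin (n+2) → α) 0 = (u 0 < c) := by
  unfold wgap
  apply propext
  constructor
  · rintro ⟨h, h2⟩; exact h2
  · intro h; exact ⟨by omega, by simpa using h⟩

noncomputable def wterm {r : ℕ} (t : R) {m : ℕ} (w : Fin (m+1) → Fin r) : MvPolynomial (Fin r) R :=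
  MvPolynomial.C (gw t m (wgap w)) * ∏ i, MvPolynomial.X (w i)

lemma sum_fcons {r m : ℕ} {A : Type} [AddCommMonoid A] (f : (Fin (m+1) → Fin r) → A) :
    ∑ w, f w = ∑ c, ∑ u : Fin m → Fin r, f (Fin.cons c u) := by
  rw [← (Fin.consEquiv (fun _ : Fin (m+1) => Fin r)).sum_comp, Fintype.sum_prod_type]
  rfl

lemma wterm_cons {r : ℕ} (t : R) {m : ℕ} (c b : Fin r) (u : Fin (m+1) → Fin r) :
    wterm t (Fin.cons c (Fin.cons b u) : Fin (m+3) → Fin r) =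
      if b < c then (if u 0 < b then 0 else MvPolynomial.C t * (MvPolynomial.X c * MvPolynomial.X b * wterm t u))
      else MvPolynomial.C (1 + t) * (MvPolynomial.X c * wterm t (Fin.cons b u : Fin (m+2) → Fin r)) := by
  unfold wterm
  rw [gw]
  simp only [wgap_cons_zero]
  have e1 : (wgap (Fin.cons c (Fin.cons b u) : Fin (m+3) → Fin r)) 1 = (u 0 < b) := by
    exact (wgap_cons c (Fin.cons b u : Fin (m+2) → Fin r) 0).trans (wgap_cons_zero b u)
  have e2 : (fun i => wgap (Fin.cons c (Fin.cons b u) : Fin (m+3) → Fin r) (i + 2)) = wgap u := by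
    funext i
    rw [show i + 2 = (i + 1) + 1 from rfl, wgap_cons, wgap_cons]
  have e3 : (fun i => wgap (Fin.cons c (Fin.cons b u) : Fin (m+3) → Fin r) (i + 1)) = wgap (Fin.cons b u : Fin (m+2) → Fin r) := by
    funext i
    rw [wgap_cons]
  rw [e1, e2, e3]
  simp only [Fin.cons_zero]
  rw [Fin.prod_univ_succ, Fin.prod_univ_succ]
  simp only [Fin.cons_zero, Fin.cons_succ]
  split_ifs
  · simp
  · simp only [map_mul]; ring
  · rw [Fin.prod_univ_succ (fun i => MvPolynomial.X ((Fin.cons b u : Fin (m+2) → Fin r) i))]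
    simp only [Fin.cons_zero, Fin.cons_succ, map_mul]; ring

lemma filt_ge {r : ℕ} {A : Type} [AddCommMonoid A] (c : Fin r) (f : Fin r → A) :
   ∑ b, (if b < c then 0 else f b) = ∑ b ∈ Finset.Ici c, f b := by
  rw [← Finset.filter_le_eq_Ici, Finset.sum_filter]
  refine Finset.sum_congr rfl fun b _ => ?_
  by_cases h : b < c
  · simp [h, not_le.2 h]
  · simp [h, not_lt.1 h]

lemma wterm_sum {r : ℕ} (t : R) : ∀ (m : ℕ) (c : Fin r),
    ∑ u : Fin m → Fin r, wterm t (Fin.cons c u : Fin (m+1) → Fin r) = vv r t (m+1) c := by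
  intro m
  induction m using Nat.strong_induction_on with
  | _ m ih =>
  intro c
  match m with
  | 0 => simp [wterm, gw, vv]
  | 1 =>
    rw [sum_fcons]
    simp only [vv, Finset.sum_const_zero, mul_zero, add_zero]
    rw [Finset.mul_sum, Finset.mul_sum, ← filt_ge]
    refine Finset.sum_congr rfl fun b _ => ?_
    rw [Fintype.sum_unique]
    unfold wterm
    rw [gw, wgap_cons_zero, Fin.prod_univ_succ]
    simp only [Fin.cons_zero, Fin.cons_succ]
    split_ifs
    · simp
    · simp; ring
  | (m+2) =>
    rw [sum_fcons]
    rw [vv, mul_add, Finset.mul_sum, ← filt_ge, Finset.mul_sum, Finset.mul_sum, Finset.mul_sum]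
    rw [← Finset.filter_gt_eq_Iio, Finset.sum_filter, ← Finset.sum_add_distrib]
    refine Finset.sum_congr rfl fun b _ => ?_
    split_ifs with h
    · rw [mul_zero, zero_add, sum_fcons, ← filt_ge, Finset.mul_sum, Finset.mul_sum, Finset.mul_sum]
      refine Finset.sum_congr rfl fun d _ => ?_
      simp only [wterm_cons, h, if_true, Fin.cons_zero]
      split_ifs
      · simp
      · rw [← ih m (by omega) d]
        simp only [Finset.mul_sum]
        refine Finset.sum_congr rfl fun u _ => by ring
    · rw [add_zero, ← ih (m+1) (by omega) b, sum_fcons, sum_fcons]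
      simp only [wterm_cons, h, if_false]
      simp only [Finset.mul_sum]
      refine Finset.sum_congr rfl fun d _ => Finset.sum_congr rfl fun u _ => by ring

lemma word_coeff [IsDomain R] (r : ℕ) (t : R) (ht : t ≠ 1) (m : ℕ) (a : Fin r →₀ ℕ) (ha : a.degree = m + 1) :
    ∑ w : Fin (m+1) → Fin r, gw t m (wgap w) * MvPolynomial.coeff a (∏ i, MvPolynomial.X (w i) : MvPolynomial (Fin r) R) = ∑ j ∈ range (m + 2),
      t^j * MvPolynomial.coeff a ((∑ b, MvPolynomial.X b)^j * ∏ c, Fac t c (a c)) := by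
  rw [← vv_coeff r t ht m a ha]
  simp only [← wterm_sum]
  rw [← sum_fcons, MvPolynomial.coeff_sum]
  simp only [wterm, MvPolynomial.coeff_C_mul]

end PartC

section PartE
variable {R : Type} [CommRing R]

def OkGap (m : ℕ) (d : ℕ → Prop) : Prop :=
  (∀ i, i + 1 = m → ¬ d i) ∧ (∀ i, i + 1 < m → d i → ¬ d (i+1))

open Classical in
noncomputable def cGap (m : ℕ) (d : ℕ → Prop) : ℕ := ∑ i ∈ Finset.range m, if d i then 1 else 0

lemma cGap_succ (m : ℕ) (d : ℕ → Prop) [Decidable (d 0)] :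
    cGap (m+1) d = cGap m (fun i => d (i+1)) + if d 0 then 1 else 0 := by
  unfold cGap
  rw [Finset.sum_range_succ']
  congr

lemma gw_closed (t : R) (m : ℕ) : ∀ (d : ℕ → Prop),
    (OkGap m d → 2 * cGap m d ≤ m ∧ gw t m d = t ^ (cGap m d) * (1 + t)^(m - 2 * cGap m d))
    ∧ (¬ OkGap m d → gw t m d = 0) := by
  classical
  induction m using Nat.strong_induction_on with
  | _ m ih =>
  intro d
  match m with
  | 0 => 
    refine ⟨fun _ => by simp [cGap, gw], fun h => absurd ?_ h⟩
    exact ⟨fun i hi => by omega, fun i hi => by omega⟩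
  | 1 =>
    refine ⟨fun h => ?_, fun h => ?_⟩
    · have : ¬ d 0 := h.1 0 rfl
      have hc : cGap 1 d = 0 := by rw [cGap_succ]; simp [cGap, this]
      simp [hc, gw, this]
    · by_cases h0 : d 0
      · simp [gw, h0]
      · exact absurd ⟨fun i hi => by obtain rfl : i = 0 := by omega
                                     exact h0, fun i hi => by omega⟩ h
  | (m+2) =>
    by_cases h0 : d 0
    · by_cases h1 : d 1
      · have hn : ¬ OkGap (m+2) d := fun h => h.2 0 (by omega) h0 h1
        exact ⟨fun h => absurd h hn, fun _ => by simp [gw, h0, h1]⟩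
      · have hiff : OkGap (m+2) d ↔ OkGap m (fun i => d (i+2)) := by
          constructor
          · rintro ⟨a, b⟩
            exact ⟨fun i hi => a (i+2) (by omega), fun i hi => b (i+2) (by omega)⟩
          · rintro ⟨a, b⟩
            refine ⟨fun i hi => ?_, fun i hi => ?_⟩
            · match i with
              | 0 => omega
              | 1 => exact h1
              | (i+2) => exact a i (by omega)
            · match i with
              | 0 => exact fun _ => h1
              | 1 => exact fun h => absurd h h1
              | (i+2) => exact b i (by omega)
        have hc : cGap (m+2) d = cGap m (fun i => d (i+2)) + 1 := by
          rw [cGap_succ, cGap_succ]; simp [h0, h1]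
        have hg : gw t (m+2) d = t * gw t m (fun i => d (i+2)) := by simp [gw, h0, h1]
        obtain ⟨i1, i2⟩ := ih m (by omega) (fun i => d (i+2))
        rw [hiff, hc, hg]
        refine ⟨fun h => ?_, fun h => by rw [i2 h, mul_zero]⟩
        obtain ⟨h3, h4⟩ := i1 h
        refine ⟨by omega, ?_⟩
        rw [h4, show m + 2 - 2 * (cGap m (fun i => d (i+2)) + 1) = m - 2 * cGap m (fun i => d (i+2)) by omega]
        ring
    · have hiff : OkGap (m+2) d ↔ OkGap (m+1) (fun i => d (i+1)) := by
        constructor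
        · rintro ⟨a, b⟩
          exact ⟨fun i hi => a (i+1) (by omega), fun i hi => b (i+1) (by omega)⟩
        · rintro ⟨a, b⟩
          refine ⟨fun i hi => ?_, fun i hi => ?_⟩
          · match i with
            | 0 => omega
            | (i+1) => exact a i (by omega)
          · match i with
            | 0 => exact fun h => absurd h h0
            | (i+1) => exact b i (by omega)
      have hc : cGap (m+2) d = cGap (m+1) (fun i => d (i+1)) := by
        rw [cGap_succ]; simp [h0]
      have hg : gw t (m+2) d = (1 + t) * gw t (m+1) (fun i => d (i+1)) := by simp [gw, h0]
      obtain ⟨i1, i2⟩ := ih (m+1) (by omega) (fun i => d (i+1))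
      rw [hiff, hc, hg]
      refine ⟨fun h => ?_, fun h => by rw [i2 h, mul_zero]⟩
      obtain ⟨h3, h4⟩ := i1 h
      refine ⟨by omega, ?_⟩
      rw [h4, show m + 2 - 2 * cGap (m+1) (fun i => d (i+1)) = (m + 1 - 2 * cGap (m+1) (fun i => d (i+1))) + 1 by omega]
      ring

lemma mem_pDES {m : ℕ} (σ : Equiv.Perm (Fin (m+1))) (i : ℕ) :
    i + 1 ∈ pDES σ ↔ wgap (fun j => σ j) i := by
  unfold pDES wgap
  rw [Finset.mem_filter, Finset.mem_Icc]
  constructor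
  · rintro ⟨h, h2⟩
    have h3 : i + 1 < m + 1 := by omega
    refine ⟨h3, ?_⟩
    unfold pval at h2
    rw [dif_pos (by omega), dif_pos (by omega)] at h2
    rw [Fin.lt_def]
    simpa using h2
  · rintro ⟨h, h2⟩
    refine ⟨by omega, ?_⟩
    unfold pval
    rw [dif_pos (by omega), dif_pos (by omega)]
    rw [Fin.lt_def] at h2
    simpa using h2

lemma gw_perm (t : R) {m : ℕ} (σ : Equiv.Perm (Fin (m+1))) :
    (pDES σ ⊆ Finset.Icc 1 (m + 1 - 2) ∧ NoTwoConsec (pDES σ) → 2 * (pDES σ).card ≤ m ∧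
      gw t m (wgap (fun j => σ j)) = t ^ (pDES σ).card * (1 + t)^(m - 2 * (pDES σ).card))
    ∧ (¬ (pDES σ ⊆ Finset.Icc 1 (m + 1 - 2) ∧ NoTwoConsec (pDES σ)) → gw t m (wgap (fun j => σ j)) = 0) := by
  classical
  have hsub : pDES σ ⊆ Finset.Icc 1 m := Finset.filter_subset _ _
  have hc : cGap m (wgap (fun j => σ j)) = (pDES σ).card := by
    rw [Finset.card_eq_sum_ones, sum_mem_icc m (pDES σ) hsub (fun _ => 1)]
    unfold cGap
    simp only [mem_pDES, one_mul]
  have hok : OkGap m (wgap (fun j => σ j)) ↔ (pDES σ ⊆ Finset.Icc 1 (m + 1 - 2) ∧ NoTwoConsec (pDES σ)) := by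
    unfold OkGap NoTwoConsec
    simp only [← mem_pDES]
    constructor
    · rintro ⟨a, b⟩
      refine ⟨fun x hx => ?_, fun x hx hx2 => ?_⟩
      · have := Finset.mem_Icc.1 (hsub hx)
        rw [Finset.mem_Icc]
        refine ⟨this.1, ?_⟩
        by_contra hcon
        have e : x = (m - 1) + 1 := by omega
        rw [e] at hx
        exact a (m-1) (by omega) hx
      · have h1 := Finset.mem_Icc.1 (hsub hx)
        have h2 := Finset.mem_Icc.1 (hsub hx2)
        obtain ⟨y, rfl⟩ : ∃ y, x = y + 1 := ⟨x - 1, by omega⟩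
        exact b y (by omega) hx hx2
    · rintro ⟨a, b⟩
      refine ⟨fun i hi hx => ?_, fun i hi => b (i+1)⟩
      have := Finset.mem_Icc.1 (a hx)
      omega
  have := gw_closed t m (wgap (fun j => σ j))
  rw [hok, hc] at this
  exact this

lemma assemble (m : ℕ) (hT : ∀ T : Finset ℕ,
    ∑ σ ∈ Finset.univ.filter (fun σ : Equiv.Perm (Fin (m+1)) => pDEX σ ⊆ T), (MvPolynomial.X 2 : MvPolynomial (Fin 3) ℤ) ^ pexc σ
     = ∑ σ ∈ Finset.univ.filter (fun σ : Equiv.Perm (Fin (m+1)) => pDES σ⁻¹ ⊆ T), gw (MvPolynomial.X 2 : MvPolynomial (Fin 3) ℤ) m (wgap (fun j => σ j))) :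
    (∑ σ : Equiv.Perm (Fin (m+1)),
        (MvPolynomial.X 0 : MvPolynomial (Fin 3) ℤ) ^ pdesStar σ *
          MvPolynomial.X 1 ^ (pmaj σ - pexc σ) * MvPolynomial.X 2 ^ pexc σ) =
    ∑ k ∈ Finset.range ((m + 1 - 1) / 2 + 1),
      (∑ σ ∈ Finset.univ.filter
          (fun σ : Equiv.Perm (Fin (m+1)) =>
            pDES σ ⊆ Finset.Icc 1 (m + 1 - 2) ∧ NoTwoConsec (pDES σ) ∧ (pDES σ).card = k),
        (MvPolynomial.X 0 : MvPolynomial (Fin 3) ℤ) ^ pdes (σ⁻¹) *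
          MvPolynomial.X 1 ^ pmaj (σ⁻¹)) *
        MvPolynomial.X 2 ^ k * (1 + MvPolynomial.X 2) ^ (m + 1 - 1 - 2 * k) := by
  have h := mobius_weighted (fun σ : Equiv.Perm (Fin (m+1)) => pDEX σ) (fun σ : Equiv.Perm (Fin (m+1)) => pDES σ⁻¹) _ _ hT
    m (fun σ => Finset.filter_subset _ _) (fun σ => Finset.filter_subset _ _)
    (fun U => (MvPolynomial.X 0 : MvPolynomial (Fin 3) ℤ) ^ U.card * MvPolynomial.X 1 ^ (∑ i ∈ U, i))
  simp only [dex_card, dex_sum] at h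
  rw [h]
  have e1 : ∀ k ∈ Finset.range ((m + 1 - 1) / 2 + 1), 
     (∑ σ ∈ Finset.univ.filter
          (fun σ : Equiv.Perm (Fin (m+1)) =>
            pDES σ ⊆ Finset.Icc 1 (m + 1 - 2) ∧ NoTwoConsec (pDES σ) ∧ (pDES σ).card = k),
        (MvPolynomial.X 0 : MvPolynomial (Fin 3) ℤ) ^ pdes (σ⁻¹) *
          MvPolynomial.X 1 ^ pmaj (σ⁻¹)) *
        MvPolynomial.X 2 ^ k * (1 + MvPolynomial.X 2) ^ (m + 1 - 1 - 2 * k)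
      = ∑ σ ∈ (Finset.univ.filter (fun σ : Equiv.Perm (Fin (m+1)) =>
            pDES σ ⊆ Finset.Icc 1 (m + 1 - 2) ∧ NoTwoConsec (pDES σ))).filter (fun σ => (pDES σ).card = k),
        (MvPolynomial.X 0 : MvPolynomial (Fin 3) ℤ) ^ pdes (σ⁻¹) *
          MvPolynomial.X 1 ^ pmaj (σ⁻¹) * gw (MvPolynomial.X 2 : MvPolynomial (Fin 3) ℤ) m (wgap (fun j => σ j)) := by
    intro k hk
    rw [Finset.filter_filter, mul_assoc, Finset.sum_mul]
    simp only [and_assoc]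
    refine Finset.sum_congr rfl fun σ hσ => ?_
    obtain ⟨_, a, b, c⟩ := Finset.mem_filter.1 hσ
    rw [((gw_perm (MvPolynomial.X 2 : MvPolynomial (Fin 3) ℤ) σ).1 ⟨a, b⟩).2, c]
    rfl
  rw [Finset.sum_congr rfl e1, Finset.sum_fiberwise_of_maps_to, Finset.sum_filter]
  · refine Finset.sum_congr rfl fun σ _ => ?_
    split_ifs with hok
    · rfl
    · rw [(gw_perm (MvPolynomial.X 2 : MvPolynomial (Fin 3) ℤ) σ).2 hok, mul_zero]
  · intro σ hσ
    have := ((gw_perm (MvPolynomial.X 2 : MvPolynomial (Fin 3) ℤ) σ).1 (Finset.mem_filter.1 hσ).2).1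
    rw [Finset.mem_range]
    omega

end PartE

section PartF
variable {R : Type} [CommRing R]

noncomputable def cont {n r : ℕ} (w : Fin n → Fin r) : Fin r →₀ ℕ := ∑ i, Finsupp.single (w i) 1

lemma cont_comp {n r : ℕ} (w : Fin n → Fin r) (σ : Equiv.Perm (Fin n)) : cont (fun i => w (σ i)) = cont w :=
  Equiv.sum_comp σ (fun i => Finsupp.single (w i) 1)

lemma cont_degree {n r : ℕ} (w : Fin n → Fin r) : (cont w).degree = n := by
  unfold cont
  rw [map_sum]
  simp

lemma cont_apply {n r : ℕ} (w : Fin n → Fin r) (c : Fin r) :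
    cont w c = (univ.filter (fun v => w v = c)).card := by
  unfold cont
  rw [Finsupp.finset_sum_apply, Finset.card_filter]
  exact Finset.sum_congr rfl fun i _ => by rw [Finsupp.single_apply]

lemma coeff_cont {n r : ℕ} (w : Fin n → Fin r) (a : Fin r →₀ ℕ) :
    MvPolynomial.coeff a (∏ i, MvPolynomial.X (w i) : MvPolynomial (Fin r) R) = if cont w = a then 1 else 0 := by
  have : (∏ i, MvPolynomial.X (w i) : MvPolynomial (Fin r) R) = MvPolynomial.monomial (cont w) 1 := by
    unfold cont
    rw [MvPolynomial.monomial_sum_one]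
    rfl
  rw [this, MvPolynomial.coeff_monomial]

lemma mono_unique {n r : ℕ} (f g : Fin n → Fin r) (hf : Monotone f) (hg : Monotone g) (h : cont f = cont g) : f = g := by
  have key : ∀ f : Fin n → Fin r, Finsupp.toMultiset (cont f) = (List.ofFn f : Multiset (Fin r)) := by
    intro f
    unfold cont
    rw [map_sum, ← Fin.univ_val_map]
    simp only [Finsupp.toMultiset_single, one_smul]
    have := Multiset.sum_map_singleton (Multiset.map f univ.val)
    rw [Multiset.map_map] at this
    exact this
  have h2 := key f
  rw [h, key g, Multiset.coe_eq_coe] at h2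
  exact List.ofFn_injective (h2.symm.eq_of_sortedLE hf.sortedLE_ofFn hg.sortedLE_ofFn)

def LexAdj {m : ℕ} {α : Type} [LinearOrder α] (f : Fin (m+1) → α) (σ : Equiv.Perm (Fin (m+1))) : Prop :=
  ∀ i : Fin m, f (σ i.castSucc) < f (σ i.succ) ∨ (f (σ i.castSucc) = f (σ i.succ) ∧ σ i.castSucc < σ i.succ)

lemma LexAdj.lt {m : ℕ} {α : Type} [LinearOrder α] {f : Fin (m+1) → α} {σ : Equiv.Perm (Fin (m+1))}
    (h : LexAdj f σ) (i j : Fin (m+1)) (hij : i < j) :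
    f (σ i) < f (σ j) ∨ (f (σ i) = f (σ j) ∧ σ i < σ j) := by
  have : StrictMono (fun i => toLex (f (σ i), σ i)) := by
    rw [Fin.strictMono_iff_lt_succ]
    intro i
    exact Prod.Lex.toLex_lt_toLex.2 (h i)
  exact Prod.Lex.toLex_lt_toLex.1 (this hij)

lemma LexAdj.eq_sort {m : ℕ} {α : Type} [LinearOrder α] {f : Fin (m+1) → α} {σ : Equiv.Perm (Fin (m+1))}
    (h : LexAdj f σ) : σ = Tuple.sort f := by
  rw [Tuple.eq_sort_iff]
  constructor
  · intro i j hij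
    rcases hij.eq_or_lt with rfl | hlt
    · exact le_rfl
    · rcases h.lt i j hlt with h1 | h1
      · exact h1.le
      · exact h1.1.le
  · intro i j hij he
    rcases h.lt i j hij with h1 | h1
    · exact absurd he h1.ne
    · exact h1.2

lemma lexAdj_sort {m : ℕ} {α : Type} [LinearOrder α] (f : Fin (m+1) → α) : LexAdj f (Tuple.sort f) := by
  obtain ⟨h1, h2⟩ := Tuple.eq_sort_iff.1 (rfl : Tuple.sort f = Tuple.sort f)
  intro i
  rcases (h1 (Fin.castSucc_lt_succ (i := i)).le).eq_or_lt with h | h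
  · exact Or.inr ⟨h, h2 _ _ Fin.castSucc_lt_succ h⟩
  · exact Or.inl h

/-- block index function -/
structure TopData (m : ℕ) (T : Finset ℕ) where
  top : Fin (m+1) → Fin (m+1)
  mono : Monotone top
  step : ∀ i : Fin m, top i.castSucc < top i.succ ↔ (i : ℕ) + 1 ∈ T
  prev : ∀ v b, b < top v → ∃ u < v, b ≤ top u

def topData (m : ℕ) (T : Finset ℕ) : TopData m T where
  top i := ⟨((Finset.Icc 1 i.val) ∩ T).card, by
    have := Finset.card_le_card (Finset.inter_subset_left (s₁ := Finset.Icc 1 i.val) (s₂ := T))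
    rw [Nat.card_Icc] at this
    omega⟩
  mono := fun i j hij => by
    rw [Fin.le_def]
    exact Finset.card_le_card (Finset.inter_subset_inter_right (Finset.Icc_subset_Icc_right (Fin.le_def.1 hij)))
  step := fun i => by
    rw [Fin.lt_def]
    simp only [Fin.val_castSucc, Fin.val_succ]
    have : Finset.Icc 1 (i.val + 1) = insert (i.val + 1) (Finset.Icc 1 i.val) := by
      ext x; simp; omega
    rw [this]
    by_cases h : i.val + 1 ∈ T
    · rw [Finset.insert_inter_of_mem h, Finset.card_insert_of_notMem (by simp)]
      simp [h]
    · rw [Finset.insert_inter_of_notMem h]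
      simp [h]
  prev := fun v b hb => by
    rw [Fin.lt_def] at hb
    simp only at hb
    rcases hv : v.val with _ | k
    · rw [hv] at hb; simp at hb
    · refine ⟨⟨k, by omega⟩, by rw [Fin.lt_def]; simp [hv], ?_⟩
      rw [Fin.le_def]
      simp only
      have : Finset.Icc 1 (k + 1) = insert (k + 1) (Finset.Icc 1 k) := by
        ext x; simp; omega
      rw [hv, this] at hb
      have h2 : (insert (k+1) (Finset.Icc 1 k) ∩ T).card ≤ (insert (k+1) (Finset.Icc 1 k ∩ T)).card := by
        apply Finset.card_le_card
        intro x hx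
        simp only [Finset.mem_inter, Finset.mem_insert] at hx ⊢
        tauto
      have h3 := Finset.card_insert_le (k+1) (Finset.Icc 1 k ∩ T)
      omega

lemma pDES_sub_iff {m : ℕ} (τ : Equiv.Perm (Fin (m+1))) (T : Finset ℕ) :
    pDES τ ⊆ T ↔ ∀ i : Fin m, (i : ℕ) + 1 ∉ T → τ i.castSucc < τ i.succ := by
  constructor
  · intro h i hi
    by_contra hc
    apply hi
    apply h
    rw [mem_pDES]
    refine ⟨by omega, ?_⟩
    refine lt_of_le_of_ne (not_lt.1 hc) ?_
    intro he
    have := congrArg Fin.val (τ.injective he)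
    simp at this
  · intro h x hx
    have hx2 := Finset.mem_Icc.1 (Finset.filter_subset _ _ hx)
    obtain ⟨y, rfl⟩ : ∃ y, x = y + 1 := ⟨x - 1, by omega⟩
    rw [mem_pDES] at hx
    obtain ⟨h1, h2⟩ := hx
    by_contra hc
    exact absurd (h ⟨y, by omega⟩ hc) (not_lt.2 h2.le)

/-- Step R -/
lemma stepR {m : ℕ} {T : Finset ℕ} (D : TopData m T) (t : R) :
    ∑ σ ∈ univ.filter (fun σ : Equiv.Perm (Fin (m+1)) => pDES σ⁻¹ ⊆ T), gw t m (wgap (fun j => σ j))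
    = ∑ w ∈ univ.filter (fun w : Fin (m+1) → Fin (m+1) => cont w = cont D.top), gw t m (wgap w) := by
  have hadj : ∀ σ : Equiv.Perm (Fin (m+1)), pDES σ⁻¹ ⊆ T → LexAdj (fun i => D.top (σ i)) σ⁻¹ := by
    intro σ h i
    rw [pDES_sub_iff] at h
    have hs : ∀ x, σ (σ⁻¹ x) = x := fun x => by simp
    simp only [hs]
    by_cases hT : (i : ℕ) + 1 ∈ T
    · exact Or.inl ((D.step i).2 hT)
    · refine Or.inr ⟨?_, h i hT⟩
      have := mt (D.step i).1 hT
      exact le_antisymm (D.mono Fin.castSucc_lt_succ.le) (not_lt.1 this)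
  refine Finset.sum_bij' (fun σ _ => fun i => D.top (σ i)) (fun w _ => (Tuple.sort w)⁻¹) ?_ ?_ ?_ ?_ ?_
  · intro σ _
    simp [cont_comp]
  · intro w hw
    simp only [Finset.mem_filter, Finset.mem_univ, true_and, inv_inv] at hw ⊢
    have htop : w ∘ Tuple.sort w = D.top := mono_unique _ _ (Tuple.monotone_sort w) D.mono (by
      rw [← hw]; exact cont_comp w _)
    rw [pDES_sub_iff]
    intro i hi
    rcases lexAdj_sort w i with h | h
    · exfalso
      apply hi
      rw [← D.step, ← htop]
      exact h
    · exact h.2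
  · intro σ hσ
    simp only [Finset.mem_filter, Finset.mem_univ, true_and] at hσ
    rw [← (hadj σ hσ).eq_sort, inv_inv]
  · intro w hw
    simp only [Finset.mem_filter, Finset.mem_univ, true_and] at hw
    have htop : w ∘ Tuple.sort w = D.top := mono_unique _ _ (Tuple.monotone_sort w) D.mono (by
      rw [← hw]; exact cont_comp w _)
    funext i
    rw [← htop]
    simp
  · intro σ hσ
    simp only [Finset.mem_filter, Finset.mem_univ, true_and] at hσ
    congr 1
    funext i
    unfold wgap
    apply propext
    constructor
    · rintro ⟨h, h2⟩
      refine ⟨h, ?_⟩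
      refine lt_of_le_of_ne (D.mono h2.le) ?_
      intro he
      rcases (hadj σ hσ).lt _ _ h2 with h3 | h3
      · have hs : ∀ x, σ (σ⁻¹ x) = x := fun x => by simp
        simp only [hs] at h3
        exact absurd he h3.ne
      · have := h3.2
        simp [Fin.lt_def] at this
    · rintro ⟨h, h2⟩
      exact ⟨h, D.mono.reflect_lt h2⟩

end PartF

section PartG
variable {R : Type} [CommRing R]

lemma xexc_fin {m : ℕ} (σ : Equiv.Perm (Fin (m+1))) (i : Fin (m+1)) :
    xexc σ (i.val + 1) ↔ i < σ i := by
  unfold xexc pval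
  have := i.isLt
  rw [dif_pos (by omega), Fin.lt_def]
  simp

lemma pexc_fin {m : ℕ} (σ : Equiv.Perm (Fin (m+1))) :
    pexc σ = ∑ i : Fin (m+1), (if i < σ i then 1 else 0) := by
  have h0 : pexc σ = ∑ i ∈ Finset.range (m+1), (if xexc σ (i+1) then 1 else 0) := by
    unfold pexc
    rw [Finset.card_eq_sum_ones, sum_mem_icc (m+1) _ (Finset.filter_subset _ _) (fun _ => 1)]
    refine Finset.sum_congr rfl fun i hi => ?_
    simp only [Finset.mem_filter, Finset.mem_Icc, one_mul, xexc]
    have := Finset.mem_range.1 hi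
    split_ifs <;> omega
  rw [h0, Finset.sum_range]
  simp only [xexc_fin]

lemma pDEX_sub_iff {m : ℕ} (σ : Equiv.Perm (Fin (m+1))) (T : Finset ℕ) :
    pDEX σ ⊆ T ↔ ∀ i : Fin m, (i : ℕ) + 1 ∉ T →
      (decide (σ i.castSucc ≤ i.castSucc) < decide (σ i.succ ≤ i.succ)) ∨
      (decide (σ i.castSucc ≤ i.castSucc) = decide (σ i.succ ≤ i.succ) ∧ σ i.castSucc < σ i.succ) := by
  have key : ∀ i : Fin m, ((i : ℕ) + 1 ∈ pDEX σ ↔ ¬ ((decide (σ i.castSucc ≤ i.castSucc) < decide (σ i.succ ≤ i.succ)) ∨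
      (decide (σ i.castSucc ≤ i.castSucc) = decide (σ i.succ ≤ i.succ) ∧ σ i.castSucc < σ i.succ))) := by
    intro i
    have h1 : (i : ℕ) + 1 ∈ Finset.Icc 1 (m + 1 - 1) := by simp
    simp only [pDEX, Finset.mem_filter, h1, true_and]
    have x1 := xexc_fin σ i.castSucc
    have x2 := xexc_fin σ i.succ
    simp only [Fin.val_castSucc, Fin.val_succ] at x1 x2
    rw [x1, x2]
    have hd : pval σ ((i:ℕ) + 1 + 1) < pval σ ((i:ℕ) + 1) ↔ σ i.succ < σ i.castSucc := by
      unfold pval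
      have := i.isLt
      rw [dif_pos (by omega), dif_pos (by omega), Fin.lt_def]
      simp only [Nat.add_sub_cancel, add_lt_add_iff_right]
      rfl
    rw [hd]
    have hne : σ i.succ ≠ σ i.castSucc := by
      intro he
      have := congrArg Fin.val (σ.injective he)
      simp at this
    have a1 : i.castSucc < σ i.castSucc ↔ ¬ σ i.castSucc ≤ i.castSucc := not_le.symm
    have b1 : i.succ < σ i.succ ↔ ¬ σ i.succ ≤ i.succ := not_le.symm
    rw [a1, b1]
    have hlt : σ i.succ < σ i.castSucc ↔ ¬ σ i.castSucc < σ i.succ := by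
      rw [not_lt]
      exact ⟨le_of_lt, fun h => lt_of_le_of_ne h hne⟩
    rw [hlt]
    by_cases a : σ i.castSucc ≤ i.castSucc <;> by_cases b : σ i.succ ≤ i.succ <;>
      by_cases c : σ i.castSucc < σ i.succ <;> simp [a, b, c]
  constructor
  · intro h i hi
    by_contra hc
    exact hi (h ((key i).2 hc))
  · intro h x hx
    have hx2 := Finset.mem_Icc.1 (Finset.filter_subset _ _ hx)
    obtain ⟨y, rfl⟩ : ∃ y, x = y + 1 := ⟨x - 1, by omega⟩
    by_contra hc
    have hk := (key ⟨y, by omega⟩).1 hx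
    exact hk (h ⟨y, by omega⟩ hc)

def Allow {m : ℕ} (top : Fin (m+1) → Fin (m+1)) (v : Fin (m+1)) (k : Fin (m+1) × Bool) : Prop :=
  (k.2 = true → top v ≤ k.1) ∧ (k.2 = false → ∃ u < v, k.1 ≤ top u)

instance {m : ℕ} (top : Fin (m+1) → Fin (m+1)) (v : Fin (m+1)) (k : Fin (m+1) × Bool) : Decidable (Allow top v k) :=
  inferInstanceAs (Decidable ((k.2 = true → top v ≤ k.1) ∧ (k.2 = false → ∃ u < v, k.1 ≤ top u)))

/-- flags of an allowed key word are determined -/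
lemma flags {m : ℕ} {T : Finset ℕ} (D : TopData m T) (κ : Fin (m+1) → Fin (m+1) × Bool)
    (hal : ∀ v, Allow D.top v (κ v)) (σ : Equiv.Perm (Fin (m+1)))
    (hadj : LexAdj (fun v => toLex (κ v)) σ) (htop : ∀ i, (κ (σ i)).1 = D.top i) :
    ∀ i, (κ (σ i)).2 = decide (σ i ≤ i) := by
  have hsame : ∀ i : Fin m, D.top i.castSucc = D.top i.succ →
      (((κ (σ i.castSucc)).2 = false ∧ (κ (σ i.succ)).2 = true) ∨
        ((κ (σ i.castSucc)).2 = (κ (σ i.succ)).2 ∧ σ i.castSucc < σ i.succ)) := by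
    intro i hi
    rcases hadj i with h | ⟨h, h2⟩
    · rcases Prod.Lex.toLex_lt_toLex.1 h with h3 | ⟨_, h3⟩
      · rw [htop, htop, hi] at h3
        exact absurd h3 (lt_irrefl _)
      · exact Or.inl (Bool.lt_iff.1 h3)
    · have := toLex.injective h
      exact Or.inr ⟨by rw [this], h2⟩
  have hexc : ∀ i, (κ (σ i)).2 = false → i < σ i := by
    intro i
    induction i using Fin.induction with
    | zero =>
      intro hf
      obtain ⟨u, hu, _⟩ := (hal (σ 0)).2 hf
      exact lt_of_le_of_lt (Fin.zero_le u) hu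
    | succ i ih =>
      intro hf
      by_cases hi : D.top i.castSucc = D.top i.succ
      · rcases hsame i hi with ⟨_, h⟩ | ⟨h, h2⟩
        · rw [hf] at h; exact absurd h (by simp)
        · have := ih (h.trans hf)
          rw [Fin.lt_def] at *
          simp only [Fin.val_castSucc, Fin.val_succ] at *
          omega
      · obtain ⟨u, hu, hle⟩ := (hal (σ i.succ)).2 hf
        rw [htop] at hle
        have hlt : D.top i.castSucc < D.top i.succ := lt_of_le_of_ne (D.mono Fin.castSucc_lt_succ.le) hi
        have := D.mono.reflect_lt (lt_of_lt_of_le hlt hle)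
        rw [Fin.lt_def] at *
        simp only [Fin.val_castSucc, Fin.val_succ] at *
        omega
  have hnon : ∀ i, (κ (σ i)).2 = true → σ i ≤ i := by
    intro i
    induction i using Fin.reverseInduction with
    | last => intro _; exact Fin.le_last _
    | cast i ih =>
      intro hf
      by_cases hi : D.top i.castSucc = D.top i.succ
      · rcases hsame i hi with ⟨h, _⟩ | ⟨h, h2⟩
        · rw [hf] at h; exact absurd h (by simp)
        · have := ih (h.symm.trans hf)
          rw [Fin.lt_def] at *
          rw [Fin.le_def] at *
          simp only [Fin.val_castSucc, Fin.val_succ] at *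
          omega
      · have hle := (hal (σ i.castSucc)).1 hf
        rw [htop] at hle
        have hlt : D.top i.castSucc < D.top i.succ := lt_of_le_of_ne (D.mono Fin.castSucc_lt_succ.le) hi
        have := D.mono.reflect_lt (lt_of_le_of_lt hle hlt)
        rw [Fin.lt_def] at *
        rw [Fin.le_def] at *
        simp only [Fin.val_castSucc, Fin.val_succ] at *
        omega
  intro i
  cases hb : (κ (σ i)).2 with
  | true => simp [hnon i hb]
  | false => simp [hexc i hb]

lemma fst_mono {m : ℕ} (κ : Fin (m+1) → Fin (m+1) × Bool) (σ : Equiv.Perm (Fin (m+1)))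
    (hadj : LexAdj (fun v => toLex (κ v)) σ) : Monotone (fun i => (κ (σ i)).1) := by
  rw [Fin.monotone_iff_le_succ]
  intro i
  rcases hadj i with h | ⟨h, h2⟩
  · rcases Prod.Lex.toLex_lt_toLex.1 h with h3 | ⟨h3, _⟩
    · exact h3.le
    · exact h3.le
  · have := toLex.injective h
    simp only [this]
    exact le_rfl

/-- Step L -/
lemma stepL {m : ℕ} {T : Finset ℕ} (D : TopData m T) (t : R) :
    ∑ σ ∈ univ.filter (fun σ : Equiv.Perm (Fin (m+1)) => pDEX σ ⊆ T), t ^ pexc σ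
    = ∑ κ ∈ univ.filter (fun κ : Fin (m+1) → Fin (m+1) × Bool =>
        (∀ v, Allow D.top v (κ v)) ∧ cont (fun v => (κ v).1) = cont D.top),
        ∏ v, (if (κ v).2 = true then 1 else t) := by
  have hss : ∀ (σ : Equiv.Perm (Fin (m+1))) x, σ (σ⁻¹ x) = x := fun σ x => by simp
  have hss' : ∀ (σ : Equiv.Perm (Fin (m+1))) x, σ⁻¹ (σ x) = x := fun σ x => by simp
  have hadj : ∀ σ : Equiv.Perm (Fin (m+1)), pDEX σ ⊆ T →
      LexAdj (fun v => toLex ((D.top (σ⁻¹ v), decide (v ≤ σ⁻¹ v)) : Fin (m+1) × Bool)) σ := by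
    intro σ h i
    rw [pDEX_sub_iff] at h
    simp only [hss']
    by_cases hT : (i : ℕ) + 1 ∈ T
    · exact Or.inl (Prod.Lex.toLex_lt_toLex.2 (Or.inl ((D.step i).2 hT)))
    · have h1 := mt (D.step i).1 hT
      have h2 := le_antisymm (D.mono (Fin.castSucc_lt_succ (i := i)).le) (not_lt.1 h1)
      rcases h i hT with h3 | ⟨h3, h4⟩
      · exact Or.inl (Prod.Lex.toLex_lt_toLex.2 (Or.inr ⟨h2, h3⟩))
      · exact Or.inr ⟨by rw [h2, h3], h4⟩
  have hback : ∀ κ : Fin (m+1) → Fin (m+1) × Bool, cont (fun v => (κ v).1) = cont D.top →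
      ∀ i, (κ (Tuple.sort (fun v => toLex (κ v)) i)).1 = D.top i := by
    intro κ hκ i
    have := mono_unique _ _ (fst_mono κ _ (lexAdj_sort (fun v => toLex (κ v)))) D.mono (by
      rw [← hκ]; exact cont_comp (fun v => (κ v).1) _)
    exact congrFun this i
  refine Finset.sum_bij' (fun σ _ => fun v => (D.top (σ⁻¹ v), decide (v ≤ σ⁻¹ v)))
    (fun κ _ => Tuple.sort (fun v => toLex (κ v))) ?_ ?_ ?_ ?_ ?_
  · intro σ _
    simp only [Finset.mem_filter, Finset.mem_univ, true_and]
    refine ⟨fun v => ⟨fun h => ?_, fun h => ?_⟩, cont_comp D.top σ⁻¹⟩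
    · exact D.mono (by simpa using h)
    · exact ⟨σ⁻¹ v, by simpa using h, le_rfl⟩
  · intro κ hκ
    simp only [Finset.mem_filter, Finset.mem_univ, true_and] at hκ ⊢
    have htop := hback κ hκ.2
    have hs := lexAdj_sort (fun v => toLex (κ v))
    have hfl := flags D κ hκ.1 _ hs htop
    rw [pDEX_sub_iff]
    intro i hi
    have h1 := mt (D.step i).1 hi
    rw [← hfl, ← hfl]
    rcases hs i with h | ⟨h, h2⟩
    · rcases Prod.Lex.toLex_lt_toLex.1 h with h3 | ⟨_, h3⟩
      · rw [htop, htop] at h3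
        exact absurd h3 h1
      · exact Or.inl h3
    · have := toLex.injective h
      exact Or.inr ⟨by rw [this], h2⟩
  · intro σ hσ
    simp only [Finset.mem_filter, Finset.mem_univ, true_and] at hσ
    exact (hadj σ hσ).eq_sort.symm
  · intro κ hκ
    simp only [Finset.mem_filter, Finset.mem_univ, true_and] at hκ
    have htop := hback κ hκ.2
    have hs := lexAdj_sort (fun v => toLex (κ v))
    have hfl := flags D κ hκ.1 _ hs htop
    funext v
    obtain ⟨i, rfl⟩ := (Tuple.sort (fun v => toLex (κ v))).surjective v
    rw [hss', ← htop, ← hfl]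
  · intro σ hσ
    rw [pexc_fin, ← Finset.prod_pow_eq_pow_sum, ← Equiv.prod_comp σ (fun v => if (decide (v ≤ σ⁻¹ v)) = true then 1 else t)]
    refine Finset.prod_congr rfl fun i _ => ?_
    rw [hss']
    by_cases h : i < σ i
    · simp [h, not_le.2 h]
    · simp [h, not_lt.1 h]

open Classical in
noncomputable def Mv {m : ℕ} (top : Fin (m+1) → Fin (m+1)) (t : R) (v : Fin (m+1)) : MvPolynomial (Fin (m+1)) R :=
  if ∀ u < v, top u < top v then MvPolynomial.C (1 - t) * ∑ b ∈ Finset.Ici (top v), MvPolynomial.X b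
  else MvPolynomial.X (top v) + MvPolynomial.C (1 - t) * ∑ b ∈ Finset.Ioi (top v), MvPolynomial.X b

lemma Mv_hom {m : ℕ} (top : Fin (m+1) → Fin (m+1)) (t : R) (v : Fin (m+1)) : (Mv top t v).IsHomogeneous 1 := by
  have hs : ∀ s : Finset (Fin (m+1)), (MvPolynomial.C (1 - t) * ∑ b ∈ s, MvPolynomial.X b : MvPolynomial (Fin (m+1)) R).IsHomogeneous 1 := by
    intro s
    have := (MvPolynomial.isHomogeneous_C (Fin (m+1)) (1 - t)).mul
      (MvPolynomial.IsHomogeneous.sum s (fun b => (MvPolynomial.X b : MvPolynomial (Fin (m+1)) R)) 1 (fun b _ => MvPolynomial.isHomogeneous_X R b))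
    simpa using this
  unfold Mv
  split_ifs
  · exact hs _
  · exact (MvPolynomial.isHomogeneous_X R _).add (hs _)

lemma cell_sum {m : ℕ} {T : Finset ℕ} (D : TopData m T) (t : R) (v : Fin (m+1)) :
    ∑ k : Fin (m+1) × Bool, (if Allow D.top v k then MvPolynomial.C (if k.2 = true then 1 else t) * MvPolynomial.X k.1 else 0 : MvPolynomial (Fin (m+1)) R)
     = MvPolynomial.C t * (∑ b, MvPolynomial.X b) + Mv D.top t v := by
  classical
  rw [Fintype.sum_prod_type]
  have hA1 : ∀ b, Allow D.top v (b, true) ↔ D.top v ≤ b := fun b => by simp [Allow]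
  have hA2 : ∀ b, Allow D.top v (b, false) ↔ ∃ u < v, b ≤ D.top u := fun b => by simp [Allow]
  simp only [Fintype.sum_bool, hA1, hA2, if_true, Bool.false_eq_true, if_false]
  unfold Mv
  have hsI : ∀ (p : Fin (m+1) → Prop) [DecidablePred p], ∑ b ∈ univ.filter p, (MvPolynomial.X b : MvPolynomial (Fin (m+1)) R)
     = ∑ b, if p b then MvPolynomial.X b else 0 := fun p _ => Finset.sum_filter _ _
  rw [← Finset.filter_le_eq_Ici, ← Finset.filter_lt_eq_Ioi, hsI, hsI]
  by_cases hf : ∀ u < v, D.top u < D.top v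
  · rw [if_pos hf, Finset.mul_sum, Finset.mul_sum, ← Finset.sum_add_distrib]
    refine Finset.sum_congr rfl fun b _ => ?_
    have hx : (∃ u < v, b ≤ D.top u) ↔ b < D.top v :=
      ⟨fun ⟨u, hu, hb⟩ => lt_of_le_of_lt hb (hf u hu), fun h => D.prev v b h⟩
    simp only [hx]
    by_cases hq : b < D.top v
    · simp [hq, not_le.2 hq]
    · simp [hq, not_lt.1 hq]; ring
  · rw [if_neg hf]
    push Not at hf
    obtain ⟨u0, hu0, hle⟩ := hf
    have hX : (MvPolynomial.X (D.top v) : MvPolynomial (Fin (m+1)) R) = ∑ b, if D.top v = b then MvPolynomial.X b else 0 := by simp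
    rw [hX, Finset.mul_sum, Finset.mul_sum, ← Finset.sum_add_distrib, ← Finset.sum_add_distrib]
    refine Finset.sum_congr rfl fun b _ => ?_
    have hx : (∃ u < v, b ≤ D.top u) ↔ b ≤ D.top v :=
      ⟨fun ⟨u, hu, hb⟩ => hb.trans (D.mono hu.le), fun h => ⟨u0, hu0, h.trans hle⟩⟩
    simp only [hx]
    rcases lt_trichotomy (D.top v) b with h | h | h
    · simp [h, h.le, h.ne, not_le.2 h]; ring
    · subst h; simp; ring
    · simp [h.le, h.ne', not_le.2 h, not_lt.2 h.le]

lemma prod_Mv {m : ℕ} {T : Finset ℕ} (D : TopData m T) (t : R) :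
    ∏ v, (1 + Mv D.top t v) = ∏ c, Fac t c (cont D.top c) := by
  classical
  rw [← Finset.prod_fiberwise univ D.top]
  refine Finset.prod_congr rfl fun c _ => ?_
  rw [cont_apply]
  rcases (univ.filter (fun v => D.top v = c)).eq_empty_or_nonempty with h | h
  · rw [h]; simp [Fac]
  · set S := univ.filter (fun v => D.top v = c) with hS
    have hmem : ∀ v, v ∈ S ↔ D.top v = c := fun v => by simp [hS]
    set v0 := S.min' h with hv0
    have h0 : v0 ∈ S := S.min'_mem h
    have hcard : S.card = (S.erase v0).card + 1 := (Finset.card_erase_add_one h0).symm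
    rw [← Finset.mul_prod_erase S _ h0, hcard, Fac, mul_comm]
    congr 1
    · rw [← Finset.prod_const]
      refine Finset.prod_congr rfl fun v hv => ?_
      have hvS := Finset.mem_of_mem_erase hv
      have hlt : v0 < v := lt_of_le_of_ne (S.min'_le v hvS) (Finset.ne_of_mem_erase hv).symm
      unfold Mv
      rw [if_neg, (hmem v).1 hvS, add_assoc]
      intro hf
      have := hf v0 hlt
      rw [(hmem v).1 hvS, (hmem v0).1 h0] at this
      exact lt_irrefl _ this
    · unfold Mv
      rw [if_pos, (hmem v0).1 h0]
      intro u hu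
      refine lt_of_le_of_ne (D.mono hu.le) fun he => ?_
      have : u ∈ S := (hmem u).2 (he.trans ((hmem v0).1 h0))
      exact absurd (S.min'_le u this) (not_le.2 hu)

lemma stepP {m : ℕ} {T : Finset ℕ} (D : TopData m T) (t : R) :
    ∑ κ ∈ univ.filter (fun κ : Fin (m+1) → Fin (m+1) × Bool =>
        (∀ v, Allow D.top v (κ v)) ∧ cont (fun v => (κ v).1) = cont D.top),
        ∏ v, (if (κ v).2 = true then 1 else t)
    = MvPolynomial.coeff (cont D.top) (∏ v, (MvPolynomial.C t * (∑ b, MvPolynomial.X b) + Mv D.top t v)) := by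
  classical
  simp only [← cell_sum]
  rw [Finset.prod_univ_sum, MvPolynomial.coeff_sum, Finset.sum_filter, Fintype.piFinset_univ]
  refine Finset.sum_congr rfl fun κ _ => ?_
  by_cases hal : ∀ v, Allow D.top v (κ v)
  · simp only [hal, if_true, implies_true, true_and]
    rw [Finset.prod_mul_distrib, ← map_prod, MvPolynomial.coeff_C_mul, coeff_cont]
    split_ifs <;> simp
  · rw [if_neg (fun h => hal h.1)]
    push Not at hal
    obtain ⟨v, hv⟩ := hal
    rw [Finset.prod_eq_zero (Finset.mem_univ v) (if_neg hv)]
    simp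

lemma mainT [IsDomain R] (t : R) (ht : t ≠ 1) (m : ℕ) (T : Finset ℕ) :
    ∑ σ ∈ univ.filter (fun σ : Equiv.Perm (Fin (m+1)) => pDEX σ ⊆ T), t ^ pexc σ
     = ∑ σ ∈ univ.filter (fun σ : Equiv.Perm (Fin (m+1)) => pDES σ⁻¹ ⊆ T), gw t m (wgap (fun j => σ j)) := by
  have D := topData m T
  rw [stepL D, stepP D, stepR D, cells_expand (m+1) (m+1) t _ (Mv_hom D.top t) _ (cont_degree D.top), prod_Mv,
    ← word_coeff (m+1) t ht m (cont D.top) (cont_degree D.top), Finset.sum_filter]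
  refine Finset.sum_congr rfl fun w _ => ?_
  rw [coeff_cont]
  split_ifs <;> simp

end PartG

/-- In `ℤ[p,q,t]` (with `p = X 0`, `q = X 1`, `t = X 2`), the `(p,q)`-analog of
the γ-expansion of the Eulerian polynomial for decorated-permutation statistics:
`Σ_{σ ∈ S_n} p^{des*(σ)} q^{maj(σ)-exc(σ)} t^{exc(σ)}
  = Σ_k ξ_{n,k}(p,q) t^k (1+t)^{n-1-2k}`, where
`ξ_{n,k}(p,q) = Σ p^{des(σ⁻¹)} q^{maj(σ⁻¹)}` over all `σ ∈ S_n` with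
`DES(σ) ⊆ [1,n-2]`, no two consecutive descents, and exactly `k` descents. -/
theorem pq_gamma (n : ℕ) (hn : 1 ≤ n) :
    (∑ σ : Equiv.Perm (Fin n),
        (MvPolynomial.X 0 : MvPolynomial (Fin 3) ℤ) ^ pdesStar σ *
          MvPolynomial.X 1 ^ (pmaj σ - pexc σ) * MvPolynomial.X 2 ^ pexc σ) =
    ∑ k ∈ Finset.range ((n - 1) / 2 + 1),
      (∑ σ ∈ Finset.univ.filter
          (fun σ : Equiv.Perm (Fin n) =>
            pDES σ ⊆ Finset.Icc 1 (n - 2) ∧ NoTwoConsec (pDES σ) ∧ (pDES σ).card = k),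
        (MvPolynomial.X 0 : MvPolynomial (Fin 3) ℤ) ^ pdes (σ⁻¹) *
          MvPolynomial.X 1 ^ pmaj (σ⁻¹)) *
        MvPolynomial.X 2 ^ k * (1 + MvPolynomial.X 2) ^ (n - 1 - 2 * k) := by
  obtain ⟨m, rfl⟩ : ∃ m, n = m + 1 := ⟨n - 1, by omega⟩
  refine assemble m fun T => mainT _ ?_ m T
  intro h
  have := congrArg (MvPolynomial.eval (fun _ => (0 : ℤ))) h
  simp at this
end
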